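/- Let n∈ℕ, p∈(1,∞) and s∈(0,1) with sp/(p−1)>1, and let Ω⊆ℝⁿ be a bounded open set. Let u:ℝⁿ→ℝ be a local weak solution of (−Δ_p)^s u = f in Ω with f∈L^{p/(p−1)}_loc(Ω), and assume in addition that u is continuously differentiable on Ω. Then there exists a constant c = c(n,p,s) such that for every ball B_{2R}(x_o) whose closure is contained in Ω, writing p' = p/(p−1), one has ‖∇u‖_{L^p(B_R(x_o))} ≤ (c/R)[ R^s [u]_{W^{s,p}(B_{2R}(x_o))} + R^{n/p} Tail(u−(u)_{B_{2R}(x_o)}; B_{2R}(x_o)) + R^{sp'} (∫_{B_{2R}(x_o)} |f|^{p'} dx)^{1/(p(p−1)/p') · 0 + 1/(p'(p−1))} ], where the last factor is ‖f‖_{L^{p'}(B_{2R}(x_o))}^{1/(p−1)}. -/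

import Mathlib

open MeasureTheory Metric Set
open scoped ENNReal

noncomputable section

/-- Double Gagliardo integral `∬_{D×D} |u(x)-u(y)|^p / |x-y|^{n+sp} dx dy` in `ℝ≥0∞`. -/
def gagliardoE (n : ℕ) (s p : ℝ) (D : Set (EuclideanSpace ℝ (Fin n)))
    (u : EuclideanSpace ℝ (Fin n) → ℝ) : ℝ≥0∞ :=
  ∫⁻ x in D, ∫⁻ y in D, ENNReal.ofReal (|u x - u y| ^ p / dist x y ^ ((n : ℝ) + s * p))

/-- Nonlocal tail `Tail(u; B_R(x₀))` in `ℝ≥0∞`. -/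
def tailE (n : ℕ) (s p : ℝ) (u : EuclideanSpace ℝ (Fin n) → ℝ)
    (x₀ : EuclideanSpace ℝ (Fin n)) (R : ℝ) : ℝ≥0∞ :=
  (ENNReal.ofReal (R ^ (s * p)) *
      ∫⁻ x in (ball x₀ R)ᶜ,
        ENNReal.ofReal (|u x| ^ (p - 1) / dist x x₀ ^ ((n : ℝ) + s * p))) ^ (1 / (p - 1))

/-- `f ∈ L^q_loc(D)`. -/
def MemLploc (n : ℕ) (q : ℝ) (D : Set (EuclideanSpace ℝ (Fin n)))
    (f : EuclideanSpace ℝ (Fin n) → ℝ) : Prop :=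
  Measurable f ∧
    ∀ K : Set (EuclideanSpace ℝ (Fin n)), K ⊆ D → IsCompact K →
      (∫⁻ x in K, ENNReal.ofReal (|f x| ^ q)) < ⊤

/-- `u` is a local weak solution of `(-Δ_p)^s u = f` in `D`. -/
def IsLocalWeakSolution (n : ℕ) (p s : ℝ) (D : Set (EuclideanSpace ℝ (Fin n)))
    (f u : EuclideanSpace ℝ (Fin n) → ℝ) : Prop :=
  Measurable u ∧
  (∀ K : Set (EuclideanSpace ℝ (Fin n)), K ⊆ D → IsCompact K →
      (∫⁻ x in K, ENNReal.ofReal (|u x| ^ p)) < ⊤ ∧ gagliardoE n s p K u < ⊤) ∧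
  (∫⁻ x, ENNReal.ofReal (|u x| ^ (p - 1) / (1 + ‖x‖) ^ ((n : ℝ) + s * p))) < ⊤ ∧
  ∀ φ : EuclideanSpace ℝ (Fin n) → ℝ, Measurable φ →
    (∃ K : Set (EuclideanSpace ℝ (Fin n)), IsCompact K ∧ K ⊆ D ∧
      ∀ᵐ x, x ∉ K → φ x = 0) →
    (∫⁻ x, ENNReal.ofReal (|φ x| ^ p)) < ⊤ →
    gagliardoE n s p Set.univ φ < ⊤ →
    (∫ x, ∫ y,
        |u x - u y| ^ (p - 2) * (u x - u y) * (φ x - φ y) / dist x y ^ ((n : ℝ) + s * p)) =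
      ∫ x in D, f x * φ x

/-- The signed `γ`-power `𝐚^γ = |a|^{γ-1} a`. -/
def sgnPow (γ a : ℝ) : ℝ := |a| ^ (γ - 1) * a

/-!
The proof is Nirenberg's difference quotient method for a nonlocal operator. On a ball of radius
`2`, and for `u` whose energy, tail and datum are bounded by `M`, the translate `u(· + h)` solves
the translated equation. Testing the difference of the two equations with `η · δ_h u`, where
`δ_h u = u(· + h) - u` and `η` is a cut-off, bounds a monotone energy of the pair by
`‖δ_h u‖_p M^(p-1)`. The monotonicity inequality for `|t|^(p-2) t`, weighted by a small multiple of
a power of `‖h‖`, turns this into a bound on a fractional seminorm of `δ_h u` for every `p > 1`, and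
that seminorm controls second differences. Because `sp > p - 1`, the result is
`‖δ_h² u‖_p ≤ ‖h‖^(1 + γ) (ε ‖∇u‖_p + C_ε M)` with `γ > 0`.

The exponent exceeds one, so the identity `2 δ_h u = δ_{2h} u - δ_h² u` telescopes over dyadic
multiples of `h`, and letting `h → 0` bounds `‖∇u‖_p` on a ball by `ε ‖∇u‖_p + C_ε M` on a slightly
larger one. As `u` is continuously differentiable, `‖∇u‖_p` is finite, and iterating over an
increasing sequence of balls absorbs it. The Poincaré inequality and scaling give the estimate on
every ball.
-/

section

open Filter Module
open scoped NNReal Topology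

section SignedPower

variable {γ p τ a b t : ℝ}

lemma abs_sgnPow (hγ : γ ≠ 0) (a : ℝ) : |sgnPow γ a| = |a| ^ γ := by
  unfold sgnPow
  rw [abs_mul, abs_of_nonneg (by positivity)]
  rcases eq_or_ne a 0 with rfl | ha
  · simp [Real.zero_rpow hγ]
  · rw [← Real.rpow_add_one (abs_ne_zero.mpr ha), sub_add_cancel]

lemma sgnPow_neg (γ a : ℝ) : sgnPow γ (-a) = -sgnPow γ a := by simp [sgnPow]

lemma sgnPow_mul (γ a b : ℝ) : sgnPow γ (a * b) = sgnPow γ a * sgnPow γ b := by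
  simp only [sgnPow, abs_mul, Real.mul_rpow (abs_nonneg a) (abs_nonneg b)]
  ring

lemma sgnPow_of_nonneg (hγ : γ ≠ 0) (ha : 0 ≤ a) : sgnPow γ a = a ^ γ := by
  have h := abs_sgnPow hγ a
  rwa [abs_of_nonneg (by unfold sgnPow; positivity), abs_of_nonneg ha] at h

lemma measurable_sgnPow (γ : ℝ) : Measurable (sgnPow γ) := by
  unfold sgnPow
  fun_prop

lemma enorm_sgnPow (hγ : 0 < γ) (a : ℝ) : ‖sgnPow γ a‖ₑ = ‖a‖ₑ ^ γ := by
  rw [← ofReal_norm, Real.norm_eq_abs, abs_sgnPow hγ.ne', ← Real.norm_eq_abs,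
    ← ENNReal.ofReal_rpow_of_nonneg (norm_nonneg a) hγ.le, ofReal_norm]

lemma min_one_mul_le_one_sub_rpow (hγ : 0 ≤ γ) (ht₀ : 0 ≤ t) (ht₁ : t ≤ 1) :
    min 1 γ * t ≤ 1 - (1 - t) ^ γ := by
  rcases le_total γ 1 with h | h
  · have bernoulli := rpow_one_add_le_one_add_mul_self (s := -t) (by linarith) hγ h
    rw [min_eq_right h, sub_eq_add_neg 1 t]
    linarith
  · have := Real.rpow_le_rpow_of_exponent_ge' (x := 1 - t) (by linarith) (by linarith) zero_le_one h
    rw [Real.rpow_one] at this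
    rw [min_eq_left h]
    linarith

lemma min_one_div_two_mul_le_one_sub_sgnPow (hγ : 0 < γ) (ht : |t| ≤ 1) :
    min 1 γ / 2 * (1 - t) ≤ 1 - sgnPow γ t := by
  obtain ⟨ht₁, ht₂⟩ := abs_le.mp ht
  have hm : min 1 γ ≤ 1 := min_le_left 1 γ
  have hm₀ : 0 < min 1 γ := lt_min one_pos hγ
  rcases le_total 0 t with h | h
  · have := min_one_mul_le_one_sub_rpow hγ.le (t := 1 - t) (by linarith) (by linarith)
    rw [sgnPow_of_nonneg hγ.ne' h]
    rw [sub_sub_cancel] at this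
    nlinarith
  · have : sgnPow γ t ≤ 0 := mul_nonpos_of_nonneg_of_nonpos (by positivity) h
    nlinarith

lemma sq_sub_mul_rpow_le_sgnPow_sub_mul_sub (hγ : 0 < γ) (hb : |b| ≤ a) :
    min 1 γ / 2 * ((a - b) ^ 2 * a ^ (γ - 1)) ≤ (sgnPow γ a - sgnPow γ b) * (a - b) := by
  rcases ((abs_nonneg b).trans hb).eq_or_lt with rfl | ha
  · simp [abs_nonpos_iff.mp hb]
  obtain ⟨t, rfl⟩ : ∃ t, b = a * t := ⟨b / a, by field_simp⟩
  have ht : |t| ≤ 1 := by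
    rw [abs_mul, abs_of_pos ha] at hb
    exact le_of_mul_le_mul_left (by simpa using hb) ha
  have key := min_one_div_two_mul_le_one_sub_sgnPow hγ ht
  have h1t : 0 ≤ 1 - t := by linarith [(abs_le.mp ht).2]
  have hpow : a ^ γ = a ^ (γ - 1) * a := by rw [← Real.rpow_add_one ha.ne', sub_add_cancel]
  rw [sgnPow_mul, sgnPow_of_nonneg hγ.ne' ha.le]
  calc min 1 γ / 2 * ((a - a * t) ^ 2 * a ^ (γ - 1))
      = a ^ γ * a * (1 - t) * (min 1 γ / 2 * (1 - t)) := by rw [hpow]; ring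
    _ ≤ a ^ γ * a * (1 - t) * (1 - sgnPow γ t) := by gcongr
    _ = (a ^ γ - a ^ γ * sgnPow γ t) * (a - a * t) := by ring

lemma sub_rpow_le_of_abs_le (hp : 1 < p) (hτ : 0 < τ) (hb : |b| ≤ a) :
    (a - b) ^ p ≤ 2 ^ p / min 1 (p - 1) *
      (τ⁻¹ * ((sgnPow (p - 1) a - sgnPow (p - 1) b) * (a - b)) + τ * a ^ p) := by
  obtain ⟨hb₁, hb₂⟩ := abs_le.mp hb
  rcases ((abs_nonneg b).trans hb).eq_or_lt with rfl | ha
  · simp [abs_nonpos_iff.mp hb, Real.zero_rpow (zero_lt_one.trans hp).ne']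
  have hmono := sq_sub_mul_rpow_le_sgnPow_sub_mul_sub (sub_pos.mpr hp) hb
  set W := (sgnPow (p - 1) a - sgnPow (p - 1) b) * (a - b)
  set m := min 1 (p - 1)
  have hm : 0 < m := lt_min one_pos (sub_pos.mpr hp)
  have hm₁ : 1 ≤ 1 / m := (one_le_div hm).mpr (min_le_left _ _)
  have hpow₁ : a ^ (p - 1) = a ^ (p - 1 - 1) * a := by
    rw [← Real.rpow_add_one ha.ne', sub_add_cancel]
  have hpow₂ : a ^ p = a ^ (p - 1 - 1) * a ^ 2 := by
    rw [sq, ← mul_assoc, ← hpow₁, ← Real.rpow_add_one ha.ne', sub_add_cancel]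
  have amgm : 2 * a * (a - b) ≤ τ⁻¹ * (a - b) ^ 2 + τ * a ^ 2 := by
    rw [← sub_nonneg]
    calc 0 ≤ τ⁻¹ * ((a - b) - τ * a) ^ 2 := by positivity
      _ = τ⁻¹ * (a - b) ^ 2 + τ * a ^ 2 - 2 * a * (a - b) := by field_simp; ring
  have hW : a ^ (p - 1 - 1) * (a - b) ^ 2 ≤ 2 / m * W := by
    calc a ^ (p - 1 - 1) * (a - b) ^ 2
        = 2 / m * (m / 2 * ((a - b) ^ 2 * a ^ (p - 1 - 1))) := by field_simp
      _ ≤ 2 / m * W := by gcongr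
  calc (a - b) ^ p = (a - b) ^ (p - 1) * (a - b) := by
        rw [← Real.rpow_add_one' (by linarith) (by linarith), sub_add_cancel]
    _ ≤ (2 * a) ^ (p - 1) * (a - b) := by gcongr; linarith
    _ = 2 ^ p / 2 * (a ^ (p - 1 - 1) * (2 * a * (a - b))) / 2 := by
        rw [Real.mul_rpow zero_le_two ha.le, hpow₁, Real.rpow_sub_one two_ne_zero]
        ring
    _ ≤ 2 ^ p / 2 * (a ^ (p - 1 - 1) * (τ⁻¹ * (a - b) ^ 2 + τ * a ^ 2)) / 2 := by gcongr
    _ = 2 ^ p / 4 * (τ⁻¹ * (a ^ (p - 1 - 1) * (a - b) ^ 2) + τ * a ^ p) := by rw [hpow₂]; ring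
    _ ≤ 2 ^ p / 4 * (τ⁻¹ * (2 / m * W) + 4 * (1 / m) * (τ * a ^ p)) := by
        have : τ * a ^ p ≤ 4 * (1 / m) * (τ * a ^ p) :=
          le_mul_of_one_le_left (by positivity) (by linarith)
        gcongr
    _ = 2 ^ p / m * (τ⁻¹ * W / 2 + τ * a ^ p) := by field_simp; ring
    _ ≤ 2 ^ p / m * (τ⁻¹ * W + τ * a ^ p) := by
        have : 0 ≤ τ⁻¹ * W := mul_nonneg (by positivity) (le_trans (by positivity) hmono)
        gcongr
        linarith

/- For `p ≥ 2` the second summand on the right could be dropped; keeping it, with a free parameter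
`τ`, treats all `p > 1` alike. -/
lemma abs_sub_rpow_le (hp : 1 < p) (hτ : 0 < τ) (a b : ℝ) :
    |a - b| ^ p ≤ 2 ^ p / min 1 (p - 1) *
      (τ⁻¹ * ((sgnPow (p - 1) a - sgnPow (p - 1) b) * (a - b)) + τ * (|a| ^ p + |b| ^ p)) := by
  wlog hab : |b| ≤ |a| generalizing a b
  · have := this b a (le_of_not_ge hab)
    rwa [abs_sub_comm, add_comm (|b| ^ p), ← neg_sub a b, ← neg_sub (sgnPow _ a), neg_mul_neg]
      at this
  wlog ha : 0 ≤ a generalizing a b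
  · have := this (-a) (-b) (by simpa using hab) (by linarith)
    rwa [neg_sub_neg, abs_neg, abs_neg, sgnPow_neg, sgnPow_neg, neg_sub_neg, abs_sub_comm,
      ← neg_sub a b, ← neg_sub (sgnPow _ a), neg_mul_neg] at this
  rw [abs_of_nonneg ha] at hab ⊢
  have _ : 0 < min 1 (p - 1) := lt_min one_pos (sub_pos.mpr hp)
  rw [abs_of_nonneg (sub_nonneg.mpr (le_of_abs_le hab))]
  refine (sub_rpow_le_of_abs_le hp hτ hab).trans ?_
  gcongr
  exact le_add_of_nonneg_right (by positivity)

lemma sgnPow_sub_mul_sub_nonneg (hγ : 0 < γ) (a b : ℝ) :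
    0 ≤ (sgnPow γ a - sgnPow γ b) * (a - b) := by
  wlog hab : |b| ≤ |a| generalizing a b
  · have := this b a (le_of_not_ge hab)
    rwa [← neg_sub a b, ← neg_sub (sgnPow _ a), neg_mul_neg] at this
  wlog ha : 0 ≤ a generalizing a b
  · have := this (-a) (-b) (by simpa using hab) (by linarith)
    rwa [sgnPow_neg, sgnPow_neg, neg_sub_neg, neg_sub_neg, ← neg_sub a b, ← neg_sub (sgnPow _ a),
      neg_mul_neg] at this
  have _ : 0 < min 1 γ := lt_min one_pos hγ
  rw [abs_of_nonneg ha] at hab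
  exact le_trans (by positivity) (sq_sub_mul_rpow_le_sgnPow_sub_mul_sub hγ hab)

lemma enorm_sub_rpow_le (hp : 1 < p) (hτ : 0 < τ) (a b : ℝ) :
    ‖a - b‖ₑ ^ p ≤ ENNReal.ofReal (2 ^ p / min 1 (p - 1)) *
      (ENNReal.ofReal τ⁻¹ * ENNReal.ofReal ((sgnPow (p - 1) a - sgnPow (p - 1) b) * (a - b)) +
        ENNReal.ofReal τ * (‖a‖ₑ ^ p + ‖b‖ₑ ^ p)) := by
  have hp₀ : 0 ≤ p := zero_le_one.trans hp.le
  have _ : 0 < min 1 (p - 1) := lt_min one_pos (sub_pos.mpr hp)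
  have hW := sgnPow_sub_mul_sub_nonneg (sub_pos.mpr hp) a b
  simp only [← ofReal_norm, ENNReal.ofReal_rpow_of_nonneg (norm_nonneg _) hp₀]
  rw [← ENNReal.ofReal_mul (by positivity), ← ENNReal.ofReal_add (by positivity) (by positivity),
    ← ENNReal.ofReal_mul hτ.le, ← ENNReal.ofReal_add (by positivity) (by positivity),
    ← ENNReal.ofReal_mul (by positivity)]
  exact ENNReal.ofReal_le_ofReal (abs_sub_rpow_le hp hτ a b)

end SignedPower

section ExtendedNonnegReal

lemma enn_add_rpow_le_two_rpow_mul {q : ℝ} (hq : 0 ≤ q) (x y : ℝ≥0∞) :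
    (x + y) ^ q ≤ 2 ^ q * (x ^ q + y ^ q) := by
  wlog h : x ≤ y generalizing x y
  · simpa only [add_comm] using this y x (le_of_not_ge h)
  calc (x + y) ^ q ≤ (2 * y) ^ q := by rw [two_mul]; gcongr
    _ = 2 ^ q * y ^ q := ENNReal.mul_rpow_of_nonneg _ _ hq
    _ ≤ 2 ^ q * (x ^ q + y ^ q) := by gcongr; exact le_add_self

lemma enn_mul_rpow_sub_one {p : ℝ} (hp : 1 ≤ p) (x : ℝ≥0∞) : x * x ^ (p - 1) = x ^ p := by
  conv_lhs => enter [1]; rw [← ENNReal.rpow_one x]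
  rw [← ENNReal.rpow_add_of_nonneg _ _ zero_le_one (sub_nonneg.mpr hp), add_sub_cancel]

lemma enn_mul_rpow_sub_one_le {p : ℝ} (hp : 1 ≤ p) (x y : ℝ≥0∞) :
    x * y ^ (p - 1) ≤ x ^ p + y ^ p := by
  have _ : 0 ≤ p - 1 := sub_nonneg.mpr hp
  rcases le_total x y with h | h
  · calc x * y ^ (p - 1) ≤ y * y ^ (p - 1) := by gcongr
      _ ≤ x ^ p + y ^ p := (enn_mul_rpow_sub_one hp y).le.trans le_add_self
  · calc x * y ^ (p - 1) ≤ x * x ^ (p - 1) := by gcongr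
      _ ≤ x ^ p + y ^ p := (enn_mul_rpow_sub_one hp x).le.trans le_self_add

lemma enn_mul_mul_rpow_sub_one_le {p : ℝ} (hp : 1 < p) (c x y : ℝ≥0∞) :
    c * x * y ^ (p - 1) ≤ x ^ p + c ^ (p / (p - 1)) * y ^ p := by
  have hp' : 0 < p - 1 := sub_pos.mpr hp
  calc c * x * y ^ (p - 1) = x * (c ^ (1 / (p - 1)) * y) ^ (p - 1) := by
        rw [ENNReal.mul_rpow_of_nonneg _ _ hp'.le, ← ENNReal.rpow_mul, one_div_mul_cancel hp'.ne',
          ENNReal.rpow_one]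
        ring
    _ ≤ x ^ p + (c ^ (1 / (p - 1)) * y) ^ p := enn_mul_rpow_sub_one_le hp.le _ _
    _ = x ^ p + c ^ (p / (p - 1)) * y ^ p := by
        rw [ENNReal.mul_rpow_of_nonneg _ _ (by linarith), ← ENNReal.rpow_mul]
        congr 3
        ring

end ExtendedNonnegReal

section Integral

variable {α : Type*} [MeasurableSpace α] {μ : Measure α} {p : ℝ}

lemma rpow_lintegral_le_measure_univ_rpow_mul (hp : 1 ≤ p) {g : α → ℝ≥0∞} (hg : AEMeasurable g μ) :
    (∫⁻ x, g x ∂μ) ^ p ≤ μ univ ^ (p - 1) * ∫⁻ x, g x ^ p ∂μ := by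
  have hp₀ : 0 < p := by linarith
  have h := eLpNorm'_le_eLpNorm'_mul_rpow_measure_univ one_pos hp hg.aestronglyMeasurable
  simp only [eLpNorm', enorm_eq_self, ENNReal.rpow_one, div_one] at h
  refine (ENNReal.rpow_le_rpow h hp₀.le).trans_eq ?_
  rw [ENNReal.mul_rpow_of_nonneg _ _ hp₀.le, ← ENNReal.rpow_mul, ← ENNReal.rpow_mul, sub_mul,
    one_div_mul_cancel hp₀.ne', one_mul, ENNReal.rpow_one, mul_comm]

lemma lintegral_mul_rpow_sub_one_le (hp : 1 < p) {g k : α → ℝ≥0∞} (hg : AEMeasurable g μ)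
    (hk : AEMeasurable k μ) {M : ℝ≥0∞} (hM : ∫⁻ x, k x ^ p ∂μ ≤ M ^ p) :
    ∫⁻ x, g x * k x ^ (p - 1) ∂μ ≤ (∫⁻ x, g x ^ p ∂μ) ^ (1 / p) * M ^ (p - 1) := by
  have hp' : 0 < p - 1 := sub_pos.mpr hp
  have hpow (a : ℝ≥0∞) : (a ^ (p - 1)) ^ p.conjExponent = a ^ p := by
    rw [← ENNReal.rpow_mul, Real.conjExponent, mul_div_cancel₀ _ hp'.ne']
  calc ∫⁻ x, g x * k x ^ (p - 1) ∂μ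
      ≤ (∫⁻ x, g x ^ p ∂μ) ^ (1 / p) *
          (∫⁻ x, (k x ^ (p - 1)) ^ p.conjExponent ∂μ) ^ (1 / p.conjExponent) :=
        ENNReal.lintegral_mul_le_Lp_mul_Lq μ (.conjExponent hp) hg (hk.pow_const (p - 1))
    _ ≤ (∫⁻ x, g x ^ p ∂μ) ^ (1 / p) * ((M ^ (p - 1)) ^ p.conjExponent) ^ (1 / p.conjExponent) := by
        simp only [hpow]
        have : 0 ≤ 1 / p.conjExponent := by unfold Real.conjExponent; positivity
        gcongr
    _ = (∫⁻ x, g x ^ p ∂μ) ^ (1 / p) * M ^ (p - 1) := by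
        rw [← ENNReal.rpow_mul, mul_one_div_cancel, ENNReal.rpow_one]
        exact (Real.HolderConjugate.conjExponent hp).symm.ne_zero

lemma lintegral_enorm_le_measure_univ_rpow_mul_eLpNorm' {F : Type*} [NormedAddCommGroup F]
    (hp : 1 < p) {g : α → F} (hg : AEStronglyMeasurable g μ) :
    ∫⁻ x, ‖g x‖ₑ ∂μ ≤ (μ univ ^ p⁻¹) ^ (p - 1) * eLpNorm' g p μ := by
  have := lintegral_mul_rpow_sub_one_le hp hg.enorm (aemeasurable_const (b := (1 : ℝ≥0∞)))
    (M := μ univ ^ p⁻¹) (by simp [ENNReal.rpow_inv_rpow (by positivity : p ≠ 0)])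
  simpa [mul_comm, eLpNorm'] using this

lemma eLpNorm'_le_of_lintegral_rpow_le {ε : Type*} [ENorm ε] {f : α → ε} (hp : 0 < p) {M : ℝ≥0∞}
    (h : ∫⁻ x, ‖f x‖ₑ ^ p ∂μ ≤ M ^ p) : eLpNorm' f p μ ≤ M := by
  rw [eLpNorm', ← ENNReal.rpow_rpow_inv hp.ne' M, one_div]
  exact ENNReal.rpow_le_rpow h (by positivity)

variable {G : Type*} [MeasurableSpace G] [AddGroup G] [MeasurableAdd G] {ν : Measure G}
  [ν.IsAddRightInvariant]

lemma setLIntegral_comp_add_right_le {S T : Set G} {h : G} (hST : ∀ x ∈ S, x + h ∈ T)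
    (g : G → ℝ≥0∞) : ∫⁻ x in S, g (x + h) ∂ν ≤ ∫⁻ x in T, g x ∂ν :=
  calc ∫⁻ x in S, g (x + h) ∂ν ≤ ∫⁻ x in (· + h) ⁻¹' T, g (x + h) ∂ν := lintegral_mono_set hST
    _ = ∫⁻ x in T, g x ∂ν := (measurePreserving_add_right ν h).setLIntegral_comp_preimage_emb
        (measurableEmbedding_addRight h) g T

end Integral

section Affine

variable {E : Type*} [NormedAddCommGroup E] [NormedSpace ℝ E] {R : ℝ}

lemma preimage_add_smul_ball (x₀ : E) (hR : 0 < R) (r : ℝ) :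
    (fun x => x₀ + R • x) ⁻¹' ball x₀ (r * R) = ball 0 r := by
  ext x
  rw [mem_preimage, mem_ball, dist_self_add_left, norm_smul, Real.norm_of_nonneg hR.le,
    mem_ball_zero_iff, mul_comm, mul_lt_mul_iff_left₀ hR]

variable [MeasurableSpace E] [BorelSpace E]

lemma measurableEmbedding_add_smul (x₀ : E) (hR : 0 < R) :
    MeasurableEmbedding (fun x : E => x₀ + R • x) :=
  (measurableEmbedding_addLeft x₀).comp (measurableEmbedding_const_smul₀ hR.ne')

variable [FiniteDimensional ℝ E] {μ : Measure E} [μ.IsAddHaarMeasure]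

lemma map_add_smul_addHaar (x₀ : E) (hR : 0 < R) :
    μ.map (fun x => x₀ + R • x) = (ENNReal.ofReal R ^ finrank ℝ E)⁻¹ • μ := by
  have : (fun x => x₀ + R • x) = (x₀ + ·) ∘ (R • · : E → E) := rfl
  rw [this, ← Measure.map_map (by fun_prop) (by fun_prop), Measure.map_addHaar_smul μ hR.ne',
    Measure.map_smul, (measurePreserving_add_left μ x₀).map_eq, abs_of_pos (by positivity),
    ENNReal.ofReal_inv_of_pos (by positivity), ENNReal.ofReal_pow hR.le]

lemma setLIntegral_comp_add_smul (x₀ : E) (hR : 0 < R) (S : Set E) (g : E → ℝ≥0∞) :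
    ∫⁻ x in (fun x => x₀ + R • x) ⁻¹' S, g (x₀ + R • x) ∂μ =
      (ENNReal.ofReal R ^ finrank ℝ E)⁻¹ * ∫⁻ x in S, g x ∂μ := by
  rw [← smul_eq_mul, ← lintegral_smul_measure, ← Measure.restrict_smul,
    ← map_add_smul_addHaar x₀ hR, (measurableEmbedding_add_smul x₀ hR).restrict_map,
    (measurableEmbedding_add_smul x₀ hR).lintegral_map]

end Affine

section FracKernel

variable {E : Type*} [NormedAddCommGroup E] [NormedSpace ℝ E] {σ : ℝ} {x y z : E}

/-- The kernel `|z|^{-(n+σ)}`, `n = dim E`, of a nonlocal operator of order `σ`. Its value at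
`z = 0` is finite and irrelevant. -/
def fracKernel (σ : ℝ) (z : E) : ℝ≥0∞ := ENNReal.ofReal (‖z‖ ^ (-((finrank ℝ E : ℝ) + σ)))

lemma fracKernel_ne_top (σ : ℝ) (z : E) : fracKernel σ z ≠ ⊤ := ENNReal.ofReal_ne_top

lemma fracKernel_neg (σ : ℝ) (z : E) : fracKernel σ (-z) = fracKernel σ z := by simp [fracKernel]

lemma fracKernel_sub_comm (σ : ℝ) (x y : E) : fracKernel σ (x - y) = fracKernel σ (y - x) := by
  rw [← fracKernel_neg, neg_sub]

lemma fracKernel_eq_enorm_rpow (hz : z ≠ 0) :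
    fracKernel σ z = ‖z‖ₑ ^ (-((finrank ℝ E : ℝ) + σ)) := by
  rw [fracKernel, ← ENNReal.ofReal_rpow_of_pos (norm_pos_iff.mpr hz), ofReal_norm]

lemma fracKernel_smul {R : ℝ} (hR : 0 < R) (σ : ℝ) (z : E) :
    fracKernel σ (R • z) = ENNReal.ofReal R ^ (-((finrank ℝ E : ℝ) + σ)) * fracKernel σ z := by
  rw [fracKernel, norm_smul, Real.norm_of_nonneg hR.le, Real.mul_rpow hR.le (norm_nonneg _),
    ENNReal.ofReal_mul (by positivity), ENNReal.ofReal_rpow_of_pos hR, fracKernel]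

lemma fracKernel_le_of_norm_le (hσ : 0 ≤ σ) {c : ℝ} (hc : 0 < c) (hy : y ≠ 0)
    (h : ‖y‖ ≤ c * ‖x‖) :
    fracKernel σ x ≤ ENNReal.ofReal (c ^ ((finrank ℝ E : ℝ) + σ)) * fracKernel σ y := by
  have hy₀ : 0 < ‖y‖ := norm_pos_iff.mpr hy
  have hx₀ : 0 < ‖x‖ := pos_of_mul_pos_right (hy₀.trans_le h) hc.le
  rw [fracKernel, fracKernel, ← ENNReal.ofReal_mul (by positivity), Real.rpow_neg hx₀.le,
    Real.rpow_neg hy₀.le, ← div_eq_mul_inv, ← Real.div_rpow hc.le hy₀.le,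
    ← Real.inv_rpow hx₀.le]
  gcongr
  rw [inv_le_comm₀ hx₀ (by positivity), inv_div, div_le_iff₀ hc]
  linarith

lemma fracKernel_sub_le (hσ : 0 ≤ σ) {t e : ℝ} (he : 0 < e) (ht : 0 < t) (ht₂ : t ≤ 2)
    (hx : ‖x‖ ≤ t - e) (hy : t ≤ ‖y‖) :
    fracKernel σ (x - y) ≤ ENNReal.ofReal ((2 / e) ^ ((finrank ℝ E : ℝ) + σ)) * fracKernel σ y := by
  refine fracKernel_le_of_norm_le hσ (by positivity) (norm_pos_iff.mp (ht.trans_le hy)) ?_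
  have triangle := norm_sub_le x (x - y)
  rw [sub_sub_cancel] at triangle
  rw [div_mul_eq_mul_div, le_div_iff₀ he]
  nlinarith [norm_nonneg x]

lemma fracKernel_le_ofReal_rpow (hσ : 0 ≤ σ) {t : ℝ} (ht : 0 < t) (h : t ≤ ‖z‖) :
    fracKernel σ z ≤ ENNReal.ofReal (t ^ (-((finrank ℝ E : ℝ) + σ))) :=
  ENNReal.ofReal_le_ofReal (Real.rpow_le_rpow_of_nonpos ht h (neg_nonpos.mpr (by positivity)))

lemma one_le_ofReal_rpow_mul_fracKernel (hσ : 0 ≤ σ) {t : ℝ} (hz : z ≠ 0) (h : ‖z‖ ≤ t) :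
    1 ≤ ENNReal.ofReal t ^ ((finrank ℝ E : ℝ) + σ) * fracKernel σ z := by
  have hz₀ : ‖z‖ₑ ≠ 0 := enorm_ne_zero.mpr hz
  calc 1 = ‖z‖ₑ ^ ((finrank ℝ E : ℝ) + σ) * fracKernel σ z := by
        rw [fracKernel_eq_enorm_rpow hz, ← ENNReal.rpow_add _ _ hz₀ enorm_ne_top, add_neg_cancel,
          ENNReal.rpow_zero]
    _ ≤ ENNReal.ofReal t ^ ((finrank ℝ E : ℝ) + σ) * fracKernel σ z := by
        rw [← ofReal_norm]
        gcongr

lemma enorm_rpow_mul_fracKernel (q : ℝ) (hz : z ≠ 0) :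
    ‖z‖ₑ ^ q * fracKernel σ z = fracKernel (σ - q) z := by
  rw [fracKernel_eq_enorm_rpow hz, fracKernel_eq_enorm_rpow hz,
    ← ENNReal.rpow_add _ _ (enorm_ne_zero.mpr hz) enorm_ne_top]
  congr 1
  ring

variable [MeasurableSpace E] [BorelSpace E]

@[fun_prop]
lemma measurable_fracKernel (σ : ℝ) : Measurable (fracKernel σ : E → ℝ≥0∞) := by
  unfold fracKernel
  fun_prop

variable [FiniteDimensional ℝ E] (μ : Measure E) [μ.IsAddHaarMeasure]

lemma lintegral_ball_one_fracKernel_lt_top (hσ : σ < 0) :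
    ∫⁻ z in ball (0 : E) 1, fracKernel σ z ∂μ < ⊤ := by
  rcases subsingleton_or_nontrivial E with hE | hE
  · have : fracKernel σ (0 : E) = 0 := by
      simp [fracKernel, finrank_zero_of_subsingleton, (Real.zero_rpow (neg_ne_zero.mpr hσ.ne)).le]
    simp [Subsingleton.elim _ (0 : E), this]
  have integrable :
      IntegrableOn (fun z : E => ‖z‖ ^ (-((finrank ℝ E : ℝ) + σ))) (ball 0 1) μ :=
    integrableOn_ball_of_norm_le_rpow (C := 1) (α := (finrank ℝ E : ℝ) + σ) finrank_pos
      (by linarith)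
      (ae_of_all _ fun z => by rw [one_mul, Real.norm_of_nonneg (by positivity)])
      (Measurable.aestronglyMeasurable (by fun_prop))
  exact Integrable.lintegral_lt_top integrable

lemma exists_forall_lintegral_ball_fracKernel_le (hσ : σ < 0) :
    ∃ C : ℝ≥0, ∀ t : ℝ, 0 < t →
      ∫⁻ z in ball (0 : E) t, fracKernel σ z ∂μ ≤ C * ENNReal.ofReal t ^ (-σ) := by
  have hfin := lintegral_ball_one_fracKernel_lt_top μ hσ (E := E)
  refine ⟨(∫⁻ z in ball (0 : E) 1, fracKernel σ z ∂μ).toNNReal, fun t ht => ?_⟩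
  have ht₀ : ENNReal.ofReal t ≠ 0 := (ENNReal.ofReal_pos.mpr ht).ne'
  have scaling := setLIntegral_comp_add_smul (μ := μ) 0 ht (ball (0 : E) t) (fracKernel σ)
  have preimage := preimage_add_smul_ball (0 : E) ht 1
  rw [one_mul] at preimage
  rw [preimage] at scaling
  simp only [zero_add, fracKernel_smul ht] at scaling
  rw [lintegral_const_mul' _ _ (ENNReal.rpow_ne_top_of_ne_zero ht₀ ENNReal.ofReal_ne_top),
    ← ENNReal.rpow_natCast, ← ENNReal.rpow_neg] at scaling
  rw [ENNReal.coe_toNNReal hfin.ne]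
  refine le_of_eq ?_
  calc ∫⁻ z in ball (0 : E) t, fracKernel σ z ∂μ
      = ENNReal.ofReal t ^ (finrank ℝ E : ℝ) * (ENNReal.ofReal t ^ (-(finrank ℝ E : ℝ)) *
          ∫⁻ z in ball (0 : E) t, fracKernel σ z ∂μ) := by
        rw [← mul_assoc, ← ENNReal.rpow_add _ _ ht₀ ENNReal.ofReal_ne_top, add_neg_cancel,
          ENNReal.rpow_zero, one_mul]
    _ = (∫⁻ z in ball (0 : E) 1, fracKernel σ z ∂μ) * ENNReal.ofReal t ^ (-σ) := by
        rw [← scaling, ← mul_assoc, ← ENNReal.rpow_add _ _ ht₀ ENNReal.ofReal_ne_top, mul_comm]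
        congr 2
        ring

lemma lintegral_compl_ball_fracKernel_lt_top (hσ : 0 < σ) {r : ℝ} (hr : 0 < r) :
    ∫⁻ z in (ball (0 : E) r)ᶜ, fracKernel σ z ∂μ < ⊤ := by
  set a := (finrank ℝ E : ℝ) + σ with ha
  have hfin := finite_integral_one_add_norm (E := E) (μ := μ) (r := a) (by linarith)
  have hle : ∀ z ∈ (ball (0 : E) r)ᶜ, fracKernel σ z ≤
      ENNReal.ofReal ((1 / r + 1) ^ a) * ENNReal.ofReal ((1 + ‖z‖) ^ (-a)) := by
    intro z hz
    rw [mem_compl_iff, mem_ball_zero_iff, not_lt] at hz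
    have hz₀ : 0 < ‖z‖ := hr.trans_le hz
    rw [fracKernel, ← ENNReal.ofReal_mul (by positivity), Real.rpow_neg hz₀.le,
      Real.rpow_neg (by positivity), ← div_eq_mul_inv, ← Real.div_rpow (by positivity)
      (by positivity), ← Real.inv_rpow hz₀.le, ← ha]
    gcongr
    rw [inv_le_comm₀ hz₀ (by positivity), inv_div, div_le_iff₀ (by positivity), mul_add, mul_one,
      mul_one_div]
    gcongr
    exact (one_le_div hr).mpr hz
  calc ∫⁻ z in (ball (0 : E) r)ᶜ, fracKernel σ z ∂μ
      ≤ ∫⁻ z in (ball (0 : E) r)ᶜ,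
          ENNReal.ofReal ((1 / r + 1) ^ a) * ENNReal.ofReal ((1 + ‖z‖) ^ (-a)) ∂μ :=
        setLIntegral_mono' measurableSet_ball.compl hle
    _ ≤ ENNReal.ofReal ((1 / r + 1) ^ a) * ∫⁻ z : E, ENNReal.ofReal ((1 + ‖z‖) ^ (-a)) ∂μ := by
        rw [lintegral_const_mul' _ _ ENNReal.ofReal_ne_top]
        gcongr
        exact Measure.restrict_le_self
    _ < ⊤ := ENNReal.mul_lt_top ENNReal.ofReal_lt_top hfin

end FracKernel

section FirstDifferences

variable {E F : Type*} [NormedAddCommGroup E] [NormedSpace ℝ E] [NormedAddCommGroup F]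
  [NormedSpace ℝ F] [CompleteSpace F] {u : E → F} {x h : E} {p : ℝ}

lemma enorm_sub_le_lintegral_fderiv (hu : ∀ t ∈ Icc (0 : ℝ) 1, ContDiffAt ℝ 1 u (x + t • h)) :
    ‖u (x + h) - u x‖ₑ ≤ ∫⁻ t in Ioc (0 : ℝ) 1, ‖h‖ₑ * ‖fderiv ℝ u (x + t • h)‖ₑ := by
  have hline (t : ℝ) : HasDerivAt (fun t : ℝ => x + t • h) h t := by
    simpa using ((hasDerivAt_id t).smul_const h).const_add x
  have hderiv : ∀ t ∈ uIcc (0 : ℝ) 1,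
      HasDerivAt (fun t : ℝ => u (x + t • h)) (fderiv ℝ u (x + t • h) h) t := by
    rw [uIcc_of_le zero_le_one]
    exact fun t ht =>
      ((hu t ht).differentiableAt one_ne_zero).hasFDerivAt.comp_hasDerivAt t (hline t)
  have hcont : ContinuousOn (fun t : ℝ => fderiv ℝ u (x + t • h) h) (uIcc 0 1) := by
    rw [uIcc_of_le zero_le_one]
    exact ContinuousOn.clm_apply (fun t ht => ContinuousAt.comp_continuousWithinAt
      (g := fderiv ℝ u) (f := fun t : ℝ => x + t • h)
      ((hu t ht).continuousAt_fderiv one_ne_zero) (hline t).continuousAt.continuousWithinAt)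
      continuousOn_const
  have ftc := intervalIntegral.integral_eq_sub_of_hasDerivAt hderiv hcont.intervalIntegrable
  rw [one_smul, zero_smul, add_zero, intervalIntegral.integral_of_le zero_le_one] at ftc
  rw [← ftc]
  refine (enorm_integral_le_lintegral_enorm _).trans (lintegral_mono fun t => ?_)
  rw [mul_comm]
  exact ContinuousLinearMap.le_opENorm _ _

variable [MeasurableSpace E] [BorelSpace E]

lemma enorm_sub_rpow_le_lintegral_fderiv (hp : 1 ≤ p)
    (hu : ∀ t ∈ Icc (0 : ℝ) 1, ContDiffAt ℝ 1 u (x + t • h)) :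
    ‖u (x + h) - u x‖ₑ ^ p ≤
      ∫⁻ t in Ioc (0 : ℝ) 1, ‖h‖ₑ ^ p * ‖fderiv ℝ u (x + t • h)‖ₑ ^ p := by
  have hp₀ : 0 ≤ p := zero_le_one.trans hp
  have meas : Measurable fun t : ℝ => ‖h‖ₑ * ‖fderiv ℝ u (x + t • h)‖ₑ :=
    ((measurable_fderiv ℝ u).enorm.comp (by fun_prop)).const_mul _
  calc ‖u (x + h) - u x‖ₑ ^ p
      ≤ (∫⁻ t in Ioc (0 : ℝ) 1, ‖h‖ₑ * ‖fderiv ℝ u (x + t • h)‖ₑ) ^ p :=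
        ENNReal.rpow_le_rpow (enorm_sub_le_lintegral_fderiv hu) hp₀
    _ ≤ ∫⁻ t in Ioc (0 : ℝ) 1, (‖h‖ₑ * ‖fderiv ℝ u (x + t • h)‖ₑ) ^ p := by
        simpa using rpow_lintegral_le_measure_univ_rpow_mul hp
          (meas.aemeasurable (μ := volume.restrict (Ioc (0 : ℝ) 1)))
    _ = ∫⁻ t in Ioc (0 : ℝ) 1, ‖h‖ₑ ^ p * ‖fderiv ℝ u (x + t • h)‖ₑ ^ p := by
        simp only [ENNReal.mul_rpow_of_nonneg _ _ hp₀]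

lemma setLIntegral_enorm_sub_rpow_le [FiniteDimensional ℝ E] {μ : Measure E} [μ.IsAddHaarMeasure]
    (hp : 1 ≤ p) {S T : Set E} (hS : MeasurableSet S) (hu : ∀ y ∈ T, ContDiffAt ℝ 1 u y)
    (hST : ∀ x ∈ S, ∀ t ∈ Icc (0 : ℝ) 1, x + t • h ∈ T) :
    ∫⁻ x in S, ‖u (x + h) - u x‖ₑ ^ p ∂μ ≤ ‖h‖ₑ ^ p * ∫⁻ x in T, ‖fderiv ℝ u x‖ₑ ^ p ∂μ := by
  have hh : ‖h‖ₑ ^ p ≠ ⊤ := ENNReal.rpow_ne_top_of_nonneg (zero_le_one.trans hp) enorm_ne_top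
  have meas : Measurable fun q : E × ℝ => ‖h‖ₑ ^ p * ‖fderiv ℝ u (q.1 + q.2 • h)‖ₑ ^ p :=
    (((measurable_fderiv ℝ u).enorm.comp (by fun_prop)).pow_const p).const_mul _
  calc ∫⁻ x in S, ‖u (x + h) - u x‖ₑ ^ p ∂μ
      ≤ ∫⁻ x in S, (∫⁻ t in Ioc (0 : ℝ) 1, ‖h‖ₑ ^ p * ‖fderiv ℝ u (x + t • h)‖ₑ ^ p) ∂μ :=
        setLIntegral_mono' hS fun x hx =>
          enorm_sub_rpow_le_lintegral_fderiv hp fun t ht => hu _ (hST x hx t ht)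
    _ = ∫⁻ t in Ioc (0 : ℝ) 1, ∫⁻ x in S, ‖h‖ₑ ^ p * ‖fderiv ℝ u (x + t • h)‖ₑ ^ p ∂μ :=
        lintegral_lintegral_swap meas.aemeasurable
    _ ≤ ∫⁻ _t in Ioc (0 : ℝ) 1, ‖h‖ₑ ^ p * ∫⁻ x in T, ‖fderiv ℝ u x‖ₑ ^ p ∂μ := by
        refine setLIntegral_mono' measurableSet_Ioc fun t ht => ?_
        rw [lintegral_const_mul' _ _ hh]
        gcongr ‖h‖ₑ ^ p * ?_
        exact setLIntegral_comp_add_right_le (fun x hx => hST x hx t ⟨ht.1.le, ht.2⟩)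
          fun y => ‖fderiv ℝ u y‖ₑ ^ p
    _ = ‖h‖ₑ ^ p * ∫⁻ x in T, ‖fderiv ℝ u x‖ₑ ^ p ∂μ := by simp

end FirstDifferences

section FractionalDifferences

variable {E F : Type*} [NormedAddCommGroup E] [NormedSpace ℝ E] [MeasurableSpace E] [BorelSpace E]
  {μ : Measure E} [NormedAddCommGroup F] {σ p : ℝ} {δ : E → F}

lemma setLIntegral_ball_enorm_sub_rpow_le (hσ : 0 ≤ σ) (hp : 0 < p) (δ : E → F) (x h : E) :
    ∫⁻ ξ in ball (0 : E) ‖h‖, ‖δ x - δ (x + ξ)‖ₑ ^ p ∂μ ≤ ‖h‖ₑ ^ ((finrank ℝ E : ℝ) + σ) *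
      ∫⁻ ξ in ball (0 : E) ‖h‖, ‖δ x - δ (x + ξ)‖ₑ ^ p * fracKernel σ ξ ∂μ := by
  rw [← lintegral_const_mul' _ _ (ENNReal.rpow_ne_top_of_nonneg (by positivity) enorm_ne_top)]
  refine setLIntegral_mono' measurableSet_ball fun ξ hξ => ?_
  rcases eq_or_ne ξ 0 with rfl | hξ₀
  · simp [ENNReal.zero_rpow_of_pos hp]
  rw [mem_ball_zero_iff] at hξ
  calc ‖δ x - δ (x + ξ)‖ₑ ^ p
      ≤ ‖δ x - δ (x + ξ)‖ₑ ^ p * (‖h‖ₑ ^ ((finrank ℝ E : ℝ) + σ) * fracKernel σ ξ) :=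
        le_mul_of_one_le_right' (ofReal_norm h ▸ one_le_ofReal_rpow_mul_fracKernel hσ hξ₀ hξ.le)
    _ = ‖h‖ₑ ^ ((finrank ℝ E : ℝ) + σ) * (‖δ x - δ (x + ξ)‖ₑ ^ p * fracKernel σ ξ) := by ring

variable [MeasurableSpace F] [BorelSpace F] [SecondCountableTopology F]

/- Compare `δ (x + h)` and `δ x` with `δ` at the points of the ball of radius `‖h‖ / 2` around the
midpoint `x + h / 2`, which lies in both balls of radius `‖h‖`. -/
lemma measure_ball_mul_enorm_sub_rpow_le [μ.IsAddRightInvariant] (hp : 0 ≤ p)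
    (hδ : Measurable δ) (x h : E) :
    μ (ball 0 (‖h‖ / 2)) * ‖δ (x + h) - δ x‖ₑ ^ p ≤ 2 ^ p *
      ((∫⁻ ξ in ball (0 : E) ‖h‖, ‖δ (x + h) - δ (x + h + ξ)‖ₑ ^ p ∂μ) +
        ∫⁻ ξ in ball (0 : E) ‖h‖, ‖δ x - δ (x + ξ)‖ₑ ^ p ∂μ) := by
  have hhalf : ‖(2⁻¹ : ℝ) • h‖ = ‖h‖ / 2 := by rw [norm_smul]; norm_num; ring
  have hmem {e : E} (he : ‖e‖ = ‖h‖ / 2) : ∀ ζ ∈ ball (0 : E) (‖h‖ / 2), ζ + e ∈ ball 0 ‖h‖ := by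
    intro ζ hζ
    rw [mem_ball_zero_iff] at *
    linarith [norm_add_le ζ e]
  have triangle (ζ : E) : ‖δ (x + h) - δ x‖ₑ ^ p ≤ 2 ^ p *
      (‖δ (x + h) - δ (x + h + (ζ + -((2⁻¹ : ℝ) • h)))‖ₑ ^ p +
        ‖δ x - δ (x + (ζ + (2⁻¹ : ℝ) • h))‖ₑ ^ p) := by
    have : x + h + (ζ + -((2⁻¹ : ℝ) • h)) = x + (ζ + (2⁻¹ : ℝ) • h) := by module
    rw [this]
    refine (ENNReal.rpow_le_rpow ?_ hp).trans (enn_add_rpow_le_two_rpow_mul hp _ _)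
    rw [← edist_eq_enorm_sub, ← edist_eq_enorm_sub, ← edist_eq_enorm_sub, edist_comm (δ x)]
    exact edist_triangle _ _ _
  calc μ (ball 0 (‖h‖ / 2)) * ‖δ (x + h) - δ x‖ₑ ^ p
      = ∫⁻ _ in ball (0 : E) (‖h‖ / 2), ‖δ (x + h) - δ x‖ₑ ^ p ∂μ := by
        rw [setLIntegral_const, mul_comm]
    _ ≤ ∫⁻ ζ in ball (0 : E) (‖h‖ / 2), 2 ^ p *
          (‖δ (x + h) - δ (x + h + (ζ + -((2⁻¹ : ℝ) • h)))‖ₑ ^ p +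
            ‖δ x - δ (x + (ζ + (2⁻¹ : ℝ) • h))‖ₑ ^ p) ∂μ := lintegral_mono triangle
    _ = 2 ^ p * ((∫⁻ ζ in ball (0 : E) (‖h‖ / 2),
            ‖δ (x + h) - δ (x + h + (ζ + -((2⁻¹ : ℝ) • h)))‖ₑ ^ p ∂μ) +
          ∫⁻ ζ in ball (0 : E) (‖h‖ / 2), ‖δ x - δ (x + (ζ + (2⁻¹ : ℝ) • h))‖ₑ ^ p ∂μ) := by
        rw [lintegral_const_mul' _ _ (ENNReal.rpow_ne_top_of_nonneg hp ENNReal.ofNat_ne_top),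
          lintegral_add_left (by fun_prop)]
    _ ≤ _ := by
        gcongr 2 ^ p * (?_ + ?_)
        · exact setLIntegral_comp_add_right_le (hmem (by rwa [norm_neg]))
            fun ξ => ‖δ (x + h) - δ (x + h + ξ)‖ₑ ^ p
        · exact setLIntegral_comp_add_right_le (hmem hhalf) fun ξ => ‖δ x - δ (x + ξ)‖ₑ ^ p

variable [FiniteDimensional ℝ E] [μ.IsAddHaarMeasure]

lemma measurable_lintegral_fracKernel (hδ : Measurable δ) (σ p : ℝ) (S : Set E) :
    Measurable fun x => ∫⁻ ξ in S, ‖δ x - δ (x + ξ)‖ₑ ^ p * fracKernel σ ξ ∂μ :=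
  Measurable.lintegral_prod_right'
    (f := fun q : E × E => ‖δ q.1 - δ (q.1 + q.2)‖ₑ ^ p * fracKernel σ q.2) (by fun_prop)

lemma measure_ball_mul_setLIntegral_le (hσ : 0 ≤ σ) (hp : 0 < p) (hδ : Measurable δ) (h : E)
    (r : ℝ) :
    μ (ball 0 (‖h‖ / 2)) * ∫⁻ x in ball (0 : E) r, ‖δ (x + h) - δ x‖ₑ ^ p ∂μ ≤
      2 ^ p * (‖h‖ₑ ^ ((finrank ℝ E : ℝ) + σ) * (2 * ∫⁻ x in ball (0 : E) (r + ‖h‖),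
        ∫⁻ ξ in ball (0 : E) ‖h‖, ‖δ x - δ (x + ξ)‖ₑ ^ p * fracKernel σ ξ ∂μ ∂μ)) := by
  set H : E → ℝ≥0∞ := fun x =>
    ∫⁻ ξ in ball (0 : E) ‖h‖, ‖δ x - δ (x + ξ)‖ₑ ^ p * fracKernel σ ξ ∂μ
  have measH : Measurable H := measurable_lintegral_fracKernel hδ σ p _
  have hH (x : E) := setLIntegral_ball_enorm_sub_rpow_le (μ := μ) hσ hp δ x h
  have hshift : ∫⁻ x in ball (0 : E) r, H (x + h) ∂μ ≤ ∫⁻ x in ball (0 : E) (r + ‖h‖), H x ∂μ := by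
    refine setLIntegral_comp_add_right_le (fun x hx => ?_) H
    rw [mem_ball_zero_iff] at *
    linarith [norm_add_le x h]
  have hmono : ∫⁻ x in ball (0 : E) r, H x ∂μ ≤ ∫⁻ x in ball (0 : E) (r + ‖h‖), H x ∂μ :=
    lintegral_mono_set (ball_subset_ball (by linarith [norm_nonneg h]))
  calc μ (ball 0 (‖h‖ / 2)) * ∫⁻ x in ball (0 : E) r, ‖δ (x + h) - δ x‖ₑ ^ p ∂μ
      = ∫⁻ x in ball (0 : E) r, μ (ball 0 (‖h‖ / 2)) * ‖δ (x + h) - δ x‖ₑ ^ p ∂μ :=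
        (lintegral_const_mul' _ _ measure_ball_lt_top.ne).symm
    _ ≤ ∫⁻ x in ball (0 : E) r, 2 ^ p *
          (‖h‖ₑ ^ ((finrank ℝ E : ℝ) + σ) * (H (x + h) + H x)) ∂μ := by
        refine lintegral_mono fun x =>
          (measure_ball_mul_enorm_sub_rpow_le hp.le hδ x h).trans ?_
        rw [mul_add (‖h‖ₑ ^ _)]
        gcongr 2 ^ p * (?_ + ?_)
        exacts [hH (x + h), hH x]
    _ = 2 ^ p * (‖h‖ₑ ^ ((finrank ℝ E : ℝ) + σ) *
          ((∫⁻ x in ball (0 : E) r, H (x + h) ∂μ) + ∫⁻ x in ball (0 : E) r, H x ∂μ)) := by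
        rw [lintegral_const_mul' _ _ (ENNReal.rpow_ne_top_of_nonneg hp.le ENNReal.ofNat_ne_top),
          lintegral_const_mul' _ _ (ENNReal.rpow_ne_top_of_nonneg (by positivity) enorm_ne_top),
          lintegral_add_right _ measH]
    _ ≤ _ := by
        rw [two_mul]
        gcongr

lemma measure_ball_half_norm {h : E} (hh : h ≠ 0) :
    μ (ball 0 (‖h‖ / 2)) = ‖h‖ₑ ^ (finrank ℝ E : ℝ) * μ (ball 0 2⁻¹) := by
  have := Measure.addHaar_ball_mul_of_pos μ (0 : E) (norm_pos_iff.mpr hh) 2⁻¹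
  rwa [ENNReal.ofReal_pow (norm_nonneg h), ofReal_norm, ← div_eq_mul_inv,
    ← ENNReal.rpow_natCast] at this

lemma exists_setLIntegral_enorm_sub_rpow_le_fracKernel (μ : Measure E) [μ.IsAddHaarMeasure]
    (hσ : 0 ≤ σ) (hp : 0 < p) :
    ∃ C : ℝ≥0, ∀ δ : E → F, Measurable δ → ∀ h : E, h ≠ 0 → ∀ r : ℝ,
      ∫⁻ x in ball (0 : E) r, ‖δ (x + h) - δ x‖ₑ ^ p ∂μ ≤
        C * ‖h‖ₑ ^ σ * ∫⁻ x in ball (0 : E) (r + ‖h‖),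
          ∫⁻ ξ in ball (0 : E) ‖h‖, ‖δ x - δ (x + ξ)‖ₑ ^ p * fracKernel σ ξ ∂μ ∂μ := by
  have hv₀ : μ (ball (0 : E) 2⁻¹) ≠ 0 := (measure_ball_pos μ _ (by norm_num)).ne'
  have hv : μ (ball (0 : E) 2⁻¹) ≠ ⊤ := measure_ball_lt_top.ne
  have hC : 2 ^ p * 2 * (μ (ball (0 : E) 2⁻¹))⁻¹ ≠ ⊤ := by
    have := ENNReal.rpow_ne_top_of_nonneg hp.le (ENNReal.ofNat_ne_top (n := 2))
    finiteness
  refine ⟨(2 ^ p * 2 * (μ (ball (0 : E) 2⁻¹))⁻¹).toNNReal, fun δ hδ h hh r => ?_⟩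
  have hh₀ : ‖h‖ₑ ≠ 0 := enorm_ne_zero.mpr hh
  have key := measure_ball_mul_setLIntegral_le (μ := μ) hσ hp hδ h r
  rw [measure_ball_half_norm hh, ENNReal.rpow_add _ _ hh₀ enorm_ne_top] at key
  rw [ENNReal.coe_toNNReal hC, ← ENNReal.mul_le_mul_iff_right
    (a := ‖h‖ₑ ^ (finrank ℝ E : ℝ) * μ (ball 0 2⁻¹)) (by simp [hh, hv₀]) (by finiteness)]
  refine key.trans_eq ?_
  rw [← one_mul (2 ^ p * _), ← ENNReal.mul_inv_cancel hv₀ hv]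
  ring

end FractionalDifferences

lemma enorm_sgnPow_sub_le {p : ℝ} (hp : 1 < p) (a b m : ℝ) :
    ‖sgnPow (p - 1) (a - b)‖ₑ ≤ 2 ^ (p - 1) * (‖a - m‖ₑ ^ (p - 1) + ‖b - m‖ₑ ^ (p - 1)) := by
  have hp₁ : 0 < p - 1 := sub_pos.mpr hp
  rw [enorm_sgnPow hp₁, ← sub_sub_sub_cancel_right a b m]
  exact (ENNReal.rpow_le_rpow enorm_sub_le hp₁.le).trans (enn_add_rpow_le_two_rpow_mul hp₁.le _ _)

section Solutions

variable {E : Type*} [NormedAddCommGroup E] [NormedSpace ℝ E] [MeasureSpace E]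

/-- The bounds on a function `v` near and away from the ball `B_t` which the nonlocal estimates use:
Gagliardo energy, `L^p` distance to the constant `m`, and tail around `m`. The factor `2^(n+sp)` in
the tail leaves room for translations of `v`. -/
structure ControlledOnBall (p s : ℝ) (v : E → ℝ) (m : ℝ) (M : ℝ≥0) (t : ℝ) : Prop where
  measurable : Measurable v
  gagliardo : ∫⁻ x in ball (0 : E) t, ∫⁻ y in ball (0 : E) t,
    ‖v x - v y‖ₑ ^ p * fracKernel (s * p) (x - y) ≤ (M : ℝ≥0∞) ^ p
  lintegral_sub : ∫⁻ x in ball (0 : E) t, ‖v x - m‖ₑ ^ p ≤ (M : ℝ≥0∞) ^ p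
  tail : ∫⁻ x in (ball (0 : E) t)ᶜ, ‖v x - m‖ₑ ^ (p - 1) * fracKernel (s * p) x ≤
    ENNReal.ofReal (2 ^ ((finrank ℝ E : ℝ) + s * p)) * (M : ℝ≥0∞) ^ (p - 1)

/-- The integrand of the weak formulation of `(-Δ_p)^s v = f` tested with `w`, on `E × E`. -/
def weakIntegrand (p s : ℝ) (v w : E → ℝ) (z : E × E) : ℝ :=
  sgnPow (p - 1) (v z.1 - v z.2) * (w z.1 - w z.2) /
    dist z.1 z.2 ^ ((finrank ℝ E : ℝ) + s * p)

/-- A `C¹` solution of `(-Δ_p)^s u = f` on the ball of radius `2`. Test functions are Lipschitz,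
with support well inside the ball. -/
structure SolutionOnBallTwo (p s : ℝ) (u f : E → ℝ) : Prop where
  measurable : Measurable u
  measurable_source : Measurable f
  contDiffAt : ∀ x ∈ closedBall (0 : E) 2, ContDiffAt ℝ 1 u x
  integral_weakIntegrand : ∀ w : E → ℝ, (∃ L, LipschitzWith L w) →
    (∃ t < 2, ∀ x, t < ‖x‖ → w x = 0) →
    ∫ x, ∫ y, weakIntegrand p s u w (x, y) = ∫ x, f x * w x

/-- A `C¹` solution on the ball of radius `2`, all of whose data are controlled by the single number
`M`; here `m` stands for the mean value of `u` on that ball. -/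
structure NormalizedSolution (p s : ℝ) (u f : E → ℝ) (m : ℝ) (M : ℝ≥0) : Prop extends
    SolutionOnBallTwo p s u f where
  gagliardo : ∫⁻ x in ball (0 : E) 2, ∫⁻ y in ball (0 : E) 2,
    ‖u x - u y‖ₑ ^ p * fracKernel (s * p) (x - y) ≤ (M : ℝ≥0∞) ^ p
  lintegral_sub : ∫⁻ x in ball (0 : E) 2, ‖u x - m‖ₑ ^ p ≤ (M : ℝ≥0∞) ^ p
  tail : ∫⁻ x in (ball (0 : E) (1 / 2))ᶜ, ‖u x - m‖ₑ ^ (p - 1) * fracKernel (s * p) x ≤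
    (M : ℝ≥0∞) ^ (p - 1)
  source : ∫⁻ x in ball (0 : E) 2, ‖f x‖ₑ ^ (p / (p - 1)) ≤ (M : ℝ≥0∞) ^ p

variable {p s t e : ℝ} {u f v w : E → ℝ} {m : ℝ} {M : ℝ≥0}

lemma ControlledOnBall.setLIntegral_mul_le (hv : ControlledOnBall p s v m M t) (hp : 1 < p)
    (ht₂ : t ≤ 2) (hw : Measurable w) {I A : ℝ≥0∞} (hI : I ≠ ⊤) (hA : A ≠ ⊤) :
    ∫⁻ x in ball (0 : E) t, ‖w x‖ₑ * (‖v x - m‖ₑ ^ (p - 1) * I + A * (M : ℝ≥0∞) ^ (p - 1)) ≤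
      (I + A * (volume (ball (0 : E) 2) ^ p⁻¹) ^ (p - 1)) *
        (eLpNorm' w p (volume.restrict (ball 0 t)) * (M : ℝ≥0∞) ^ (p - 1)) := by
  have hp₁ : 0 ≤ p - 1 := by linarith
  have := hv.measurable
  set V := (volume (ball (0 : E) 2) ^ p⁻¹) ^ (p - 1)
  set W := eLpNorm' w p (volume.restrict (ball 0 t))
  have holder : ∫⁻ x in ball (0 : E) t, ‖w x‖ₑ * ‖v x - m‖ₑ ^ (p - 1) ≤
      W * (M : ℝ≥0∞) ^ (p - 1) :=
    lintegral_mul_rpow_sub_one_le hp (by fun_prop) (by fun_prop) hv.lintegral_sub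
  have jensen : ∫⁻ x in ball (0 : E) t, ‖w x‖ₑ ≤ V * W := by
    refine (lintegral_enorm_le_measure_univ_rpow_mul_eLpNorm' hp hw.aestronglyMeasurable).trans ?_
    rw [Measure.restrict_apply_univ]
    gcongr ?_ * _
    exact ENNReal.rpow_le_rpow (ENNReal.rpow_le_rpow
      (measure_mono (ball_subset_ball ht₂)) (by positivity)) hp₁
  calc ∫⁻ x in ball (0 : E) t, ‖w x‖ₑ * (‖v x - m‖ₑ ^ (p - 1) * I + A * (M : ℝ≥0∞) ^ (p - 1))
      = I * (∫⁻ x in ball (0 : E) t, ‖w x‖ₑ * ‖v x - m‖ₑ ^ (p - 1)) +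
          A * (M : ℝ≥0∞) ^ (p - 1) * ∫⁻ x in ball (0 : E) t, ‖w x‖ₑ := by
        rw [← lintegral_const_mul' _ _ hI, ← lintegral_const_mul' _ _ (by finiteness),
          ← lintegral_add_left (by fun_prop)]
        congr! 2 with x
        ring
    _ ≤ I * (W * (M : ℝ≥0∞) ^ (p - 1)) + A * (M : ℝ≥0∞) ^ (p - 1) * (V * W) := by gcongr
    _ = (I + A * V) * (W * (M : ℝ≥0∞) ^ (p - 1)) := by ring

variable [BorelSpace E]

section Translation

variable [(volume : Measure E).IsAddHaarMeasure]

lemma NormalizedSolution.tail_translate (hu : NormalizedSolution p s u f m M) (hp : 0 < p)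
    (hs : 0 < s) (ht : 1 ≤ t) {h : E} (hh : ‖h‖ ≤ 1 / 2) :
    ∫⁻ x in (ball (0 : E) t)ᶜ, ‖u (x + h) - m‖ₑ ^ (p - 1) * fracKernel (s * p) x ≤
      ENNReal.ofReal (2 ^ ((finrank ℝ E : ℝ) + s * p)) * (M : ℝ≥0∞) ^ (p - 1) := by
  have norm_bounds : ∀ x ∈ (ball (0 : E) t)ᶜ, 1 / 2 ≤ ‖x + h‖ ∧ ‖x + h‖ ≤ 2 * ‖x‖ := by
    intro x hx
    rw [mem_compl_iff, mem_ball_zero_iff, not_lt] at hx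
    have := norm_sub_le (x + h) h
    rw [add_sub_cancel_right] at this
    constructor <;> linarith [norm_add_le x h]
  calc ∫⁻ x in (ball (0 : E) t)ᶜ, ‖u (x + h) - m‖ₑ ^ (p - 1) * fracKernel (s * p) x
      ≤ ∫⁻ x in (ball (0 : E) t)ᶜ, ENNReal.ofReal (2 ^ ((finrank ℝ E : ℝ) + s * p)) *
          (‖u (x + h) - m‖ₑ ^ (p - 1) * fracKernel (s * p) (x + h)) := by
        refine setLIntegral_mono' measurableSet_ball.compl fun x hx => ?_
        have hxh : x + h ≠ 0 := norm_pos_iff.mp (by linarith [(norm_bounds x hx).1])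
        rw [mul_left_comm]
        gcongr
        exact fracKernel_le_of_norm_le (by positivity) two_pos hxh (norm_bounds x hx).2
    _ ≤ ENNReal.ofReal (2 ^ ((finrank ℝ E : ℝ) + s * p)) *
          ∫⁻ x in (ball (0 : E) (1 / 2))ᶜ, ‖u x - m‖ₑ ^ (p - 1) * fracKernel (s * p) x := by
        rw [lintegral_const_mul' _ _ ENNReal.ofReal_ne_top]
        gcongr ENNReal.ofReal _ * ?_
        refine setLIntegral_comp_add_right_le (fun x hx => ?_)
          fun x => ‖u x - m‖ₑ ^ (p - 1) * fracKernel (s * p) x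
        rw [mem_compl_iff, mem_ball_zero_iff, not_lt]
        exact (norm_bounds x hx).1
    _ ≤ ENNReal.ofReal (2 ^ ((finrank ℝ E : ℝ) + s * p)) * (M : ℝ≥0∞) ^ (p - 1) := by
        gcongr
        exact hu.tail

lemma NormalizedSolution.controlledOnBall_translate (hu : NormalizedSolution p s u f m M)
    (hp : 0 < p) (hs : 0 < s) (ht : 1 ≤ t) {h : E} (hh : ‖h‖ ≤ 1 / 2) (hth : t + ‖h‖ ≤ 2) :
    ControlledOnBall p s (fun x => u (x + h)) m M t where
  measurable := hu.measurable.comp (measurable_add_const h)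
  gagliardo := by
    have hmem : ∀ x ∈ ball (0 : E) t, x + h ∈ ball 0 2 := fun x hx => by
      rw [mem_ball_zero_iff] at *
      linarith [norm_add_le x h]
    have inner (x : E) :=
      setLIntegral_comp_add_right_le hmem (ν := volume)
        fun y => ‖u (x + h) - u y‖ₑ ^ p * fracKernel (s * p) (x + h - y)
    simp only [add_sub_add_right_eq_sub] at inner
    exact (lintegral_mono inner).trans <| (setLIntegral_comp_add_right_le hmem fun x =>
      ∫⁻ y in ball (0 : E) 2, ‖u x - u y‖ₑ ^ p * fracKernel (s * p) (x - y)).trans hu.gagliardo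
  lintegral_sub := by
    refine (setLIntegral_comp_add_right_le (fun x hx => ?_)
      fun x => ‖u x - m‖ₑ ^ p).trans hu.lintegral_sub
    rw [mem_ball_zero_iff] at *
    linarith [norm_add_le x h]
  tail := hu.tail_translate hp hs ht hh

end Translation

section Tail

lemma ControlledOnBall.setLIntegral_compl_ball_le (hv : ControlledOnBall p s v m M t) (hp : 1 < p)
    (hs : 0 < s) (ht : 1 ≤ t) (ht₂ : t ≤ 2) (he : 0 < e) {x : E} (hx : ‖x‖ ≤ t - e) :
    ∫⁻ y in (ball (0 : E) t)ᶜ, ‖sgnPow (p - 1) (v x - v y)‖ₑ * fracKernel (s * p) (x - y) ≤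
      2 ^ (p - 1) * ENNReal.ofReal ((2 / e) ^ ((finrank ℝ E : ℝ) + s * p)) *
        (‖v x - m‖ₑ ^ (p - 1) * (∫⁻ y in (ball (0 : E) 1)ᶜ, fracKernel (s * p) y) +
          ENNReal.ofReal (2 ^ ((finrank ℝ E : ℝ) + s * p)) * (M : ℝ≥0∞) ^ (p - 1)) := by
  have hp₁ : 0 ≤ p - 1 := by linarith
  have := hv.measurable
  set Λ := ENNReal.ofReal ((2 / e) ^ ((finrank ℝ E : ℝ) + s * p))
  have pointwise : ∀ y ∈ (ball (0 : E) t)ᶜ,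
      ‖sgnPow (p - 1) (v x - v y)‖ₑ * fracKernel (s * p) (x - y) ≤
        2 ^ (p - 1) * Λ * (‖v x - m‖ₑ ^ (p - 1) * fracKernel (s * p) y +
          ‖v y - m‖ₑ ^ (p - 1) * fracKernel (s * p) y) := by
    intro y hy
    rw [mem_compl_iff, mem_ball_zero_iff, not_lt] at hy
    refine (mul_le_mul' (enorm_sgnPow_sub_le hp (v x) (v y) m)
      (fracKernel_sub_le (by positivity) he (by linarith) ht₂ hx hy)).trans_eq ?_
    ring
  refine (setLIntegral_mono' measurableSet_ball.compl pointwise).trans ?_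
  rw [lintegral_const_mul' _ _ (by finiteness), lintegral_add_left (by fun_prop),
    lintegral_const_mul' _ _ (ENNReal.rpow_ne_top_of_nonneg hp₁ enorm_ne_top)]
  gcongr
  exact hv.tail

/- The support of `w` keeps a distance `e` from the complement of `B_t`, so the singularity of the
kernel is not seen. -/
lemma exists_setLIntegral_compl_ball_le (E : Type*) [NormedAddCommGroup E] [NormedSpace ℝ E]
    [FiniteDimensional ℝ E] [MeasureSpace E] [BorelSpace E]
    [(volume : Measure E).IsAddHaarMeasure] (hp : 1 < p) (hs : 0 < s) :
    ∃ C : ℝ≥0, ∀ (v w : E → ℝ) (m : ℝ) (M : ℝ≥0) (t e : ℝ), Measurable w →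
      ControlledOnBall p s v m M t → 1 ≤ t → t ≤ 2 → 0 < e → (∀ x, t - e < ‖x‖ → w x = 0) →
      ∫⁻ x in ball (0 : E) t, ∫⁻ y in (ball (0 : E) t)ᶜ,
        ‖sgnPow (p - 1) (v x - v y)‖ₑ * ‖w x‖ₑ * fracKernel (s * p) (x - y) ≤
      C * ENNReal.ofReal ((2 / e) ^ ((finrank ℝ E : ℝ) + s * p)) *
        (eLpNorm' w p (volume.restrict (ball 0 t)) * (M : ℝ≥0∞) ^ (p - 1)) := by
  have hp₁ : 0 ≤ p - 1 := by linarith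
  set I := ∫⁻ y in (ball (0 : E) 1)ᶜ, fracKernel (s * p) y
  set V := (volume (ball (0 : E) 2) ^ p⁻¹) ^ (p - 1)
  set A := ENNReal.ofReal (2 ^ ((finrank ℝ E : ℝ) + s * p))
  have hI : I ≠ ⊤ := (lintegral_compl_ball_fracKernel_lt_top volume (by positivity) one_pos).ne
  have _ : volume (ball (0 : E) 2) ≠ ⊤ := measure_ball_lt_top.ne
  have hC : 2 ^ (p - 1) * (I + A * V) ≠ ⊤ := by finiteness
  refine ⟨(2 ^ (p - 1) * (I + A * V)).toNNReal, fun v w m M t e hw hv ht ht₂ he hw₀ => ?_⟩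
  rw [ENNReal.coe_toNNReal hC]
  set Λ := ENNReal.ofReal ((2 / e) ^ ((finrank ℝ E : ℝ) + s * p))
  have inner (x : E) : ∫⁻ y in (ball (0 : E) t)ᶜ,
      ‖sgnPow (p - 1) (v x - v y)‖ₑ * ‖w x‖ₑ * fracKernel (s * p) (x - y) ≤
      2 ^ (p - 1) * Λ * (‖w x‖ₑ * (‖v x - m‖ₑ ^ (p - 1) * I + A * (M : ℝ≥0∞) ^ (p - 1))) := by
    rcases lt_or_ge (t - e) ‖x‖ with hx | hx
    · simp [hw₀ x hx]
    simp only [mul_right_comm _ ‖w x‖ₑ]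
    rw [lintegral_mul_const' _ _ enorm_ne_top]
    refine (mul_le_mul_left (hv.setLIntegral_compl_ball_le hp hs ht ht₂ he hx) _).trans_eq ?_
    ring
  refine (lintegral_mono inner).trans ?_
  rw [lintegral_const_mul' _ _ (by finiteness)]
  refine (mul_le_mul_right (hv.setLIntegral_mul_le hp ht₂ hw hI ENNReal.ofReal_ne_top)
    _).trans_eq ?_
  ring

end Tail

end Solutions

section WeakForm

lemma enorm_div_dist_rpow {E : Type*} [NormedAddCommGroup E] [NormedSpace ℝ E] (σ c : ℝ)
    (x y : E) :
    ‖c / dist x y ^ ((finrank ℝ E : ℝ) + σ)‖ₑ = ‖c‖ₑ * fracKernel σ (x - y) := by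
  rw [div_eq_mul_inv, enorm_mul, fracKernel, dist_eq_norm, ← Real.rpow_neg (norm_nonneg _),
    Real.enorm_eq_ofReal (r := ‖x - y‖ ^ _) (by positivity)]

lemma setLIntegral_compl_prod_self_le {α : Type*} [MeasurableSpace α] {μ : Measure α} [SFinite μ]
    {F : α × α → ℝ≥0∞} (hF : Measurable F) (hsymm : ∀ x y, F (x, y) = F (y, x)) {B : Set α}
    (hB : MeasurableSet B) (hzero : ∀ x ∉ B, ∀ y ∉ B, F (x, y) = 0) :
    ∫⁻ z in (B ×ˢ B)ᶜ, F z ∂μ.prod μ ≤ 2 * ∫⁻ x in B, ∫⁻ y in Bᶜ, F (x, y) ∂μ ∂μ := by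
  have hcover : (B ×ˢ B)ᶜ ⊆ B ×ˢ Bᶜ ∪ Bᶜ ×ˢ B ∪ Bᶜ ×ˢ Bᶜ := fun z hz => by
    simp only [mem_compl_iff, mem_prod, mem_union] at *
    tauto
  have houter : ∫⁻ z in Bᶜ ×ˢ Bᶜ, F z ∂μ.prod μ = 0 :=
    setLIntegral_eq_zero (hB.compl.prod hB.compl) fun z hz => hzero z.1 hz.1 z.2 hz.2
  have hleft : ∫⁻ z in B ×ˢ Bᶜ, F z ∂μ.prod μ = ∫⁻ x in B, ∫⁻ y in Bᶜ, F (x, y) ∂μ ∂μ :=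
    setLIntegral_prod F hF.aemeasurable
  have hright : ∫⁻ z in Bᶜ ×ˢ B, F z ∂μ.prod μ = ∫⁻ x in B, ∫⁻ y in Bᶜ, F (x, y) ∂μ ∂μ := by
    rw [setLIntegral_prod_symm F hF.aemeasurable]
    simp only [hsymm]
  calc ∫⁻ z in (B ×ˢ B)ᶜ, F z ∂μ.prod μ
      ≤ ∫⁻ z in B ×ˢ Bᶜ, F z ∂μ.prod μ + ∫⁻ z in Bᶜ ×ˢ B, F z ∂μ.prod μ +
          ∫⁻ z in Bᶜ ×ˢ Bᶜ, F z ∂μ.prod μ :=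
        (lintegral_mono_set hcover).trans <| (lintegral_union_le _ _ _).trans <|
          add_le_add_left (lintegral_union_le _ _ _) _
    _ = 2 * ∫⁻ x in B, ∫⁻ y in Bᶜ, F (x, y) ∂μ ∂μ := by
        rw [houter, hleft, hright, add_zero, two_mul]

variable {E : Type*} [NormedAddCommGroup E] [NormedSpace ℝ E]

lemma enorm_weakIntegrand (p s : ℝ) (v w : E → ℝ) (x y : E) :
    ‖weakIntegrand p s v w (x, y)‖ₑ =
      ‖sgnPow (p - 1) (v x - v y)‖ₑ * ‖w x - w y‖ₑ * fracKernel (s * p) (x - y) := by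
  rw [weakIntegrand, enorm_div_dist_rpow, enorm_mul]

lemma weakIntegrand_comp_add_right (p s : ℝ) (v w : E → ℝ) (h x y : E) :
    weakIntegrand p s v w (x + h, y + h) =
      weakIntegrand p s (fun x => v (x + h)) (fun x => w (x + h)) (x, y) := by
  simp only [weakIntegrand, dist_add_right]

variable [FiniteDimensional ℝ E] [MeasureSpace E] [BorelSpace E]
  {p s t e : ℝ} {v w δ η : E → ℝ} {m : ℝ} {L M : ℝ≥0}

lemma measurable_weakIntegrand (hv : Measurable v) (hw : Measurable w) :
    Measurable (weakIntegrand p s v w) := by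
  have := measurable_sgnPow (p - 1)
  unfold weakIntegrand
  fun_prop

lemma exists_lintegral_compl_prod_weakIntegrand_le (E : Type*) [NormedAddCommGroup E]
    [NormedSpace ℝ E] [FiniteDimensional ℝ E] [MeasureSpace E] [BorelSpace E]
    [(volume : Measure E).IsAddHaarMeasure] (hp : 1 < p) (hs : 0 < s) :
    ∃ C : ℝ≥0, ∀ (v w : E → ℝ) (m : ℝ) (M : ℝ≥0) (t e : ℝ), Measurable w →
      ControlledOnBall p s v m M t → 1 ≤ t → t ≤ 2 → 0 < e → (∀ x, t - e < ‖x‖ → w x = 0) →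
      ∫⁻ z in (ball (0 : E) t ×ˢ ball (0 : E) t)ᶜ, ‖weakIntegrand p s v w z‖ₑ
          ∂(volume : Measure E).prod volume ≤
        C * ENNReal.ofReal ((2 / e) ^ ((finrank ℝ E : ℝ) + s * p)) *
          (eLpNorm' w p (volume.restrict (ball 0 t)) * (M : ℝ≥0∞) ^ (p - 1)) := by
  obtain ⟨C, hC⟩ := exists_setLIntegral_compl_ball_le E hp hs
  refine ⟨2 * C, fun v w m M t e hw hv ht ht₂ he hw₀ => ?_⟩
  have hp₁ : 0 < p - 1 := sub_pos.mpr hp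
  have w_eq_zero : ∀ x ∉ ball (0 : E) t, w x = 0 := fun x hx => by
    rw [mem_ball_zero_iff, not_lt] at hx
    exact hw₀ x (by linarith)
  refine (setLIntegral_compl_prod_self_le (measurable_weakIntegrand hv.measurable hw).enorm
    (fun x y => ?_) measurableSet_ball fun x hx y hy => ?_).trans ?_
  · simp only [enorm_weakIntegrand, enorm_sgnPow hp₁, enorm_sub_rev (v x), enorm_sub_rev (w x),
      fracKernel_sub_comm _ x]
  · simp [enorm_weakIntegrand, w_eq_zero x hx, w_eq_zero y hy]
  · have onto : ∫⁻ x in ball (0 : E) t, ∫⁻ y in (ball (0 : E) t)ᶜ,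
        ‖weakIntegrand p s v w (x, y)‖ₑ =
        ∫⁻ x in ball (0 : E) t, ∫⁻ y in (ball (0 : E) t)ᶜ,
          ‖sgnPow (p - 1) (v x - v y)‖ₑ * ‖w x‖ₑ * fracKernel (s * p) (x - y) := by
      refine lintegral_congr fun x => setLIntegral_congr_fun measurableSet_ball.compl
        fun y hy => ?_
      simp only [enorm_weakIntegrand, w_eq_zero y hy, sub_zero]
    rw [onto]
    refine (mul_le_mul_right (hC v w m M t e hw hv ht ht₂ he hw₀) 2).trans_eq ?_
    push_cast
    ring

lemma ControlledOnBall.lintegral_lintegral_mul_le [(volume : Measure E).IsAddHaarMeasure]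
    (hv : ControlledOnBall p s v m M t) (hp : 1 < p)
    {X : E → E → ℝ≥0∞} (hX : Measurable (Function.uncurry X)) :
    ∫⁻ x in ball (0 : E) t, ∫⁻ y in ball (0 : E) t,
        ‖sgnPow (p - 1) (v x - v y)‖ₑ * X x y * fracKernel (s * p) (x - y) ≤
      (∫⁻ x in ball (0 : E) t, ∫⁻ y in ball (0 : E) t,
        X x y ^ p * fracKernel (s * p) (x - y)) ^ (1 / p) * (M : ℝ≥0∞) ^ (p - 1) := by
  have hp₀ : 0 < p := by linarith
  have hp₁ : 0 < p - 1 := sub_pos.mpr hp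
  have := hv.measurable
  have := measurable_sgnPow (p - 1)
  have hX' : Measurable fun z : E × E => X z.1 z.2 := hX
  let ν := ((volume : Measure E).restrict (ball 0 t)).prod (volume.restrict (ball (0 : E) t))
  let k : E × E → ℝ≥0∞ := fun z => fracKernel (s * p) (z.1 - z.2) ^ (1 / p)
  have : Measurable k := by fun_prop
  have mul_kernel_rpow (c k : ℝ≥0∞) : (c * k ^ (1 / p)) ^ p = c ^ p * k := by
    rw [ENNReal.mul_rpow_of_nonneg _ _ hp₀.le, ← ENNReal.rpow_mul, one_div_mul_cancel hp₀.ne',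
      ENNReal.rpow_one]
  have energy : ∫⁻ z, (‖v z.1 - v z.2‖ₑ * k z) ^ p ∂ν ≤ (M : ℝ≥0∞) ^ p := by
    rw [lintegral_prod _ (by fun_prop)]
    simpa only [k, mul_kernel_rpow] using hv.gagliardo
  have holder := lintegral_mul_rpow_sub_one_le hp (g := fun z : E × E => X z.1 z.2 * k z)
    (by fun_prop) (by fun_prop) energy
  rw [lintegral_prod _ (by fun_prop), lintegral_prod _ (by fun_prop)] at holder
  simp only [k, mul_kernel_rpow] at holder
  refine le_of_eq_of_le (lintegral_congr fun x => lintegral_congr fun y => ?_) holder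
  have split_kernel (c : ℝ≥0∞) : c ^ (1 / p) * (c ^ (1 / p)) ^ (p - 1) = c := by
    rw [← ENNReal.rpow_mul, ← ENNReal.rpow_add_of_nonneg _ _ (by positivity) (by positivity)]
    rw [show 1 / p + 1 / p * (p - 1) = 1 by field_simp; ring, ENNReal.rpow_one]
  rw [enorm_sgnPow hp₁, ENNReal.mul_rpow_of_nonneg _ _ hp₁.le]
  conv_lhs => rw [← split_kernel (fracKernel (s * p) (x - y))]
  ring

end WeakForm

section

variable {p s t e : ℝ}

section Kernel

variable (E : Type*) [NormedAddCommGroup E] [NormedSpace ℝ E] [FiniteDimensional ℝ E]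
  [MeasureSpace E] [BorelSpace E] [(volume : Measure E).IsAddHaarMeasure]

lemma exists_setLIntegral_enorm_sub_rpow_mul_fracKernel_le (hp : 0 < p) (hs : s < 1) :
    ∃ C : ℝ≥0, ∀ y ∈ ball (0 : E) 2,
      ∫⁻ x in ball (0 : E) 2, ‖x - y‖ₑ ^ p * fracKernel (s * p) (x - y) ≤ C := by
  obtain ⟨C, hC⟩ := exists_forall_lintegral_ball_fracKernel_le (volume : Measure E)
    (σ := s * p - p) (by nlinarith)
  have hfin : C * ENNReal.ofReal 4 ^ (-(s * p - p)) ≠ ⊤ := by finiteness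
  refine ⟨(C * ENNReal.ofReal 4 ^ (-(s * p - p))).toNNReal, fun y hy => ?_⟩
  rw [ENNReal.coe_toNNReal hfin]
  have hmem : ∀ x ∈ ball (0 : E) 2, x + -y ∈ ball (0 : E) 4 := fun x hx => by
    rw [mem_ball_zero_iff] at *
    linarith [norm_add_le x (-y), norm_neg y]
  have pointwise (z : E) : ‖z‖ₑ ^ p * fracKernel (s * p) z ≤ fracKernel (s * p - p) z := by
    rcases eq_or_ne z 0 with rfl | hz
    · simp [hp]
    · exact (enorm_rpow_mul_fracKernel p hz).le
  refine (lintegral_mono fun x => pointwise (x - y)).trans ?_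
  simp only [sub_eq_add_neg _ y]
  exact (setLIntegral_comp_add_right_le hmem _).trans (hC 4 four_pos)

lemma exists_lintegral_lintegral_enorm_sub_mul_le (hp : 1 < p) (hs : s < 1) :
    ∃ C : ℝ≥0, ∀ (v η δ : E → ℝ) (m : ℝ) (M L : ℝ≥0) (t : ℝ), ControlledOnBall p s v m M t →
      t ≤ 2 → LipschitzWith L η → Measurable δ →
      ∫⁻ x in ball (0 : E) t, ∫⁻ y in ball (0 : E) t, ‖sgnPow (p - 1) (v x - v y)‖ₑ *
          (‖η x - η y‖ₑ * ‖δ y‖ₑ) * fracKernel (s * p) (x - y) ≤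
        C * L * (eLpNorm' δ p (volume.restrict (ball 0 t)) * (M : ℝ≥0∞) ^ (p - 1)) := by
  have hp₀ : 0 < p := by linarith
  obtain ⟨C, hC⟩ := exists_setLIntegral_enorm_sub_rpow_mul_fracKernel_le E hp₀ hs
  refine ⟨C ^ (1 / p), fun v η δ m M L t hv ht hη hδ => ?_⟩
  have := hη.continuous.measurable
  rw [← mul_assoc]
  refine (hv.lintegral_lintegral_mul_le hp (X := fun x y => ‖η x - η y‖ₑ * ‖δ y‖ₑ)
    (by fun_prop)).trans (mul_le_mul_left ?_ _)
  have pointwise (x y : E) : (‖η x - η y‖ₑ * ‖δ y‖ₑ) ^ p * fracKernel (s * p) (x - y) ≤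
      (L * ‖δ y‖ₑ) ^ p * (‖x - y‖ₑ ^ p * fracKernel (s * p) (x - y)) := by
    have lipschitz : ‖η x - η y‖ₑ ≤ L * ‖x - y‖ₑ := by
      simpa only [edist_eq_enorm_sub] using hη x y
    rw [← mul_assoc, ← ENNReal.mul_rpow_of_nonneg _ _ hp₀.le, mul_right_comm]
    gcongr
  have inner (y : E) (hy : y ∈ ball (0 : E) t) :
      ∫⁻ x in ball (0 : E) t, (‖η x - η y‖ₑ * ‖δ y‖ₑ) ^ p * fracKernel (s * p) (x - y) ≤
        L ^ p * C * ‖δ y‖ₑ ^ p := by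
    refine (lintegral_mono fun x => pointwise x y).trans ?_
    rw [lintegral_const_mul' _ _ (by finiteness), mul_right_comm,
      ← ENNReal.mul_rpow_of_nonneg _ _ hp₀.le]
    gcongr
    exact (lintegral_mono_set (ball_subset_ball ht)).trans (hC y (ball_subset_ball ht hy))
  rw [lintegral_lintegral_swap (by fun_prop)]
  refine (ENNReal.rpow_le_rpow (setLIntegral_mono' measurableSet_ball inner)
    (by positivity)).trans_eq ?_
  rw [lintegral_const_mul' _ _ (by finiteness), ENNReal.mul_rpow_of_nonneg _ _ (by positivity),
    ENNReal.mul_rpow_of_nonneg _ _ (by positivity), ← ENNReal.rpow_mul,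
    mul_one_div_cancel hp₀.ne', ENNReal.rpow_one, ENNReal.coe_rpow_of_nonneg _ (by positivity),
    mul_comm (L : ℝ≥0∞), eLpNorm'_eq_lintegral_enorm]

end Kernel

variable {E : Type*} [NormedAddCommGroup E] [NormedSpace ℝ E] [FiniteDimensional ℝ E]
  [MeasureSpace E] [BorelSpace E] [(volume : Measure E).IsAddHaarMeasure]
  {v w : E → ℝ} {m : ℝ} {L M : ℝ≥0}

lemma eLpNorm'_restrict_ball_ne_top (hp : 0 < p) (hw : Continuous w) :
    eLpNorm' w p (volume.restrict (ball (0 : E) t)) ≠ ⊤ := by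
  obtain ⟨c, hc⟩ := (isCompact_closedBall (0 : E) t).exists_bound_of_continuousOn hw.continuousOn
  have bound : ∫⁻ x in ball (0 : E) t, ‖w x‖ₑ ^ p ≤ ∫⁻ _ in ball (0 : E) t, ENNReal.ofReal c ^ p :=
    setLIntegral_mono' measurableSet_ball fun x hx => by
      rw [← ofReal_norm]
      gcongr
      exact hc x (ball_subset_closedBall hx)
  refine ENNReal.rpow_ne_top_of_nonneg (by positivity) (ne_top_of_le_ne_top ?_ bound)
  rw [setLIntegral_const]
  have _ : volume (ball (0 : E) t) ≠ ⊤ := measure_ball_lt_top.ne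
  finiteness

lemma ControlledOnBall.integrable_weakIntegrand (hv : ControlledOnBall p s v m M t) (hp : 1 < p)
    (hs : 0 < s) (hs₁ : s < 1) (hw : LipschitzWith L w) (ht : 1 ≤ t) (ht₂ : t ≤ 2) (he : 0 < e)
    (hw₀ : ∀ x, t - e < ‖x‖ → w x = 0) :
    Integrable (weakIntegrand p s v w) ((volume : Measure E).prod volume) := by
  have hp₀ : 0 < p := by linarith
  have hp₁ : 0 ≤ p - 1 := by linarith
  have hwm := hw.continuous.measurable
  have measurable := measurable_weakIntegrand (p := p) (s := s) hv.measurable hwm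
  obtain ⟨C, hC⟩ := exists_lintegral_lintegral_enorm_sub_mul_le E hp hs₁
  obtain ⟨C', hC'⟩ := exists_lintegral_compl_prod_weakIntegrand_le E hp hs
  have inside : ∫⁻ z in ball (0 : E) t ×ˢ ball (0 : E) t, ‖weakIntegrand p s v w z‖ₑ
      ∂(volume : Measure E).prod volume < ⊤ := by
    rw [setLIntegral_prod _ measurable.enorm.aemeasurable]
    have near := hC v w 1 m M L t hv ht₂ hw measurable_one
    simp only [Pi.one_apply, enorm_one, mul_one] at near
    simp only [enorm_weakIntegrand]
    have := eLpNorm'_restrict_ball_ne_top (E := E) (t := t) hp₀ continuous_one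
    exact near.trans_lt (by finiteness)
  have outside := hC' v w m M t e hwm hv ht ht₂ he hw₀
  have := eLpNorm'_restrict_ball_ne_top (t := t) hp₀ hw.continuous
  refine ⟨measurable.aestronglyMeasurable, ?_⟩
  rw [HasFiniteIntegral,
    ← lintegral_add_compl _ (measurableSet_ball.prod (measurableSet_ball (x := (0 : E)) (ε := t)))]
  exact ENNReal.add_lt_top.mpr ⟨inside, outside.trans_lt (by finiteness)⟩

end

lemma setLIntegral_ofReal_le_of_eq_sub {α : Type*} [MeasurableSpace α] {μ : Measure α}
    {Ψ I G : α → ℝ} {S : Set α} (hΨ : Integrable Ψ μ) (hS : MeasurableSet S)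
    (hI : ∀ z ∈ S, 0 ≤ I z) (hIG : ∀ z ∈ S, I z = Ψ z - G z) (hG : Measurable G) :
    ∫⁻ z in S, ENNReal.ofReal (I z) ∂μ ≤
      ENNReal.ofReal (∫ z, Ψ z ∂μ) + ∫⁻ z in Sᶜ, ‖Ψ z‖ₑ ∂μ + ∫⁻ z in S, ‖G z‖ₑ ∂μ := by
  by_cases hfin : ∫⁻ z in S, ‖G z‖ₑ ∂μ = ⊤
  · simp [hfin]
  have hGS : IntegrableOn G S μ := ⟨hG.aestronglyMeasurable, lt_top_iff_ne_top.mpr hfin⟩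
  have ofReal_neg_integral_le (T : Set α) (g : α → ℝ) :
      ENNReal.ofReal (-∫ z in T, g z ∂μ) ≤ ∫⁻ z in T, ‖g z‖ₑ ∂μ := by
    refine le_trans ?_ (enorm_integral_le_lintegral_enorm g)
    rw [Real.enorm_eq_ofReal_abs]
    exact ENNReal.ofReal_le_ofReal (neg_le_abs _)
  have identity : ∫ z in S, I z ∂μ = ∫ z, Ψ z ∂μ + -∫ z in Sᶜ, Ψ z ∂μ + -∫ z in S, G z ∂μ := by
    rw [setIntegral_congr_fun hS hIG, integral_sub hΨ.integrableOn hGS,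
      ← integral_add_compl hS hΨ]
    ring
  have hIS : IntegrableOn I S μ :=
    (integrableOn_congr_fun hIG hS).mpr (hΨ.integrableOn.sub hGS)
  rw [← ofReal_integral_eq_lintegral_ofReal hIS (ae_restrict_of_forall_mem hS hI), identity]
  exact ENNReal.ofReal_add_le.trans <| add_le_add
    (ENNReal.ofReal_add_le.trans (add_le_add le_rfl (ofReal_neg_integral_le _ _)))
    (ofReal_neg_integral_le _ _)

lemma lipschitzWith_mul_of_eq_zero_of_lipschitzOnWith {X : Type*} [PseudoMetricSpace X]
    {η δ : X → ℝ} {S : Set X} {L L' K : ℝ≥0} (hη : LipschitzWith L η) (hη₁ : ∀ x, |η x| ≤ 1)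
    (hη₀ : ∀ x ∉ S, η x = 0) (hδ : LipschitzOnWith L' δ S) (hK : ∀ x ∈ S, |δ x| ≤ K) :
    LipschitzWith (L' + L * K) (fun x => η x * δ x) := by
  have estimate (x y : X) (hy : y ∈ S) :
      |η x * δ x - η y * δ y| ≤ (L' + L * K) * dist x y := by
    have hηδ : |(η x - η y) * δ y| ≤ L * K * dist x y := by
      rw [abs_mul, mul_right_comm]
      exact mul_le_mul (hη.dist_le_mul x y) (hK y hy) (abs_nonneg _) (by positivity)
    by_cases hx : x ∈ S
    · have hδη : |η x * (δ x - δ y)| ≤ L' * dist x y := by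
        rw [abs_mul]
        exact (mul_le_of_le_one_left (abs_nonneg _) (hη₁ x)).trans (hδ.dist_le_mul x hx y hy)
      rw [show η x * δ x - η y * δ y = η x * (δ x - δ y) + (η x - η y) * δ y by ring, add_mul]
      exact (abs_add_le _ _).trans (add_le_add hδη hηδ)
    · rw [hη₀ x hx, zero_sub] at hηδ
      rw [hη₀ x hx, zero_mul, zero_sub, ← neg_mul]
      exact hηδ.trans (by gcongr; exact le_add_of_nonneg_left L'.coe_nonneg)
  refine LipschitzWith.of_dist_le_mul fun x y => ?_
  rw [Real.dist_eq]
  push_cast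
  by_cases hy : y ∈ S
  · exact estimate x y hy
  by_cases hx : x ∈ S
  · rw [abs_sub_comm, dist_comm]
    exact estimate y x hx
  · rw [hη₀ x hx, hη₀ y hy]
    simp only [zero_mul, sub_self, abs_zero]
    positivity

section Energy

/-- A Lipschitz function with values in `[0, 1]` supported in the closed ball of radius `r`. -/
structure IsCutoff {E : Type*} [NormedAddCommGroup E] (η : E → ℝ) (L : ℝ≥0) (r : ℝ) : Prop where
  lipschitz : LipschitzWith L η
  nonneg : ∀ x, 0 ≤ η x
  le_one : ∀ x, η x ≤ 1
  eq_zero : ∀ x, r < ‖x‖ → η x = 0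

lemma IsCutoff.abs_le_one {E : Type*} [NormedAddCommGroup E] {η : E → ℝ} {L : ℝ≥0} {r : ℝ}
    (hη : IsCutoff η L r) (x : E) : |η x| ≤ 1 := by
  rw [abs_of_nonneg (hη.nonneg x)]
  exact hη.le_one x

lemma IsCutoff.eLpNorm'_mul_le {E : Type*} [NormedAddCommGroup E] [MeasurableSpace E] {p : ℝ}
    {η : E → ℝ} {L : ℝ≥0} {r : ℝ} (hη : IsCutoff η L r) (hp : 0 ≤ p)
    (v : E → ℝ) (μ : Measure E) : eLpNorm' (fun x => η x * v x) p μ ≤ eLpNorm' v p μ := by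
  refine eLpNorm'_mono_enorm_ae hp (.of_forall fun x => ?_)
  rw [enorm_mul]
  refine mul_le_of_le_one_left' ?_
  rw [Real.enorm_eq_ofReal (hη.nonneg x)]
  exact ENNReal.ofReal_le_one.mpr (hη.le_one x)

lemma exists_isCutoff {E : Type*} [NormedAddCommGroup E] {r R : ℝ} (hrR : r < R) :
    ∃ η : E → ℝ, IsCutoff η (R - r)⁻¹.toNNReal R ∧ ∀ x, ‖x‖ ≤ r → η x = 1 := by
  have hd : 0 < R - r := sub_pos.mpr hrR
  have lipschitz : LipschitzWith (R - r)⁻¹.toNNReal fun x : E => (R - r)⁻¹ * (R - ‖x‖) := by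
    refine LipschitzWith.of_dist_le_mul fun x y => ?_
    rw [Real.dist_eq, dist_eq_norm, Real.coe_toNNReal _ (by positivity), ← mul_sub, abs_mul,
      abs_of_pos (inv_pos.mpr hd), sub_sub_sub_cancel_left, norm_sub_rev]
    gcongr
    exact abs_norm_sub_norm_le y x
  refine ⟨fun x => min 1 (max 0 ((R - r)⁻¹ * (R - ‖x‖))),
    ⟨(lipschitz.const_max 0).const_min 1, fun x => by positivity, fun x => min_le_left _ _,
      fun x hx => ?_⟩, fun x hx => min_eq_left (le_max_of_le_right ?_)⟩
  · rw [max_eq_left (mul_nonpos_of_nonneg_of_nonpos (by positivity) (by linarith))]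
    exact min_eq_right zero_le_one
  · rw [inv_mul_eq_div, le_div_iff₀ hd]
    linarith

variable {E : Type*} [NormedAddCommGroup E] [NormedSpace ℝ E] [FiniteDimensional ℝ E]
  [MeasureSpace E] [BorelSpace E] [(volume : Measure E).IsAddHaarMeasure]
  {p s t e : ℝ} {v v₁ v₂ w η : E → ℝ} {m : ℝ} {L M : ℝ≥0}

/-- The energy on `B_t`, localised by the weight `η`, which the monotonicity of `(-Δ_p)^s` controls
when the equations of `v₁` and `v₂` are subtracted and tested with `η (v₁ - v₂)`. -/
def differenceEnergy (p s : ℝ) (v₁ v₂ η : E → ℝ) (t : ℝ) : ℝ≥0∞ :=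
  ∫⁻ x in ball (0 : E) t, ∫⁻ y in ball (0 : E) t,
    ENNReal.ofReal (η x * ((sgnPow (p - 1) (v₁ x - v₁ y) - sgnPow (p - 1) (v₂ x - v₂ y)) *
      ((v₁ x - v₁ y) - (v₂ x - v₂ y)))) * fracKernel (s * p) (x - y)

lemma differenceEnergy_eq_setLIntegral (hv₁ : Measurable v₁) (hv₂ : Measurable v₂)
    (hη : Measurable η) :
    differenceEnergy p s v₁ v₂ η t = ∫⁻ z in ball (0 : E) t ×ˢ ball (0 : E) t,
      ENNReal.ofReal (η z.1 * ((sgnPow (p - 1) (v₁ z.1 - v₁ z.2) -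
        sgnPow (p - 1) (v₂ z.1 - v₂ z.2)) * ((v₁ z.1 - v₁ z.2) - (v₂ z.1 - v₂ z.2))) /
          dist z.1 z.2 ^ ((finrank ℝ E : ℝ) + s * p)) ∂(volume : Measure E).prod volume := by
  have := measurable_sgnPow (p - 1)
  rw [setLIntegral_prod _ (by fun_prop), differenceEnergy]
  refine lintegral_congr fun x => lintegral_congr fun y => ?_
  rw [fracKernel, Real.rpow_neg (norm_nonneg _), ← ENNReal.ofReal_mul' (by positivity),
    ← dist_eq_norm, div_eq_mul_inv]

lemma exists_lintegral_mul_cutoff_sub_le (E : Type*) [NormedAddCommGroup E] [NormedSpace ℝ E]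
    [FiniteDimensional ℝ E] [MeasureSpace E] [BorelSpace E]
    [(volume : Measure E).IsAddHaarMeasure] (hp : 1 < p) (hs : s < 1) :
    ∃ C : ℝ≥0, ∀ (v₁ v₂ η δ : E → ℝ) (m : ℝ) (M L : ℝ≥0) (t : ℝ), ControlledOnBall p s v₁ m M t →
      ControlledOnBall p s v₂ m M t → t ≤ 2 → LipschitzWith L η → Measurable δ →
      ∫⁻ z in ball (0 : E) t ×ˢ ball (0 : E) t, ‖(sgnPow (p - 1) (v₁ z.1 - v₁ z.2) -
          sgnPow (p - 1) (v₂ z.1 - v₂ z.2)) * ((η z.1 - η z.2) * δ z.2) /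
          dist z.1 z.2 ^ ((finrank ℝ E : ℝ) + s * p)‖ₑ ∂(volume : Measure E).prod volume ≤
        C * L * (eLpNorm' δ p (volume.restrict (ball 0 t)) * (M : ℝ≥0∞) ^ (p - 1)) := by
  obtain ⟨C, hC⟩ := exists_lintegral_lintegral_enorm_sub_mul_le E hp hs
  refine ⟨2 * C, fun v₁ v₂ η δ m M L t hv₁ hv₂ ht hη hδ => ?_⟩
  have := measurable_sgnPow (p - 1)
  have := hv₁.measurable
  have := hv₂.measurable
  have := hη.continuous.measurable
  have pointwise (x y : E) : ‖(sgnPow (p - 1) (v₁ x - v₁ y) - sgnPow (p - 1) (v₂ x - v₂ y)) *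
      ((η x - η y) * δ y) / dist x y ^ ((finrank ℝ E : ℝ) + s * p)‖ₑ ≤
      ‖sgnPow (p - 1) (v₁ x - v₁ y)‖ₑ * (‖η x - η y‖ₑ * ‖δ y‖ₑ) * fracKernel (s * p) (x - y) +
      ‖sgnPow (p - 1) (v₂ x - v₂ y)‖ₑ * (‖η x - η y‖ₑ * ‖δ y‖ₑ) * fracKernel (s * p) (x - y) := by
    rw [enorm_div_dist_rpow, enorm_mul, enorm_mul, ← add_mul, ← add_mul]
    gcongr
    exact enorm_sub_le
  rw [setLIntegral_prod _ (by fun_prop)]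
  refine (lintegral_mono fun x => (lintegral_mono fun y => pointwise x y).trans_eq
    (lintegral_add_left (by fun_prop) _)).trans ?_
  rw [lintegral_add_left (by fun_prop)]
  refine (add_le_add (hC v₁ η δ m M L t hv₁ ht hη hδ) (hC v₂ η δ m M L t hv₂ ht hη hδ)).trans_eq ?_
  push_cast
  ring

lemma exists_lintegral_compl_prod_weakIntegrand_sub_le (E : Type*) [NormedAddCommGroup E]
    [NormedSpace ℝ E] [FiniteDimensional ℝ E] [MeasureSpace E] [BorelSpace E]
    [(volume : Measure E).IsAddHaarMeasure] (hp : 1 < p) (hs : 0 < s) :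
    ∃ C : ℝ≥0, ∀ (v₁ v₂ w : E → ℝ) (m : ℝ) (M : ℝ≥0) (t e : ℝ), Measurable w →
      ControlledOnBall p s v₁ m M t → ControlledOnBall p s v₂ m M t → 1 ≤ t → t ≤ 2 → 0 < e →
      (∀ x, t - e < ‖x‖ → w x = 0) →
      ∫⁻ z in (ball (0 : E) t ×ˢ ball (0 : E) t)ᶜ,
          ‖weakIntegrand p s v₁ w z - weakIntegrand p s v₂ w z‖ₑ
          ∂(volume : Measure E).prod volume ≤
        C * ENNReal.ofReal ((2 / e) ^ ((finrank ℝ E : ℝ) + s * p)) *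
          (eLpNorm' w p (volume.restrict (ball 0 t)) * (M : ℝ≥0∞) ^ (p - 1)) := by
  obtain ⟨C, hC⟩ := exists_lintegral_compl_prod_weakIntegrand_le E hp hs
  refine ⟨2 * C, fun v₁ v₂ w m M t e hw hv₁ hv₂ ht ht₂ he hw₀ => ?_⟩
  refine (lintegral_mono fun z => enorm_sub_le).trans ?_
  rw [lintegral_add_left (measurable_weakIntegrand hv₁.measurable hw).enorm]
  refine (add_le_add (hC v₁ w m M t e hw hv₁ ht ht₂ he hw₀)
    (hC v₂ w m M t e hw hv₂ ht ht₂ he hw₀)).trans_eq ?_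
  push_cast
  ring

/- The integrand of the energy is the difference of the weak integrands tested with
`w = η (v₁ - v₂)`, up to the term in which the difference operator falls on `η`. -/
lemma exists_differenceEnergy_le (E : Type*) [NormedAddCommGroup E] [NormedSpace ℝ E]
    [FiniteDimensional ℝ E] [MeasureSpace E] [BorelSpace E]
    [(volume : Measure E).IsAddHaarMeasure] (hp : 1 < p) (hs : 0 < s) (hs₁ : s < 1) :
    ∃ C : ℝ≥0, ∀ (v₁ v₂ η w : E → ℝ) (m : ℝ) (M L L' : ℝ≥0) (t e : ℝ),
      ControlledOnBall p s v₁ m M t → ControlledOnBall p s v₂ m M t → 1 ≤ t → t ≤ 2 → 0 < e →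
      IsCutoff η L (t - e) → LipschitzWith L' w → (∀ x, w x = η x * (v₁ x - v₂ x)) →
      differenceEnergy p s v₁ v₂ η t ≤
        ENNReal.ofReal (∫ z, (weakIntegrand p s v₁ w z - weakIntegrand p s v₂ w z)
          ∂(volume : Measure E).prod volume) +
        C * (L + ENNReal.ofReal ((2 / e) ^ ((finrank ℝ E : ℝ) + s * p))) *
          (eLpNorm' (fun x => v₁ x - v₂ x) p (volume.restrict (ball 0 t)) *
            (M : ℝ≥0∞) ^ (p - 1)) := by
  obtain ⟨C₁, hC₁⟩ := exists_lintegral_compl_prod_weakIntegrand_sub_le E hp hs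
  obtain ⟨C₂, hC₂⟩ := exists_lintegral_mul_cutoff_sub_le E hp hs₁
  refine ⟨C₁ + C₂, fun v₁ v₂ η w m M L L' t e hv₁ hv₂ ht ht₂ he hη hw hwη => ?_⟩
  have := measurable_sgnPow (p - 1)
  have := hv₁.measurable
  have := hv₂.measurable
  have hηm := hη.lipschitz.continuous.measurable
  have hw₀ : ∀ x, t - e < ‖x‖ → w x = 0 := fun x hx => by rw [hwη, hη.eq_zero x hx, zero_mul]
  have integrable (v : E → ℝ) (hv : ControlledOnBall p s v m M t) :=
    hv.integrable_weakIntegrand hp hs hs₁ hw ht ht₂ he hw₀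
  set N := eLpNorm' (fun x => v₁ x - v₂ x) p (volume.restrict (ball (0 : E) t))
  set Λ := ENNReal.ofReal ((2 / e) ^ ((finrank ℝ E : ℝ) + s * p))
  have hwN : eLpNorm' w p (volume.restrict (ball (0 : E) t)) ≤ N := by
    rw [funext hwη]
    exact hη.eLpNorm'_mul_le (by linarith) _ _
  rw [differenceEnergy_eq_setLIntegral hv₁.measurable hv₂.measurable hηm]
  refine (setLIntegral_ofReal_le_of_eq_sub ((integrable v₁ hv₁).sub (integrable v₂ hv₂))
    (measurableSet_ball.prod measurableSet_ball)
    (G := fun z => (sgnPow (p - 1) (v₁ z.1 - v₁ z.2) - sgnPow (p - 1) (v₂ z.1 - v₂ z.2)) *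
      ((η z.1 - η z.2) * (v₁ z.2 - v₂ z.2)) / dist z.1 z.2 ^ ((finrank ℝ E : ℝ) + s * p))
    (fun z _ => div_nonneg (mul_nonneg (hη.nonneg _)
      (sgnPow_sub_mul_sub_nonneg (sub_pos.mpr hp) _ _)) (by positivity))
    (fun z _ => ?_) (by fun_prop)).trans ?_
  · simp only [weakIntegrand, hwη, Pi.sub_apply]
    ring
  rw [add_assoc]
  refine add_le_add le_rfl ((add_le_add
    (hC₁ v₁ v₂ w m M t e hw.continuous.measurable hv₁ hv₂ ht ht₂ he hw₀)
    (hC₂ v₁ v₂ η (fun x => v₁ x - v₂ x) m M L t hv₁ hv₂ ht₂ hη.lipschitz (by fun_prop))).trans ?_)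
  calc C₁ * Λ * (eLpNorm' w p (volume.restrict (ball (0 : E) t)) * (M : ℝ≥0∞) ^ (p - 1)) +
        C₂ * L * (N * (M : ℝ≥0∞) ^ (p - 1))
      ≤ C₁ * Λ * (N * (M : ℝ≥0∞) ^ (p - 1)) + C₂ * L * (N * (M : ℝ≥0∞) ^ (p - 1)) +
          (C₁ * L + C₂ * Λ) * (N * (M : ℝ≥0∞) ^ (p - 1)) := le_add_right (by gcongr)
    _ = ↑(C₁ + C₂) * (L + Λ) * (N * (M : ℝ≥0∞) ^ (p - 1)) := by push_cast; ring

end Energy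

section Nirenberg

variable {p s t e m : ℝ} {L M : ℝ≥0}

lemma eLpNorm'_restrict_eq_of_eq_zero {α : Type*} [MeasurableSpace α] {μ : Measure α} {B : Set α}
    {w : α → ℝ} (hp : 0 < p) (hB : ∀ x ∉ B, w x = 0) :
    eLpNorm' w p (μ.restrict B) = eLpNorm' w p μ := by
  rw [eLpNorm'_eq_lintegral_enorm, eLpNorm'_eq_lintegral_enorm,
    setLIntegral_eq_of_support_subset fun x hx => by_contra fun hxB => hx ?_]
  simp [hB x hxB, hp]

lemma eLpNorm'_comp_sub_right {G : Type*} [AddGroup G] [MeasurableSpace G] [MeasurableAdd G]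
    (μ : Measure G) [μ.IsAddRightInvariant] (w : G → ℝ) (h : G) :
    eLpNorm' (fun x => w (x - h)) p μ = eLpNorm' w p μ := by
  rw [eLpNorm'_eq_lintegral_enorm, eLpNorm'_eq_lintegral_enorm,
    lintegral_sub_right_eq_self (fun x => ‖w x‖ₑ ^ p) h]

variable {E : Type*} [NormedAddCommGroup E] [NormedSpace ℝ E] {u f w η : E → ℝ}

section

variable [FiniteDimensional ℝ E]

lemma exists_lipschitzOnWith_closedBall {r : ℝ}
    (hu : ∀ x ∈ closedBall (0 : E) r, ContDiffAt ℝ 1 u x) :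
    ∃ L, LipschitzOnWith L u (closedBall (0 : E) r) := by
  refine LocallyLipschitzOn.exists_lipschitzOnWith_of_compact (isCompact_closedBall 0 r)
    fun x hx => ?_
  obtain ⟨L, T, hT, hL⟩ := (hu x hx).exists_lipschitzOnWith
  exact ⟨L, T, mem_nhdsWithin_of_mem_nhds hT, hL⟩

lemma IsCutoff.exists_lipschitzWith_mul_translate_sub {r : ℝ} (hη : IsCutoff η L r)
    (hu : ∀ x ∈ closedBall (0 : E) 2, ContDiffAt ℝ 1 u x) {h : E} (hrh : r + ‖h‖ ≤ 2) :
    ∃ L', LipschitzWith L' fun x => η x * (u (x + h) - u x) := by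
  obtain ⟨Lu, hLu⟩ := exists_lipschitzOnWith_closedBall hu
  have hmem : MapsTo (fun x => x + h) (closedBall 0 r) (closedBall 0 2) := fun x hx => by
    rw [mem_closedBall_zero_iff] at *
    linarith [norm_add_le x h]
  have hsub : closedBall (0 : E) r ⊆ closedBall 0 2 :=
    closedBall_subset_closedBall (by linarith [norm_nonneg h])
  have hδ : LipschitzOnWith (Lu * 1 + Lu) (fun x => u (x + h) - u x) (closedBall 0 r) :=
    (hLu.comp (isometry_add_right h).lipschitz.lipschitzOnWith hmem).sub (hLu.mono hsub)
  obtain ⟨K, hK⟩ := (isCompact_closedBall (0 : E) r).exists_bound_of_continuousOn hδ.continuousOn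
  refine ⟨_, lipschitzWith_mul_of_eq_zero_of_lipschitzOnWith (K := K.toNNReal) hη.lipschitz
    hη.abs_le_one (fun x hx => hη.eq_zero x ?_) hδ fun x hx => ?_⟩
  · simpa using hx
  · exact (hK x hx).trans (Real.le_coe_toNNReal K)

end

variable [MeasureSpace E]

lemma NormalizedSolution.enorm_integral_mul_le (hu : NormalizedSolution p s u f m M) (hp : 1 < p)
    (hw : Measurable w) (hw₀ : ∀ x ∉ ball (0 : E) 2, w x = 0) :
    ‖∫ x, f x * w x‖ₑ ≤ eLpNorm' w p volume * (M : ℝ≥0∞) ^ (p - 1) := by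
  have hp₁ : 0 < p - 1 := sub_pos.mpr hp
  have := hu.measurable_source
  have source : ∫⁻ x in ball (0 : E) 2, (‖f x‖ₑ ^ (1 / (p - 1))) ^ p ≤ (M : ℝ≥0∞) ^ p := by
    simpa only [← ENNReal.rpow_mul, one_div_mul_eq_div] using hu.source
  have holder := lintegral_mul_rpow_sub_one_le hp (g := fun x => ‖w x‖ₑ) (by fun_prop)
    (by fun_prop) source
  simp only [← ENNReal.rpow_mul, one_div_mul_cancel hp₁.ne', ENNReal.rpow_one] at holder
  rw [← eLpNorm'_eq_lintegral_enorm, eLpNorm'_restrict_eq_of_eq_zero (by linarith) hw₀] at holder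
  refine (enorm_integral_le_lintegral_enorm _).trans (le_of_eq_of_le ?_ holder)
  simp only [enorm_mul, mul_comm ‖w _‖ₑ]
  rw [setLIntegral_eq_of_support_subset fun x hx => by_contra fun hxB => hx ?_]
  simp [hw₀ x hxB]

variable [FiniteDimensional ℝ E] [BorelSpace E] [(volume : Measure E).IsAddHaarMeasure]

lemma NormalizedSolution.ofReal_integral_weakIntegrand_sub_le
    (hu : NormalizedSolution p s u f m M) (hp : 1 < p) {h : E}
    (hw : LipschitzWith L w) {r : ℝ} (hrh : r + ‖h‖ < 2) (hw₀ : ∀ x, r < ‖x‖ → w x = 0)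
    (hint : Integrable (weakIntegrand p s u w) ((volume : Measure E).prod volume))
    (hinth : Integrable (weakIntegrand p s (fun x => u (x + h)) w)
      ((volume : Measure E).prod volume)) :
    ENNReal.ofReal (∫ z, (weakIntegrand p s (fun x => u (x + h)) w z - weakIntegrand p s u w z)
        ∂(volume : Measure E).prod volume) ≤
      2 * (eLpNorm' w p volume * (M : ℝ≥0∞) ^ (p - 1)) := by
  have hwm := hw.continuous.measurable
  have hwh : LipschitzWith (L * 1) fun x => w (x - h) := by
    simpa only [sub_eq_add_neg, Function.comp_def] using
      hw.comp (isometry_add_right (-h)).lipschitz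
  have hwh₀ : ∀ x, r + ‖h‖ < ‖x‖ → w (x - h) = 0 := fun x hx =>
    hw₀ _ (by linarith [norm_sub_norm_le x h])
  have equation : ∫ z, weakIntegrand p s u w z ∂(volume : Measure E).prod volume =
      ∫ x, f x * w x := by
    rw [integral_prod _ hint, hu.integral_weakIntegrand w ⟨L, hw⟩
      ⟨r, by linarith [norm_nonneg h], hw₀⟩]
  have translated_equation :
      ∫ z, weakIntegrand p s (fun x => u (x + h)) w z ∂(volume : Measure E).prod volume =
      ∫ x, f x * w (x - h) := by
    rw [integral_prod _ hinth, ← hu.integral_weakIntegrand _ ⟨_, hwh⟩ ⟨_, hrh, hwh₀⟩,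
      ← integral_add_right_eq_self
        (fun x => ∫ y, weakIntegrand p s u (fun x => w (x - h)) (x, y)) h]
    congr! 2 with x
    rw [← integral_add_right_eq_self
      (fun y => weakIntegrand p s u (fun x => w (x - h)) (x + h, y)) h]
    simp only [weakIntegrand_comp_add_right, add_sub_cancel_right]
  have outside {a : ℝ} (ha : a < 2) : ∀ x ∉ ball (0 : E) 2, a < ‖x‖ := fun x hx => by
    rw [mem_ball_zero_iff, not_lt] at hx
    linarith
  have bound := hu.enorm_integral_mul_le hp hwm fun x hx =>
    hw₀ x (outside (by linarith [norm_nonneg h]) x hx)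
  have translated_bound := hu.enorm_integral_mul_le hp hwh.continuous.measurable fun x hx =>
    hwh₀ x (outside hrh x hx)
  rw [eLpNorm'_comp_sub_right] at translated_bound
  rw [integral_sub hinth hint, equation, translated_equation, two_mul]
  exact (Real.ofReal_le_enorm _).trans (enorm_sub_le.trans (add_le_add translated_bound bound))

lemma exists_differenceEnergy_translate_le (E : Type*) [NormedAddCommGroup E] [NormedSpace ℝ E]
    [FiniteDimensional ℝ E] [MeasureSpace E] [BorelSpace E]
    [(volume : Measure E).IsAddHaarMeasure] (hp : 1 < p) (hs : 0 < s) (hs₁ : s < 1) :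
    ∃ C : ℝ≥0, ∀ (u f η : E → ℝ) (m : ℝ) (M L : ℝ≥0) (h : E) (t e : ℝ),
      NormalizedSolution p s u f m M → 1 ≤ t → t ≤ 3 / 2 → 0 < e → ‖h‖ ≤ 1 / 2 →
      IsCutoff η L (t - e) →
      differenceEnergy p s (fun x => u (x + h)) u η t ≤
        C * (1 + L + ENNReal.ofReal ((2 / e) ^ ((finrank ℝ E : ℝ) + s * p))) *
          (eLpNorm' (fun x => u (x + h) - u x) p (volume.restrict (ball 0 t)) *
            (M : ℝ≥0∞) ^ (p - 1)) := by
  obtain ⟨C, hC⟩ := exists_differenceEnergy_le E hp hs hs₁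
  refine ⟨2 + C, fun u f η m M L h t e hu ht ht₂ he hh hη => ?_⟩
  have hp₀ : 0 < p := by linarith
  have hv₁ := hu.controlledOnBall_translate hp₀ hs ht hh (by linarith)
  have hv₂ : ControlledOnBall p s u m M t := by
    simpa using hu.controlledOnBall_translate hp₀ hs ht (h := 0) (by simp) (by simp; linarith)
  obtain ⟨L', hw⟩ := hη.exists_lipschitzWith_mul_translate_sub hu.contDiffAt (h := h)
    (by linarith)
  set w : E → ℝ := fun x => η x * (u (x + h) - u x)
  set N := eLpNorm' (fun x => u (x + h) - u x) p (volume.restrict (ball (0 : E) t))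
  set Λ := ENNReal.ofReal ((2 / e) ^ ((finrank ℝ E : ℝ) + s * p))
  have hw₀ : ∀ x, t - e < ‖x‖ → w x = 0 := fun x hx => by
    simp only [w, hη.eq_zero x hx, zero_mul]
  have hwN : eLpNorm' w p volume ≤ N := by
    rw [← eLpNorm'_restrict_eq_of_eq_zero (B := ball (0 : E) t) hp₀ fun x hx => hw₀ x ?_]
    · exact hη.eLpNorm'_mul_le hp₀.le _ _
    · rw [mem_ball_zero_iff, not_lt] at hx
      linarith
  have tested := hu.ofReal_integral_weakIntegrand_sub_le hp (h := h) hw (by linarith) hw₀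
    (hv₂.integrable_weakIntegrand hp hs hs₁ hw ht (by linarith) he hw₀)
    (hv₁.integrable_weakIntegrand hp hs hs₁ hw ht (by linarith) he hw₀)
  refine (hC _ u η w m M L L' t e hv₁ hv₂ ht (by linarith) he hη hw fun x => rfl).trans ?_
  calc ENNReal.ofReal (∫ z, (weakIntegrand p s (fun x => u (x + h)) w z -
          weakIntegrand p s u w z) ∂(volume : Measure E).prod volume) +
        C * (L + Λ) * (N * (M : ℝ≥0∞) ^ (p - 1))
      ≤ 2 * (N * (M : ℝ≥0∞) ^ (p - 1)) + C * (L + Λ) * (N * (M : ℝ≥0∞) ^ (p - 1)) := by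
        gcongr ?_ + _
        exact tested.trans (by gcongr)
    _ ≤ 2 * (N * (M : ℝ≥0∞) ^ (p - 1)) + C * (L + Λ) * (N * (M : ℝ≥0∞) ^ (p - 1)) +
          (C + 2 * (L + Λ)) * (N * (M : ℝ≥0∞) ^ (p - 1)) := le_self_add
    _ = ↑(2 + C) * (1 + L + Λ) * (N * (M : ℝ≥0∞) ^ (p - 1)) := by push_cast; ring

end Nirenberg

section SecondDifferences

lemma one_add_inv_add_rpow_le {a e : ℝ} (ha : 0 ≤ a) (he : 0 < e) (he₂ : e ≤ 2) :
    1 + (e⁻¹.toNNReal : ℝ≥0∞) + ENNReal.ofReal ((2 / e) ^ a) ≤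
      3 * ENNReal.ofReal ((2 / e) ^ (a + 1)) := by
  have hbase : 1 ≤ 2 / e := (one_le_div he).mpr he₂
  have one_le : (1 : ℝ≥0∞) ≤ ENNReal.ofReal ((2 / e) ^ (a + 1)) :=
    ENNReal.one_le_ofReal.mpr (Real.one_le_rpow hbase (by linarith))
  have inv_le : (e⁻¹.toNNReal : ℝ≥0∞) ≤ ENNReal.ofReal ((2 / e) ^ (a + 1)) := by
    refine ENNReal.ofReal_le_ofReal ?_
    calc e⁻¹ ≤ 2 / e := by rw [← one_div]; gcongr; exact one_le_two
      _ ≤ (2 / e) ^ (a + 1) := Real.self_le_rpow_of_one_le hbase (by linarith)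
  have rpow_le : ENNReal.ofReal ((2 / e) ^ a) ≤ ENNReal.ofReal ((2 / e) ^ (a + 1)) :=
    ENNReal.ofReal_le_ofReal (Real.rpow_le_rpow_of_exponent_le hbase (by linarith))
  exact (add_le_add_three one_le inv_le rpow_le).trans_eq (by ring)

variable {p s τ : ℝ}

section Integrals

variable {E : Type*} [NormedAddCommGroup E] [NormedSpace ℝ E] [FiniteDimensional ℝ E]
  [MeasurableSpace E] [BorelSpace E] {μ : Measure E} [μ.IsAddHaarMeasure] {u v₁ v₂ : E → ℝ}

lemma setLIntegral_ball_translate_sub_rpow_le (hp : 1 ≤ p) {R ρ : ℝ} {h : E}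
    (hu : ∀ x ∈ ball (0 : E) ρ, ContDiffAt ℝ 1 u x) (hRρ : R + ‖h‖ ≤ ρ) :
    ∫⁻ x in ball (0 : E) R, ‖u (x + h) - u x‖ₑ ^ p ∂μ ≤
      ‖h‖ₑ ^ p * ∫⁻ x in ball (0 : E) ρ, ‖fderiv ℝ u x‖ₑ ^ p ∂μ := by
  refine setLIntegral_enorm_sub_rpow_le hp measurableSet_ball hu fun x hx t ht => ?_
  rw [mem_ball_zero_iff] at *
  have : ‖t • h‖ ≤ ‖h‖ := by
    rw [norm_smul, Real.norm_of_nonneg ht.1]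
    exact mul_le_of_le_one_left (norm_nonneg h) ht.2
  linarith [norm_add_le x (t • h)]

lemma exists_setLIntegral_translate_sub_rpow_mul_fracKernel_le (μ : Measure E) [μ.IsAddHaarMeasure]
    (hp : 1 ≤ p) (hs : s < 1) :
    ∃ C : ℝ≥0, ∀ u : E → ℝ, Measurable u → ∀ (R σ ρ : ℝ) (h : E), 0 < σ → R + ‖h‖ + σ ≤ ρ →
      (∀ x ∈ ball (0 : E) ρ, ContDiffAt ℝ 1 u x) →
      ∫⁻ x in ball (0 : E) R, ∫⁻ ξ in ball (0 : E) σ,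
          ‖u (x + h) - u (x + ξ + h)‖ₑ ^ p * fracKernel (s * p) ξ ∂μ ∂μ ≤
        C * ENNReal.ofReal σ ^ (p - s * p) * ∫⁻ x in ball (0 : E) ρ, ‖fderiv ℝ u x‖ₑ ^ p ∂μ := by
  have hp₀ : 0 < p := by linarith
  obtain ⟨C, hC⟩ := exists_forall_lintegral_ball_fracKernel_le μ (σ := s * p - p) (by nlinarith)
  refine ⟨C, fun u meas R σ ρ h hσ hRρ hu => ?_⟩
  simp only [add_right_comm _ _ h]
  refine (setLIntegral_comp_add_right_le (T := ball 0 (R + ‖h‖)) (fun x hx => ?_) fun x =>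
    ∫⁻ ξ in ball (0 : E) σ, ‖u x - u (x + ξ)‖ₑ ^ p * fracKernel (s * p) ξ ∂μ).trans ?_
  · rw [mem_ball_zero_iff] at *
    linarith [norm_add_le x h]
  rw [lintegral_lintegral_swap (by fun_prop)]
  set Z := ∫⁻ x in ball (0 : E) ρ, ‖fderiv ℝ u x‖ₑ ^ p ∂μ
  calc ∫⁻ ξ in ball (0 : E) σ, ∫⁻ x in ball (0 : E) (R + ‖h‖),
          ‖u x - u (x + ξ)‖ₑ ^ p * fracKernel (s * p) ξ ∂μ ∂μ
      ≤ ∫⁻ ξ in ball (0 : E) σ, fracKernel (s * p - p) ξ * Z ∂μ := by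
        refine setLIntegral_mono' measurableSet_ball fun ξ hξ => ?_
        rw [mem_ball_zero_iff] at hξ
        rcases eq_or_ne ξ 0 with rfl | hξ₀
        · simp [ENNReal.zero_rpow_of_pos hp₀]
        rw [lintegral_mul_const' _ _ (fracKernel_ne_top _ _),
          ← enorm_rpow_mul_fracKernel p hξ₀, mul_right_comm]
        simp only [enorm_sub_rev (u _) (u (_ + ξ))]
        gcongr
        exact setLIntegral_ball_translate_sub_rpow_le hp hu (by linarith)
    _ = (∫⁻ ξ in ball (0 : E) σ, fracKernel (s * p - p) ξ ∂μ) * Z :=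
        lintegral_mul_const _ (measurable_fracKernel _)
    _ ≤ C * ENNReal.ofReal σ ^ (p - s * p) * Z := by
        rw [← neg_sub (s * p) p]
        gcongr ?_ * _
        exact hC σ hσ

lemma lintegral_lintegral_sub_sub_rpow_mul_fracKernel_le {ν₁ ν₂ : Measure E} [SFinite ν₂]
    (hp : 1 < p) (hτ : 0 < τ) (hv₁ : Measurable v₁) (hv₂ : Measurable v₂) :
    ∫⁻ x, ∫⁻ ξ, ‖(v₁ x - v₂ x) - (v₁ (x + ξ) - v₂ (x + ξ))‖ₑ ^ p * fracKernel (s * p) ξ ∂ν₂ ∂ν₁ ≤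
      ENNReal.ofReal (2 ^ p / min 1 (p - 1)) * (ENNReal.ofReal τ⁻¹ * (∫⁻ x, ∫⁻ ξ, ENNReal.ofReal
          ((sgnPow (p - 1) (v₁ x - v₁ (x + ξ)) - sgnPow (p - 1) (v₂ x - v₂ (x + ξ))) *
            ((v₁ x - v₁ (x + ξ)) - (v₂ x - v₂ (x + ξ)))) * fracKernel (s * p) ξ ∂ν₂ ∂ν₁) +
        ENNReal.ofReal τ *
          ((∫⁻ x, ∫⁻ ξ, ‖v₁ x - v₁ (x + ξ)‖ₑ ^ p * fracKernel (s * p) ξ ∂ν₂ ∂ν₁) +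
            ∫⁻ x, ∫⁻ ξ, ‖v₂ x - v₂ (x + ξ)‖ₑ ^ p * fracKernel (s * p) ξ ∂ν₂ ∂ν₁)) := by
  have := measurable_sgnPow (p - 1)
  set c := ENNReal.ofReal (2 ^ p / min 1 (p - 1))
  have hc : c ≠ ⊤ := ENNReal.ofReal_ne_top
  set W : E → E → ℝ≥0∞ := fun x ξ => ENNReal.ofReal
    ((sgnPow (p - 1) (v₁ x - v₁ (x + ξ)) - sgnPow (p - 1) (v₂ x - v₂ (x + ξ))) *
      ((v₁ x - v₁ (x + ξ)) - (v₂ x - v₂ (x + ξ)))) * fracKernel (s * p) ξ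
  have pointwise (x ξ : E) :
      ‖(v₁ x - v₂ x) - (v₁ (x + ξ) - v₂ (x + ξ))‖ₑ ^ p * fracKernel (s * p) ξ ≤
        c * (ENNReal.ofReal τ⁻¹ * W x ξ + ENNReal.ofReal τ *
          (‖v₁ x - v₁ (x + ξ)‖ₑ ^ p * fracKernel (s * p) ξ +
            ‖v₂ x - v₂ (x + ξ)‖ₑ ^ p * fracKernel (s * p) ξ)) := by
    rw [sub_sub_sub_comm]
    calc _ ≤ _ := mul_le_mul_left (enorm_sub_rpow_le hp hτ _ _) _
      _ = _ := by ring
  refine (lintegral_mono fun x => lintegral_mono fun ξ => pointwise x ξ).trans_eq ?_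
  have inner (x : E) : ∫⁻ ξ, c * (ENNReal.ofReal τ⁻¹ * W x ξ + ENNReal.ofReal τ *
      (‖v₁ x - v₁ (x + ξ)‖ₑ ^ p * fracKernel (s * p) ξ +
        ‖v₂ x - v₂ (x + ξ)‖ₑ ^ p * fracKernel (s * p) ξ)) ∂ν₂ =
      c * (ENNReal.ofReal τ⁻¹ * (∫⁻ ξ, W x ξ ∂ν₂) + ENNReal.ofReal τ *
        ((∫⁻ ξ, ‖v₁ x - v₁ (x + ξ)‖ₑ ^ p * fracKernel (s * p) ξ ∂ν₂) +
          ∫⁻ ξ, ‖v₂ x - v₂ (x + ξ)‖ₑ ^ p * fracKernel (s * p) ξ ∂ν₂)) := by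
    rw [lintegral_const_mul' _ _ hc, lintegral_add_left (by fun_prop),
      lintegral_const_mul' _ _ ENNReal.ofReal_ne_top,
      lintegral_const_mul' _ _ ENNReal.ofReal_ne_top, lintegral_add_left (by fun_prop)]
  simp only [inner]
  rw [lintegral_const_mul' _ _ hc, lintegral_add_left (by fun_prop),
    lintegral_const_mul' _ _ ENNReal.ofReal_ne_top,
    lintegral_const_mul' _ _ ENNReal.ofReal_ne_top, lintegral_add_left (by fun_prop)]

end Integrals

section Solutions

variable {E : Type*} [NormedAddCommGroup E] [NormedSpace ℝ E] [MeasureSpace E] [BorelSpace E]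
  [(volume : Measure E).IsAddHaarMeasure]

lemma setLIntegral_le_differenceEnergy {v₁ v₂ η : E → ℝ} {R σ t : ℝ} (hσ : 0 ≤ σ) (hRt : R + σ ≤ t)
    (hη : ∀ x ∈ ball (0 : E) R, η x = 1) :
    ∫⁻ x in ball (0 : E) R, ∫⁻ ξ in ball (0 : E) σ, ENNReal.ofReal
        ((sgnPow (p - 1) (v₁ x - v₁ (x + ξ)) - sgnPow (p - 1) (v₂ x - v₂ (x + ξ))) *
          ((v₁ x - v₁ (x + ξ)) - (v₂ x - v₂ (x + ξ)))) * fracKernel (s * p) ξ ≤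
      differenceEnergy p s v₁ v₂ η t := by
  refine le_trans ?_ (lintegral_mono_set (ball_subset_ball (by linarith : R ≤ t)))
  refine setLIntegral_mono' measurableSet_ball fun x hx => ?_
  have shift := setLIntegral_comp_add_right_le (ν := (volume : Measure E)) (S := ball 0 σ)
    (T := ball 0 t) (h := x) (fun ξ hξ => ?_) fun y => ENNReal.ofReal
      ((sgnPow (p - 1) (v₁ x - v₁ y) - sgnPow (p - 1) (v₂ x - v₂ y)) *
        ((v₁ x - v₁ y) - (v₂ x - v₂ y))) * fracKernel (s * p) (x - y)
  · simpa only [hη x hx, one_mul, add_comm _ x, sub_add_cancel_left, fracKernel_neg] using shift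
  · rw [mem_ball_zero_iff] at *
    linarith [norm_add_le ξ x]

lemma NormalizedSolution.eLpNorm'_fwdDiff_le [FiniteDimensional ℝ E] {u f : E → ℝ} {m : ℝ} {M : ℝ≥0}
    (hu : NormalizedSolution p s u f m M) (hp : 1 ≤ p) {h : E} {R ρ : ℝ} (hRρ : R + ‖h‖ ≤ ρ)
    (hρ : ρ ≤ 2) : eLpNorm' (fwdDiff h u) p (volume.restrict (ball 0 R)) ≤
      ‖h‖ₑ * eLpNorm' (fderiv ℝ u) p (volume.restrict (ball 0 ρ)) := by
  have hp₀ : 0 < p := by linarith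
  have bound := setLIntegral_ball_translate_sub_rpow_le (μ := volume) hp
    (fun x hx => hu.contDiffAt x (ball_subset_closedBall (ball_subset_ball hρ hx))) hRρ
  calc eLpNorm' (fwdDiff h u) p (volume.restrict (ball 0 R))
      ≤ (‖h‖ₑ ^ p * ∫⁻ x in ball (0 : E) ρ, ‖fderiv ℝ u x‖ₑ ^ p) ^ (1 / p) :=
        ENNReal.rpow_le_rpow bound (by positivity)
    _ = ‖h‖ₑ * eLpNorm' (fderiv ℝ u) p (volume.restrict (ball 0 ρ)) := by
        rw [ENNReal.mul_rpow_of_nonneg _ _ (by positivity), ← ENNReal.rpow_mul,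
          mul_one_div_cancel hp₀.ne', ENNReal.rpow_one, eLpNorm'_eq_lintegral_enorm]

end Solutions

lemma exists_setLIntegral_sgnPow_sub_mul_sub_le (E : Type*) [NormedAddCommGroup E] [NormedSpace ℝ E]
    [FiniteDimensional ℝ E] [MeasureSpace E] [BorelSpace E]
    [(volume : Measure E).IsAddHaarMeasure] (hp : 1 < p) (hs : 0 < s) (hs₁ : s < 1) :
    ∃ C : ℝ≥0, ∀ (u f : E → ℝ) (m : ℝ) (M : ℝ≥0) (h : E) (r e : ℝ),
      NormalizedSolution p s u f m M → 1 ≤ r → 0 < e → r + 4 * e ≤ 3 / 2 → ‖h‖ ≤ e / 2 →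
      ∫⁻ x in ball (0 : E) (r + ‖h‖), ∫⁻ ξ in ball (0 : E) ‖h‖, ENNReal.ofReal
        ((sgnPow (p - 1) (u (x + h) - u (x + ξ + h)) - sgnPow (p - 1) (u x - u (x + ξ))) *
          ((u (x + h) - u (x + ξ + h)) - (u x - u (x + ξ)))) * fracKernel (s * p) ξ ≤
      C * ENNReal.ofReal ((2 / e) ^ ((finrank ℝ E : ℝ) + s * p + 1)) * (‖h‖ₑ *
        eLpNorm' (fderiv ℝ u) p (volume.restrict (ball 0 (r + 4 * e))) * (M : ℝ≥0∞) ^ (p - 1)) := by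
  obtain ⟨C, hC⟩ := exists_differenceEnergy_translate_le E hp hs hs₁
  refine ⟨C * 3, fun u f m M h r e hu hr he hre hh => ?_⟩
  obtain ⟨η, hη, hη_one⟩ := exists_isCutoff (E := E) (show r + e < r + 2 * e by linarith)
  rw [show r + 2 * e - (r + e) = e by ring, show r + 2 * e = r + 3 * e - e by ring] at hη
  have energy := hC u f η m M _ h (r + 3 * e) e hu (by linarith) (by linarith) he (by linarith) hη
  refine (setLIntegral_le_differenceEnergy (v₁ := fun x => u (x + h)) (norm_nonneg h)
    (by linarith) fun x hx => hη_one x ?_).trans (energy.trans ?_)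
  · rw [mem_ball_zero_iff] at hx
    linarith
  · rw [ENNReal.coe_mul, ENNReal.coe_ofNat, mul_assoc (C : ℝ≥0∞) 3]
    gcongr
    · exact one_add_inv_add_rpow_le (by positivity) he (by linarith)
    · exact hu.eLpNorm'_fwdDiff_le hp.le (by linarith) (by linarith)

lemma exists_setLIntegral_fwdDiff_sub_fwdDiff_rpow_mul_fracKernel_le (E : Type*)
    [NormedAddCommGroup E] [NormedSpace ℝ E] [FiniteDimensional ℝ E] [MeasureSpace E]
    [BorelSpace E] [(volume : Measure E).IsAddHaarMeasure] (hp : 1 < p) (hs : 0 < s) (hs₁ : s < 1) :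
    ∃ C : ℝ≥0, ∀ (u f : E → ℝ) (m : ℝ) (M : ℝ≥0) (h : E) (r e τ : ℝ),
      NormalizedSolution p s u f m M → 1 ≤ r → 0 < e → r + 4 * e ≤ 3 / 2 → h ≠ 0 → ‖h‖ ≤ e / 2 →
      0 < τ →
      ∫⁻ x in ball (0 : E) (r + ‖h‖), ∫⁻ ξ in ball (0 : E) ‖h‖,
          ‖fwdDiff h u x - fwdDiff h u (x + ξ)‖ₑ ^ p * fracKernel (s * p) ξ ≤
        C * (ENNReal.ofReal τ⁻¹ *
          (ENNReal.ofReal ((2 / e) ^ ((finrank ℝ E : ℝ) + s * p + 1)) *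
            (‖h‖ₑ * eLpNorm' (fderiv ℝ u) p (volume.restrict (ball 0 (r + 4 * e))) *
              (M : ℝ≥0∞) ^ (p - 1))) +
          ENNReal.ofReal τ * (‖h‖ₑ ^ (p - s * p) *
            eLpNorm' (fderiv ℝ u) p (volume.restrict (ball 0 (r + 4 * e))) ^ p)) := by
  have hp₀ : 0 < p := by linarith
  obtain ⟨C₁, hC₁⟩ := exists_setLIntegral_sgnPow_sub_mul_sub_le E hp hs hs₁
  obtain ⟨C₂, hC₂⟩ := exists_setLIntegral_translate_sub_rpow_mul_fracKernel_le
    (volume : Measure E) hp.le hs₁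
  obtain ⟨c, hc⟩ : ∃ c : ℝ≥0, ENNReal.ofReal (2 ^ p / min 1 (p - 1)) = c := ⟨_, rfl⟩
  refine ⟨c * (C₁ + 2 * C₂), fun u f m M h r e τ hu hr he hre hh₀ hh hτ => ?_⟩
  set G := eLpNorm' (fderiv ℝ u) p (volume.restrict (ball (0 : E) (r + 4 * e)))
  have meas := hu.measurable
  have contDiffAt : ∀ x ∈ ball (0 : E) (r + 4 * e), ContDiffAt ℝ 1 u x := fun x hx =>
    hu.contDiffAt x (ball_subset_closedBall (ball_subset_ball (by linarith) hx))
  have energy := hC₁ u f m M h r e hu hr he hre hh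
  have frac {k : E} (hk : ‖k‖ ≤ ‖h‖) :
      ∫⁻ x in ball (0 : E) (r + ‖h‖), ∫⁻ ξ in ball (0 : E) ‖h‖,
        ‖u (x + k) - u (x + ξ + k)‖ₑ ^ p * fracKernel (s * p) ξ ≤
      C₂ * (‖h‖ₑ ^ (p - s * p) * G ^ p) := by
    have := hC₂ u meas (r + ‖h‖) ‖h‖ _ k (norm_pos_iff.mpr hh₀) (by linarith) contDiffAt
    rwa [lintegral_rpow_enorm_eq_rpow_eLpNorm' hp₀, ofReal_norm, mul_assoc] at this
  have frac_zero := frac (k := 0) (by simp)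
  simp only [add_zero] at frac_zero
  set Y := ENNReal.ofReal ((2 / e) ^ ((finrank ℝ E : ℝ) + s * p + 1)) *
    (‖h‖ₑ * G * (M : ℝ≥0∞) ^ (p - 1))
  set X := ‖h‖ₑ ^ (p - s * p) * G ^ p
  refine (lintegral_lintegral_sub_sub_rpow_mul_fracKernel_le (v₁ := fun x => u (x + h)) hp hτ
    (by fun_prop) meas).trans ?_
  rw [hc]
  calc _ ≤ c * (ENNReal.ofReal τ⁻¹ * (C₁ * Y) + ENNReal.ofReal τ * (C₂ * X + C₂ * X)) := by
        gcongr _ * (_ * ?_ + _ * ?_)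
        exacts [energy.trans_eq (mul_assoc _ _ _), add_le_add (frac le_rfl) frac_zero]
    _ ≤ c * (ENNReal.ofReal τ⁻¹ * (C₁ * Y) + ENNReal.ofReal τ * (C₂ * X + C₂ * X)) +
          c * (ENNReal.ofReal τ⁻¹ * (2 * C₂ * Y) + ENNReal.ofReal τ * (C₁ * X)) := le_self_add
    _ = ↑(c * (C₁ + 2 * C₂)) * (ENNReal.ofReal τ⁻¹ * Y + ENNReal.ofReal τ * X) := by
        push_cast
        ring

lemma exists_lintegral_enorm_fwdDiff_fwdDiff_rpow_le (E : Type*) [NormedAddCommGroup E]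
    [NormedSpace ℝ E] [FiniteDimensional ℝ E] [MeasureSpace E] [BorelSpace E]
    [(volume : Measure E).IsAddHaarMeasure] (hp : 1 < p) (hs : 0 < s) (hs₁ : s < 1) :
    ∃ C : ℝ≥0, ∀ (u f : E → ℝ) (m : ℝ) (M : ℝ≥0) (h : E) (r e τ : ℝ),
      NormalizedSolution p s u f m M → 1 ≤ r → 0 < e → r + 4 * e ≤ 3 / 2 → h ≠ 0 → ‖h‖ ≤ e / 2 →
      0 < τ →
      ∫⁻ x in ball (0 : E) r, ‖fwdDiff h (fwdDiff h u) x‖ₑ ^ p ≤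
        C * ‖h‖ₑ ^ (s * p) * (ENNReal.ofReal τ⁻¹ *
          (ENNReal.ofReal ((2 / e) ^ ((finrank ℝ E : ℝ) + s * p + 1)) *
            (‖h‖ₑ * eLpNorm' (fderiv ℝ u) p (volume.restrict (ball 0 (r + 4 * e))) *
              (M : ℝ≥0∞) ^ (p - 1))) +
          ENNReal.ofReal τ * (‖h‖ₑ ^ (p - s * p) *
            eLpNorm' (fderiv ℝ u) p (volume.restrict (ball 0 (r + 4 * e))) ^ p)) := by
  have hp₀ : 0 < p := by linarith
  obtain ⟨C₁, hC₁⟩ := exists_setLIntegral_enorm_sub_rpow_le_fracKernel (F := ℝ)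
    (volume : Measure E) (mul_nonneg hs.le hp₀.le) hp₀
  obtain ⟨C₂, hC₂⟩ := exists_setLIntegral_fwdDiff_sub_fwdDiff_rpow_mul_fracKernel_le E hp hs hs₁
  refine ⟨C₁ * C₂, fun u f m M h r e τ hu hr he hre hh₀ hh hτ => ?_⟩
  have meas := hu.measurable
  have meas_fwdDiff : Measurable (fwdDiff h u) := by unfold fwdDiff; fun_prop
  refine (hC₁ _ meas_fwdDiff h hh₀ r).trans ?_
  rw [ENNReal.coe_mul, mul_right_comm (C₁ : ℝ≥0∞) C₂, mul_assoc _ (C₂ : ℝ≥0∞)]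
  gcongr
  exact hC₂ u f m M h r e τ hu hr he hre hh₀ hh hτ

end SecondDifferences

section SecondDifferenceEstimate

variable {p s : ℝ}

lemma exists_young_absorb_le (hp : 1 < p) (C : ℝ≥0) {ε : ℝ≥0} (hε : 0 < ε) :
    ∃ ε₀ A : ℝ≥0, 0 < ε₀ ∧ ∀ Λ G M : ℝ≥0∞,
      C * (ε₀⁻¹ * (Λ * (G * M ^ (p - 1))) + ε₀ * G ^ p) ≤
        (ε * G + A * Λ ^ (1 / (p - 1)) * M) ^ p := by
  have hp₀ : 0 < p := by linarith
  have _ : 0 < p - 1 := sub_pos.mpr hp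
  have hεp : 0 < ε ^ p := NNReal.rpow_pos hε
  set ε₀ : ℝ≥0 := ε ^ p / (2 * C + 1)
  have hε₀ : 0 < ε₀ := div_pos hεp (by positivity)
  have small : (2 * (C * ε₀) : ℝ≥0∞) ≤ (ε : ℝ≥0∞) ^ p := by
    rw [← ENNReal.coe_rpow_of_nonneg _ hp₀.le]
    have : 2 * (C * ε₀) ≤ ε ^ p := by
      calc 2 * (C * ε₀) = ε ^ p * (2 * C / (2 * C + 1)) := by simp only [ε₀]; field_simp
        _ ≤ ε ^ p * 1 := by
          gcongr
          exact div_le_one_of_le₀ le_self_add (by positivity)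
        _ = ε ^ p := mul_one _
    exact_mod_cast this
  obtain ⟨q, hq⟩ : ∃ q : ℝ≥0, ε₀⁻¹ = ε₀ * q := ⟨ε₀⁻¹ * ε₀⁻¹, by field_simp⟩
  refine ⟨ε₀, ε * q ^ (1 / (p - 1)), hε₀, fun Λ G M => ?_⟩
  have young := enn_mul_mul_rpow_sub_one_le hp (q * Λ) G M
  calc (C : ℝ≥0∞) * ((ε₀⁻¹ : ℝ≥0) * (Λ * (G * M ^ (p - 1))) + ε₀ * G ^ p)
      = C * ε₀ * (q * Λ * G * M ^ (p - 1)) + C * ε₀ * G ^ p := by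
        rw [hq, ENNReal.coe_mul]
        ring
    _ ≤ C * ε₀ * (G ^ p + (q * Λ) ^ (p / (p - 1)) * M ^ p) + C * ε₀ * G ^ p := by gcongr
    _ = 2 * (C * ε₀) * G ^ p + C * ε₀ * ((q * Λ) ^ (p / (p - 1)) * M ^ p) := by ring
    _ ≤ (ε : ℝ≥0∞) ^ p * G ^ p + (ε : ℝ≥0∞) ^ p * ((q * Λ) ^ (p / (p - 1)) * M ^ p) :=
        add_le_add (mul_le_mul_left small _)
          (mul_le_mul_left (le_trans (by rw [two_mul]; exact le_self_add) small) _)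
    _ = (ε * G) ^ p + (ε * (q * Λ) ^ (1 / (p - 1)) * M) ^ p := by
        rw [ENNReal.mul_rpow_of_nonneg _ _ hp₀.le, ENNReal.mul_rpow_of_nonneg _ _ hp₀.le,
          ENNReal.mul_rpow_of_nonneg (ε : ℝ≥0∞) _ hp₀.le, ← ENNReal.rpow_mul,
          one_div_mul_eq_div, mul_assoc ((ε : ℝ≥0∞) ^ p)]
    _ ≤ (ε * G + ε * (q * Λ) ^ (1 / (p - 1)) * M) ^ p := ENNReal.add_rpow_le_rpow_add _ _ hp.le
    _ = (ε * G + (ε * q ^ (1 / (p - 1)) : ℝ≥0) * Λ ^ (1 / (p - 1)) * M) ^ p := by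
        rw [ENNReal.mul_rpow_of_nonneg _ _ (by positivity), ENNReal.coe_mul,
          ENNReal.coe_rpow_of_nonneg _ (by positivity), ← mul_assoc]

lemma ofReal_mul_norm_rpow {E : Type*} [NormedAddCommGroup E] {h : E} (hh : h ≠ 0) (b : ℝ≥0)
    (σ : ℝ) : ENNReal.ofReal (b * ‖h‖ ^ σ) = b * ‖h‖ₑ ^ σ := by
  rw [ENNReal.ofReal_mul b.coe_nonneg, ENNReal.ofReal_coe_nnreal,
    ← ENNReal.ofReal_rpow_of_pos (norm_pos_iff.mpr hh), ofReal_norm]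

lemma enorm_rpow_add_add {E : Type*} [NormedAddCommGroup E] {h : E} (hh : h ≠ 0) (a b c : ℝ)
    {d : ℝ} (hd : a + b + c = d) : ‖h‖ₑ ^ d = ‖h‖ₑ ^ a * (‖h‖ₑ ^ b * ‖h‖ₑ ^ c) := by
  have hh' := enorm_ne_zero.mpr hh
  rw [← hd, ENNReal.rpow_add _ _ hh' enorm_ne_top, ENNReal.rpow_add _ _ hh' enorm_ne_top, mul_assoc]

lemma exists_eLpNorm'_fwdDiff_fwdDiff_le (E : Type*) [NormedAddCommGroup E]
    [NormedSpace ℝ E] [FiniteDimensional ℝ E] [MeasureSpace E] [BorelSpace E]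
    [(volume : Measure E).IsAddHaarMeasure] (hp : 1 < p) (hs : 0 < s) (hs₁ : s < 1)
    (hsp : p - 1 < s * p) :
    ∃ γ > (0 : ℝ), ∃ κ : ℝ, ∀ ε : ℝ≥0, 0 < ε → ∃ A : ℝ≥0,
      ∀ (u f : E → ℝ) (m : ℝ) (M : ℝ≥0) (h : E) (r e : ℝ), NormalizedSolution p s u f m M →
      1 ≤ r → 0 < e → r + 4 * e ≤ 3 / 2 → h ≠ 0 → ‖h‖ ≤ e / 2 →
      eLpNorm' (fwdDiff h (fwdDiff h u)) p (volume.restrict (ball 0 r)) ≤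
        ‖h‖ₑ ^ (1 + γ) *
          (ε * eLpNorm' (fderiv ℝ u) p (volume.restrict (ball 0 (r + 4 * e))) +
            A * ENNReal.ofReal ((2 / e) ^ κ) * M) := by
  obtain ⟨C, hC⟩ := exists_lintegral_enorm_fwdDiff_fwdDiff_rpow_le E hp hs hs₁
  have hp₀ : 0 < p := by linarith
  have _ : 0 < p - 1 := sub_pos.mpr hp
  set β := (s * p + 1 - p) / 2 with hβ
  set a := (finrank ℝ E : ℝ) + s * p + 1
  refine ⟨β / p, div_pos (by linarith) hp₀, a / (p - 1), fun ε hε => ?_⟩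
  obtain ⟨ε₀, A, hε₀, absorb⟩ := exists_young_absorb_le hp C hε
  refine ⟨A, fun u f m M h r e hu hr he hre hh₀ hh => eLpNorm'_le_of_lintegral_rpow_le hp₀ ?_⟩
  have hhpos : 0 < ‖h‖ := norm_pos_iff.mpr hh₀
  -- The choice `τ = ε₀ ‖h‖ ^ β` balances the two powers of `‖h‖`.
  refine (hC u f m M h r e (ε₀ * ‖h‖ ^ β) hu hr he hre hh₀ hh (by positivity)).trans ?_
  set G := eLpNorm' (fderiv ℝ u) p (volume.restrict (ball (0 : E) (r + 4 * e)))
  have τ_inv : (ε₀ * ‖h‖ ^ β)⁻¹ = (ε₀⁻¹ : ℝ≥0) * ‖h‖ ^ (-β) := by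
    rw [mul_inv, Real.rpow_neg hhpos.le, NNReal.coe_inv]
  have powers_inv : ‖h‖ₑ ^ (s * p) * (‖h‖ₑ ^ (-β) * ‖h‖ₑ) = ‖h‖ₑ ^ (p + β) := by
    rw [enorm_rpow_add_add hh₀ (s * p) (-β) 1 (d := p + β) (by rw [hβ]; ring), ENNReal.rpow_one]
  have powers : ‖h‖ₑ ^ (s * p) * (‖h‖ₑ ^ β * ‖h‖ₑ ^ (p - s * p)) = ‖h‖ₑ ^ (p + β) :=
    (enorm_rpow_add_add hh₀ _ _ _ (by ring)).symm
  have Λ_rpow : ENNReal.ofReal ((2 / e) ^ a) ^ (1 / (p - 1)) =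
      ENNReal.ofReal ((2 / e) ^ (a / (p - 1))) := by
    rw [ENNReal.ofReal_rpow_of_nonneg (by positivity) (by positivity),
      ← Real.rpow_mul (by positivity), mul_one_div]
  rw [τ_inv, ofReal_mul_norm_rpow hh₀, ofReal_mul_norm_rpow hh₀]
  set Λ := ENNReal.ofReal ((2 / e) ^ a)
  calc C * ‖h‖ₑ ^ (s * p) * ((ε₀⁻¹ : ℝ≥0) * ‖h‖ₑ ^ (-β) * (Λ * (‖h‖ₑ * G * M ^ (p - 1))) +
        ε₀ * ‖h‖ₑ ^ β * (‖h‖ₑ ^ (p - s * p) * G ^ p))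
      = C * ((ε₀⁻¹ : ℝ≥0) * (‖h‖ₑ ^ (s * p) * (‖h‖ₑ ^ (-β) * ‖h‖ₑ)) * (Λ * (G * M ^ (p - 1))) +
          ε₀ * (‖h‖ₑ ^ (s * p) * (‖h‖ₑ ^ β * ‖h‖ₑ ^ (p - s * p))) * G ^ p) := by ring
    _ = ‖h‖ₑ ^ (p + β) * (C * ((ε₀⁻¹ : ℝ≥0) * (Λ * (G * M ^ (p - 1))) + ε₀ * G ^ p)) := by
        rw [powers_inv, powers]
        ring
    _ ≤ ‖h‖ₑ ^ (p + β) * (ε * G + A * Λ ^ (1 / (p - 1)) * M) ^ p := by gcongr; exact absorb Λ G M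
    _ = (‖h‖ₑ ^ (1 + β / p) * (ε * G + A * ENNReal.ofReal ((2 / e) ^ (a / (p - 1))) * M)) ^ p := by
        rw [ENNReal.mul_rpow_of_nonneg _ _ hp₀.le, ← ENNReal.rpow_mul, Λ_rpow, add_mul, one_mul,
          div_mul_cancel₀ _ hp₀.ne']

end SecondDifferenceEstimate

section DirectionalDerivative

variable {E F : Type*} [NormedAddCommGroup E] [NormedAddCommGroup F] {u : E → F}

lemma stronglyMeasurable_fwdDiff [MeasurableSpace E] [BorelSpace E]
    (hu : StronglyMeasurable u) (h : E) :
    StronglyMeasurable (fwdDiff h u) :=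
  (hu.comp_measurable (by fun_prop)).sub hu

variable [NormedSpace ℝ F]

lemma two_smul_fwdDiff_eq_sub (u : E → F) (h : E) :
    (2 : ℝ) • fwdDiff h u = fwdDiff (h + h) u - fwdDiff h (fwdDiff h u) := by
  ext x
  simp only [Pi.smul_apply, Pi.sub_apply, fwdDiff, ← add_assoc]
  module

lemma two_mul_eLpNorm'_fwdDiff_le [MeasurableSpace E] [BorelSpace E] {μ : Measure E} {p : ℝ}
    (hp : 1 ≤ p) (hu : StronglyMeasurable u) (h : E) :
    2 * eLpNorm' (fwdDiff h u) p μ ≤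
      eLpNorm' (fwdDiff (h + h) u) p μ + eLpNorm' (fwdDiff h (fwdDiff h u)) p μ := by
  have two_enorm : (2 : ℝ≥0∞) = ‖(2 : ℝ)‖ₑ := by
    rw [Real.enorm_eq_ofReal zero_le_two, ENNReal.ofReal_ofNat]
  rw [two_enorm, ← eLpNorm'_const_smul _ (by linarith), two_smul_fwdDiff_eq_sub,
    sub_eq_add_neg, ← eLpNorm'_neg (f := fwdDiff h (fwdDiff h u))]
  exact eLpNorm'_add_le (stronglyMeasurable_fwdDiff hu _).aestronglyMeasurable
    (stronglyMeasurable_fwdDiff (stronglyMeasurable_fwdDiff hu h) h).neg.aestronglyMeasurable hp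

variable [NormedSpace ℝ E]

lemma tendsto_two_pow_smul_fwdDiff {x : E} (hu : DifferentiableAt ℝ u x) (h : E) :
    Tendsto (fun j : ℕ => (2 : ℝ) ^ j • fwdDiff ((2⁻¹ : ℝ) ^ j • h) u x) atTop
      (𝓝 (fderiv ℝ u x h)) := by
  have slope := hasDerivAt_iff_tendsto_slope_zero.mp (hu.hasFDerivAt.hasLineDerivAt h)
  have step : Tendsto (fun j : ℕ => (2⁻¹ : ℝ) ^ j) atTop (𝓝[≠] 0) :=
    tendsto_nhdsWithin_iff.mpr ⟨tendsto_pow_atTop_nhds_zero_of_lt_one (by norm_num) (by norm_num),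
      Eventually.of_forall fun j => pow_ne_zero j (by norm_num)⟩
  refine (slope.comp step).congr fun j => ?_
  simp [fwdDiff]

lemma two_pow_mul_enorm_smul_rpow_le {γ : ℝ} (hγ : 0 ≤ γ) (h : E) (i : ℕ) :
    2 ^ i * ‖(2⁻¹ : ℝ) ^ (i + 1) • h‖ₑ ^ (1 + γ) ≤ ((2⁻¹ : ℝ≥0∞) ^ γ) ^ i * ‖h‖ₑ ^ (1 + γ) := by
  have half : ‖(2⁻¹ : ℝ) ^ (i + 1)‖ₑ = (2⁻¹ : ℝ≥0∞) ^ (i + 1) := by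
    rw [enorm_pow, Real.enorm_eq_ofReal (by norm_num), ENNReal.ofReal_inv_of_pos two_pos,
      ENNReal.ofReal_ofNat]
  have decay : ((2⁻¹ : ℝ≥0∞) ^ (i + 1)) ^ (1 + γ) ≤ 2⁻¹ ^ i * (2⁻¹ ^ γ) ^ i := by
    calc ((2⁻¹ : ℝ≥0∞) ^ (i + 1)) ^ (1 + γ) ≤ ((2⁻¹ : ℝ≥0∞) ^ i) ^ (1 + γ) := by
          refine ENNReal.rpow_le_rpow (pow_le_pow_of_le_one zero_le ?_ i.le_succ) (by linarith)
          simp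
      _ = 2⁻¹ ^ i * (2⁻¹ ^ γ) ^ i := by
          rw [ENNReal.rpow_add _ _ (by simp) (by simp), ENNReal.rpow_one, ← ENNReal.rpow_natCast,
            ← ENNReal.rpow_mul, ← ENNReal.rpow_natCast (_ ^ γ), ← ENNReal.rpow_mul,
            mul_comm (i : ℝ)]
  rw [enorm_smul, half, ENNReal.mul_rpow_of_nonneg _ _ (by linarith), ← mul_assoc]
  gcongr
  calc 2 ^ i * ((2⁻¹ : ℝ≥0∞) ^ (i + 1)) ^ (1 + γ) ≤ 2 ^ i * (2⁻¹ ^ i * (2⁻¹ ^ γ) ^ i) := by gcongr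
    _ = (2⁻¹ ^ γ) ^ i := by
        rw [← mul_assoc, ← mul_pow, ENNReal.mul_inv_cancel two_ne_zero ENNReal.ofNat_ne_top,
          one_pow, one_mul]

variable [MeasurableSpace E] [BorelSpace E] {p : ℝ} {μ : Measure E}

lemma two_pow_mul_eLpNorm'_fwdDiff_le (hp : 1 ≤ p) (hu : StronglyMeasurable u) (h : E) (j : ℕ) :
    2 ^ j * eLpNorm' (fwdDiff ((2⁻¹ : ℝ) ^ j • h) u) p μ ≤ eLpNorm' (fwdDiff h u) p μ +
      ∑ i ∈ Finset.range j, 2 ^ i * eLpNorm' (fwdDiff ((2⁻¹ : ℝ) ^ (i + 1) • h)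
        (fwdDiff ((2⁻¹ : ℝ) ^ (i + 1) • h) u)) p μ := by
  induction j with
  | zero => simp
  | succ j ih =>
    set k := (2⁻¹ : ℝ) ^ (j + 1) • h with hk
    have double : k + k = (2⁻¹ : ℝ) ^ j • h := by rw [hk, ← add_smul]; ring_nf
    rw [Finset.sum_range_succ, ← add_assoc]
    calc 2 ^ (j + 1) * eLpNorm' (fwdDiff k u) p μ
        = 2 ^ j * (2 * eLpNorm' (fwdDiff k u) p μ) := by ring
      _ ≤ 2 ^ j * (eLpNorm' (fwdDiff (k + k) u) p μ + eLpNorm' (fwdDiff k (fwdDiff k u)) p μ) := by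
          gcongr
          exact two_mul_eLpNorm'_fwdDiff_le hp hu k
      _ ≤ _ := by
          rw [mul_add, double]
          gcongr

lemma eLpNorm'_fderiv_apply_le (hp : 0 < p) (hu : StronglyMeasurable u)
    (hdiff : ∀ᵐ x ∂μ, DifferentiableAt ℝ u x) (h : E) {K : ℝ≥0∞}
    (hK : ∀ j : ℕ, 2 ^ j * eLpNorm' (fwdDiff ((2⁻¹ : ℝ) ^ j • h) u) p μ ≤ K) :
    eLpNorm' (fun x => fderiv ℝ u x h) p μ ≤ K := by
  have fatou := Lp.eLpNorm'_lim_le_liminf_eLpNorm' (μ := μ) hp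
    (f := fun j : ℕ => (2 : ℝ) ^ j • fwdDiff ((2⁻¹ : ℝ) ^ j • h) u)
    (fun j => ((stronglyMeasurable_fwdDiff hu _).const_smul _).aestronglyMeasurable)
    (hdiff.mono fun x hx => tendsto_two_pow_smul_fwdDiff hx h)
  refine fatou.trans (liminf_le_of_le (by isBoundedDefault) fun b hb => ?_)
  obtain ⟨j, hj⟩ := hb.exists
  refine hj.trans ((eLpNorm'_const_smul _ hp).trans_le ?_)
  rw [enorm_pow, Real.enorm_eq_ofReal zero_le_two, ENNReal.ofReal_ofNat]
  exact hK j

lemma eLpNorm'_fderiv_apply_le_of_fwdDiff_fwdDiff_le {γ : ℝ} (hp : 1 ≤ p) (hγ : 0 ≤ γ)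
    (hu : StronglyMeasurable u) (hdiff : ∀ᵐ x ∂μ, DifferentiableAt ℝ u x) (h : E) {Q : ℝ≥0∞}
    (hQ : ∀ j : ℕ, eLpNorm' (fwdDiff ((2⁻¹ : ℝ) ^ j • h) (fwdDiff ((2⁻¹ : ℝ) ^ j • h) u)) p μ ≤
      ‖(2⁻¹ : ℝ) ^ j • h‖ₑ ^ (1 + γ) * Q) :
    eLpNorm' (fun x => fderiv ℝ u x h) p μ ≤
      eLpNorm' (fwdDiff h u) p μ + (1 - 2⁻¹ ^ γ)⁻¹ * ‖h‖ₑ ^ (1 + γ) * Q := by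
  refine eLpNorm'_fderiv_apply_le (by linarith) hu hdiff h fun j =>
    (two_pow_mul_eLpNorm'_fwdDiff_le hp hu h j).trans ?_
  gcongr
  calc _ ≤ ∑ i ∈ Finset.range j, ((2⁻¹ : ℝ≥0∞) ^ γ) ^ i * (‖h‖ₑ ^ (1 + γ) * Q) := by
        refine Finset.sum_le_sum fun i _ => ?_
        grw [hQ (i + 1), ← mul_assoc, two_pow_mul_enorm_smul_rpow_le hγ, mul_assoc]
    _ ≤ (1 - 2⁻¹ ^ γ)⁻¹ * (‖h‖ₑ ^ (1 + γ) * Q) := by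
        rw [← Finset.sum_mul, ← ENNReal.tsum_geometric]
        gcongr
        exact ENNReal.sum_le_tsum _
    _ = _ := (mul_assoc _ _ _).symm

end DirectionalDerivative

section GradientEstimate

lemma exists_enorm_le_mul_sum_enorm_apply (E F : Type*) [NormedAddCommGroup E] [NormedSpace ℝ E]
    [FiniteDimensional ℝ E] [NormedAddCommGroup F] [NormedSpace ℝ F] :
    ∃ (b : Fin (finrank ℝ E) → E) (C : ℝ≥0), (∀ i, ‖b i‖ = 1) ∧
      ∀ φ : E →L[ℝ] F, ‖φ‖ₑ ≤ C * ∑ i, ‖φ (b i)‖ₑ := by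
  set v := finBasis ℝ E
  have hv (i) : ‖v i‖ ≠ 0 := norm_ne_zero_iff.mpr (v.ne_zero i)
  set b := v.isUnitSMul (w := fun i => ‖v i‖⁻¹) fun i => (inv_ne_zero (hv i)).isUnit
  obtain ⟨C, -, hC⟩ := b.exists_opNNNorm_le (F := F)
  refine ⟨b, C, fun i => ?_, fun φ => ?_⟩
  · rw [Basis.isUnitSMul_apply, norm_smul, norm_inv, norm_norm, inv_mul_cancel₀ (hv i)]
  · have bound : ‖φ‖₊ ≤ C * ∑ i, ‖φ (b i)‖₊ :=
      hC _ fun i => Finset.single_le_sum (f := fun i => ‖φ (b i)‖₊) (fun _ _ => zero_le)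
        (Finset.mem_univ i)
    simp only [enorm_eq_nnnorm]
    exact_mod_cast bound

lemma exists_eLpNorm'_le_mul_sum_eLpNorm'_apply (E F : Type*) [NormedAddCommGroup E]
    [NormedSpace ℝ E] [FiniteDimensional ℝ E] [NormedAddCommGroup F] [NormedSpace ℝ F] :
    ∃ (b : Fin (finrank ℝ E) → E) (C : ℝ≥0), (∀ i, ‖b i‖ = 1) ∧
      ∀ {X : Type*} [MeasurableSpace X] (μ : Measure X) (φ : X → E →L[ℝ] F) (p : ℝ), 1 ≤ p →
        (∀ i, AEStronglyMeasurable (fun x => φ x (b i)) μ) →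
        eLpNorm' φ p μ ≤ C * ∑ i, eLpNorm' (fun x => φ x (b i)) p μ := by
  obtain ⟨b, C, hb, hC⟩ := exists_enorm_le_mul_sum_enorm_apply E F
  refine ⟨b, C, hb, fun μ φ p hp hφ => ?_⟩
  have hp₀ : 0 < p := by linarith
  have pointwise (x) : ‖φ x‖ₑ ≤ ‖((C : ℝ) • ∑ i, fun x => ‖φ x (b i)‖) x‖ₑ := by
    refine (hC (φ x)).trans_eq ?_
    rw [Pi.smul_apply, enorm_smul, Finset.sum_apply, Real.enorm_eq_ofReal (by positivity),
      Real.enorm_eq_ofReal (by positivity), ENNReal.ofReal_sum_of_nonneg fun _ _ => norm_nonneg _,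
      ENNReal.ofReal_coe_nnreal]
    simp only [ofReal_norm]
  calc eLpNorm' φ p μ
      ≤ eLpNorm' ((C : ℝ) • ∑ i, fun x => ‖φ x (b i)‖) p μ :=
        eLpNorm'_mono_enorm_ae hp₀.le (.of_forall pointwise)
    _ = C * eLpNorm' (∑ i, fun x => ‖φ x (b i)‖) p μ := by
        rw [eLpNorm'_const_smul _ hp₀, Real.enorm_eq_ofReal C.coe_nonneg,
          ENNReal.ofReal_coe_nnreal]
    _ ≤ C * ∑ i, eLpNorm' (fun x => ‖φ x (b i)‖) p μ := by
        gcongr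
        exact eLpNorm'_sum_le (fun i _ => (hφ i).norm) hp
    _ = C * ∑ i, eLpNorm' (fun x => φ x (b i)) p μ := by simp only [eLpNorm'_norm]

lemma le_two_mul_of_le_mul_succ_add {z : ℕ → ℝ≥0∞} {ε θ B K : ℝ≥0∞} (hK : K ≠ ⊤)
    (hz : ∀ k, z k ≤ K) (hε : ε < 1) (hθ : ε * θ ≤ 2⁻¹)
    (step : ∀ k, z k ≤ ε * z (k + 1) + B * θ ^ k) : z 0 ≤ 2 * B := by
  have iterate (k : ℕ) : z 0 ≤ ε ^ k * z k + B * ∑ i ∈ Finset.range k, (ε * θ) ^ i := by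
    induction k with
    | zero => simp
    | succ k ih =>
      refine ih.trans ?_
      rw [Finset.sum_range_succ]
      grw [step k]
      exact le_of_eq (by ring)
  have geometric (k : ℕ) : ∑ i ∈ Finset.range k, (ε * θ) ^ i ≤ 2 :=
    calc ∑ i ∈ Finset.range k, (ε * θ) ^ i ≤ ∑ i ∈ Finset.range k, (2⁻¹ : ℝ≥0∞) ^ i := by gcongr
      _ ≤ ∑' i, (2⁻¹ : ℝ≥0∞) ^ i := ENNReal.sum_le_tsum _
      _ = 2 := by rw [ENNReal.tsum_geometric, ENNReal.one_sub_inv_two, inv_inv]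
  have bound (k : ℕ) : z 0 ≤ ε ^ k * K + 2 * B := by
    grw [iterate k, hz k, geometric k, mul_comm B]
  have limit : Tendsto (fun k : ℕ => ε ^ k * K + 2 * B) atTop (𝓝 (0 * K + 2 * B)) :=
    (ENNReal.Tendsto.mul_const (ENNReal.tendsto_pow_atTop_nhds_zero_of_lt_one hε)
      (.inr hK)).add tendsto_const_nhds
  rw [zero_mul, zero_add] at limit
  exact ge_of_tendsto' limit bound

lemma coe_mul_coe_div_add_one_le (c ε : ℝ≥0) : (c * (ε / (c + 1) : ℝ≥0) : ℝ≥0∞) ≤ ε := by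
  have : c * (ε / (c + 1)) ≤ ε := by
    rw [mul_div_assoc', div_le_iff₀ (by positivity), mul_comm]
    gcongr
    exact le_self_add
  exact_mod_cast this

lemma ofReal_div_mul_ofReal_div_rpow_le_one {a b γ : ℝ} (hγ : 0 ≤ γ) (ha : 0 < a) (hb : 0 < b)
    (hab : a ≤ b) : ENNReal.ofReal (b / a) * ENNReal.ofReal (a / b) ^ (1 + γ) ≤ 1 := by
  rw [ENNReal.ofReal_rpow_of_pos (by positivity), ← ENNReal.ofReal_mul (by positivity),
    ENNReal.ofReal_le_one, Real.rpow_add (by positivity), Real.rpow_one, ← mul_assoc,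
    div_mul_div_cancel₀ ha.ne', div_self hb.ne', one_mul]
  exact Real.rpow_le_one (by positivity) ((div_le_one hb).mpr hab) hγ

lemma ofReal_two_div_two_inv_pow_rpow (κ : ℝ) (k : ℕ) :
    ENNReal.ofReal ((2 / 2⁻¹ ^ (k + 4)) ^ κ) =
      (32 ^ κ : ℝ≥0) * ((2 ^ κ : ℝ≥0) : ℝ≥0∞) ^ k := by
  have ratio : (2 / 2⁻¹ ^ (k + 4) : ℝ) = 32 * 2 ^ k := by
    rw [inv_pow, div_inv_eq_mul]
    ring
  have power : ((32 * 2 ^ k) ^ κ : ℝ) = ((32 ^ κ * (2 ^ κ) ^ k : ℝ≥0) : ℝ) := by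
    push_cast
    rw [Real.mul_rpow (by norm_num) (by positivity), ← Real.rpow_natCast, ← Real.rpow_natCast,
      ← Real.rpow_mul zero_le_two, ← Real.rpow_mul zero_le_two, mul_comm κ]
  rw [ratio, power, ENNReal.ofReal_coe_nnreal]
  push_cast
  rfl

variable {p s : ℝ}

section

variable {E : Type*} [NormedAddCommGroup E] [NormedSpace ℝ E] [MeasureSpace E] [BorelSpace E]
  {u f : E → ℝ} {m : ℝ} {M : ℝ≥0}

lemma NormalizedSolution.eLpNorm'_fwdDiff_le_two_mul [(volume : Measure E).IsAddHaarMeasure]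
    (hu : NormalizedSolution p s u f m M) (hp : 1 ≤ p) {h : E} {r : ℝ} (hr : r + ‖h‖ ≤ 2) :
    eLpNorm' (fwdDiff h u) p (volume.restrict (ball 0 r)) ≤ 2 * M := by
  have hp₀ : 0 < p := by linarith
  have meas := hu.measurable
  have base : eLpNorm' (fun x => u x - m) p (volume.restrict (ball 0 r)) ≤ M :=
    (eLpNorm'_mono_measure _ (Measure.restrict_mono (ball_subset_ball
      (by linarith [norm_nonneg h])) le_rfl) hp₀.le).trans
      (eLpNorm'_le_of_lintegral_rpow_le hp₀ hu.lintegral_sub)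
  have shifted : eLpNorm' (fun x => u (x + h) - m) p (volume.restrict (ball 0 r)) ≤ M := by
    refine eLpNorm'_le_of_lintegral_rpow_le hp₀ ((setLIntegral_comp_add_right_le (fun x hx => ?_)
      fun x => ‖u x - m‖ₑ ^ p).trans hu.lintegral_sub)
    rw [mem_ball_zero_iff] at hx ⊢
    linarith [norm_add_le x h]
  have split : fwdDiff h u = (fun x => u (x + h) - m) + -fun x => u x - m := by
    ext x
    simp [fwdDiff]
  rw [split, two_mul]
  refine (eLpNorm'_add_le ?_ ?_ hp).trans (add_le_add shifted ?_)
  · exact Measurable.aestronglyMeasurable (by fun_prop)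
  · exact Measurable.aestronglyMeasurable (by fun_prop)
  · rwa [eLpNorm'_neg]

lemma NormalizedSolution.eLpNorm'_fderiv_ne_top [FiniteDimensional ℝ E]
    [(volume : Measure E).IsAddHaarMeasure] (hu : NormalizedSolution p s u f m M) (hp : 0 < p) :
    eLpNorm' (fderiv ℝ u) p (volume.restrict (ball 0 2)) ≠ ⊤ := by
  obtain ⟨L, hL⟩ := exists_lipschitzOnWith_closedBall hu.contDiffAt
  have bound : ∀ᵐ x ∂volume.restrict (ball (0 : E) 2), ‖fderiv ℝ u x‖ ≤ ‖(L : ℝ)‖ := by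
    refine (ae_restrict_mem measurableSet_ball).mono fun x hx => ?_
    rw [NNReal.norm_eq]
    exact norm_fderiv_le_of_lipschitzOn ℝ (closedBall_mem_nhds_of_mem hx) hL
  refine ne_top_of_le_ne_top ?_ (eLpNorm'_mono_ae hp.le bound)
  rw [eLpNorm'_const _ hp, Measure.restrict_apply_univ]
  exact ENNReal.mul_ne_top enorm_ne_top
    (ENNReal.rpow_ne_top_of_nonneg (by positivity) measure_ball_lt_top.ne)

end

variable (E : Type*) [NormedAddCommGroup E] [NormedSpace ℝ E] [FiniteDimensional ℝ E]
  [MeasureSpace E] [BorelSpace E] [(volume : Measure E).IsAddHaarMeasure]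

lemma exists_eLpNorm'_fderiv_apply_le (hp : 1 < p) (hs : 0 < s) (hs₁ : s < 1)
    (hsp : p - 1 < s * p) :
    ∃ γ > (0 : ℝ), ∃ κ : ℝ, ∀ ε : ℝ≥0, 0 < ε → ∃ A : ℝ≥0,
      ∀ (u f : E → ℝ) (m : ℝ) (M : ℝ≥0) (h : E) (r e : ℝ), NormalizedSolution p s u f m M →
      1 ≤ r → 0 < e → r + 4 * e ≤ 3 / 2 → h ≠ 0 → ‖h‖ ≤ e / 2 →
      eLpNorm' (fun x => fderiv ℝ u x h) p (volume.restrict (ball 0 r)) ≤ 2 * M + ‖h‖ₑ ^ (1 + γ) *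
        (ε * eLpNorm' (fderiv ℝ u) p (volume.restrict (ball 0 (r + 4 * e))) +
          A * ENNReal.ofReal ((2 / e) ^ κ) * M) := by
  obtain ⟨γ, hγ, κ, hκ⟩ := exists_eLpNorm'_fwdDiff_fwdDiff_le E hp hs hs₁ hsp
  have two_inv_lt : (2⁻¹ : ℝ≥0∞) ^ γ < 1 := ENNReal.rpow_lt_one (by simp) hγ
  lift (1 - (2⁻¹ : ℝ≥0∞) ^ γ)⁻¹ to ℝ≥0 using
    ENNReal.inv_ne_top.mpr (tsub_pos_of_lt two_inv_lt).ne' with c hc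
  refine ⟨γ, hγ, κ, fun ε hε => ?_⟩
  obtain ⟨A, hA⟩ := hκ (ε / (c + 1)) (by positivity)
  refine ⟨c * A, fun u f m M h r e hu hr he hre hh₀ hh => ?_⟩
  have hdiff : ∀ᵐ x ∂volume.restrict (ball (0 : E) r), DifferentiableAt ℝ u x :=
    (ae_restrict_mem measurableSet_ball).mono fun x hx => (hu.contDiffAt x (ball_subset_closedBall
      (ball_subset_ball (by linarith) hx))).differentiableAt one_ne_zero
  have norm_step (j : ℕ) : ‖(2⁻¹ : ℝ) ^ j • h‖ ≤ e / 2 := by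
    rw [norm_smul, norm_pow, norm_inv, Real.norm_ofNat]
    exact (mul_le_of_le_one_left (norm_nonneg h)
      (pow_le_one₀ (by norm_num) (by norm_num))).trans hh
  have first := hu.eLpNorm'_fwdDiff_le_two_mul hp.le (h := h) (r := r) (by linarith)
  have limit := eLpNorm'_fderiv_apply_le_of_fwdDiff_fwdDiff_le hp.le hγ.le
    hu.measurable.stronglyMeasurable hdiff h fun j => hA u f m M _ r e hu hr he hre
      (smul_ne_zero (pow_ne_zero j (by norm_num)) hh₀) (norm_step j)
  rw [← hc] at limit
  set G := eLpNorm' (fderiv ℝ u) p (volume.restrict (ball (0 : E) (r + 4 * e)))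
  grw [limit, first, ← coe_mul_coe_div_add_one_le c ε, ENNReal.coe_mul]
  exact le_of_eq (by ring)

lemma exists_eLpNorm'_fderiv_apply_le_of_norm_eq_one (hp : 1 < p) (hs : 0 < s) (hs₁ : s < 1)
    (hsp : p - 1 < s * p) :
    ∃ κ ≥ (0 : ℝ), ∀ ε : ℝ≥0, 0 < ε → ∃ A : ℝ≥0,
      ∀ (u f : E → ℝ) (m : ℝ) (M : ℝ≥0) (b : E) (r e : ℝ), NormalizedSolution p s u f m M →
      ‖b‖ = 1 → 1 ≤ r → 0 < e → r + 4 * e ≤ 3 / 2 →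
      eLpNorm' (fun x => fderiv ℝ u x b) p (volume.restrict (ball 0 r)) ≤
        ε * eLpNorm' (fderiv ℝ u) p (volume.restrict (ball 0 (r + 4 * e))) +
          A * ENNReal.ofReal ((2 / e) ^ κ) * M := by
  obtain ⟨γ, hγ, κ, hκ⟩ := exists_eLpNorm'_fderiv_apply_le E hp hs hs₁ hsp
  refine ⟨max κ 1, by positivity, fun ε hε => ?_⟩
  obtain ⟨A, hA⟩ := hκ ε hε
  refine ⟨2 + A, fun u f m M b r e hu hb hr he hre => ?_⟩
  have he₂ : 1 ≤ 2 / e := (one_le_div he).mpr (by linarith)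
  have norm_h : ‖(e / 2) • b‖ = e / 2 := by
    rw [norm_smul, hb, mul_one, Real.norm_of_nonneg (by positivity)]
  have enorm_h : ‖(e / 2) • b‖ₑ = ENNReal.ofReal (e / 2) := by rw [← ofReal_norm, norm_h]
  have bound := hA u f m M ((e / 2) • b) r e hu hr he hre
    (by rw [← norm_pos_iff, norm_h]; positivity) norm_h.le
  have apply_eq : (fun x => fderiv ℝ u x b) = (2 / e) • fun x => fderiv ℝ u x ((e / 2) • b) := by
    ext x
    rw [Pi.smul_apply, map_smul, smul_smul, div_mul_div_cancel₀ he.ne', div_self two_ne_zero,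
      one_smul]
  have two_div_le : ENNReal.ofReal (2 / e) ≤ ENNReal.ofReal ((2 / e) ^ max κ 1) :=
    ENNReal.ofReal_le_ofReal (Real.self_le_rpow_of_one_le he₂ (le_max_right _ _))
  have power_le : ENNReal.ofReal ((2 / e) ^ κ) ≤ ENNReal.ofReal ((2 / e) ^ max κ 1) :=
    ENNReal.ofReal_le_ofReal (Real.rpow_le_rpow_of_exponent_le he₂ (le_max_left _ _))
  set G := eLpNorm' (fderiv ℝ u) p (volume.restrict (ball (0 : E) (r + 4 * e)))
  set Λ := ENNReal.ofReal ((2 / e) ^ max κ 1)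
  rw [apply_eq, eLpNorm'_const_smul _ (by linarith), Real.enorm_eq_ofReal (by positivity)]
  calc ENNReal.ofReal (2 / e) * eLpNorm' (fun x => fderiv ℝ u x ((e / 2) • b)) p _
      ≤ ENNReal.ofReal (2 / e) * (2 * M + ENNReal.ofReal (e / 2) ^ (1 + γ) *
          (ε * G + A * ENNReal.ofReal ((2 / e) ^ κ) * M)) := by
        gcongr
        exact bound.trans_eq (by rw [enorm_h])
    _ = ENNReal.ofReal (2 / e) * (2 * M) + ENNReal.ofReal (2 / e) *
          ENNReal.ofReal (e / 2) ^ (1 + γ) * (ε * G + A * ENNReal.ofReal ((2 / e) ^ κ) * M) := by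
        ring
    _ ≤ Λ * (2 * M) + 1 * (ε * G + A * Λ * M) := by
        gcongr
        exact ofReal_div_mul_ofReal_div_rpow_le_one hγ.le he two_pos (by linarith)
    _ = ε * G + (2 + A : ℝ≥0) * Λ * M := by
        push_cast
        ring

lemma exists_eLpNorm'_fderiv_le (hp : 1 < p) (hs : 0 < s) (hs₁ : s < 1) (hsp : p - 1 < s * p) :
    ∃ κ ≥ (0 : ℝ), ∀ ε : ℝ≥0, 0 < ε → ∃ A : ℝ≥0,
      ∀ (u f : E → ℝ) (m : ℝ) (M : ℝ≥0) (r e : ℝ), NormalizedSolution p s u f m M →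
      1 ≤ r → 0 < e → r + 4 * e ≤ 3 / 2 →
      eLpNorm' (fderiv ℝ u) p (volume.restrict (ball 0 r)) ≤
        ε * eLpNorm' (fderiv ℝ u) p (volume.restrict (ball 0 (r + 4 * e))) +
          A * ENNReal.ofReal ((2 / e) ^ κ) * M := by
  obtain ⟨κ, hκ₀, hκ⟩ := exists_eLpNorm'_fderiv_apply_le_of_norm_eq_one E hp hs hs₁ hsp
  obtain ⟨b, C, hb, hC⟩ := exists_eLpNorm'_le_mul_sum_eLpNorm'_apply E ℝ
  set N : ℝ≥0 := C * finrank ℝ E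
  refine ⟨κ, hκ₀, fun ε hε => ?_⟩
  obtain ⟨A, hA⟩ := hκ (ε / (N + 1)) (by positivity)
  refine ⟨N * A, fun u f m M r e hu hr he hre => ?_⟩
  set G := eLpNorm' (fderiv ℝ u) p (volume.restrict (ball (0 : E) (r + 4 * e)))
  set Λ := ENNReal.ofReal ((2 / e) ^ κ)
  calc eLpNorm' (fderiv ℝ u) p (volume.restrict (ball 0 r))
      ≤ C * ∑ i, eLpNorm' (fun x => fderiv ℝ u x (b i)) p (volume.restrict (ball 0 r)) :=
        hC _ _ p hp.le fun i => (measurable_fderiv_apply_const ℝ u _).aestronglyMeasurable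
    _ ≤ C * ∑ _i : Fin (finrank ℝ E), ((ε / (N + 1) : ℝ≥0) * G + A * Λ * M) := by
        gcongr with i
        exact hA u f m M (b i) r e hu (hb i) hr he hre
    _ = (N * (ε / (N + 1) : ℝ≥0)) * G + (N * A : ℝ≥0) * Λ * M := by
        rw [Finset.sum_const, Finset.card_univ, Fintype.card_fin, nsmul_eq_mul]
        simp only [N]
        push_cast
        ring
    _ ≤ ε * G + (N * A : ℝ≥0) * Λ * M := by
        gcongr
        exact coe_mul_coe_div_add_one_le N ε

theorem exists_eLpNorm'_fderiv_ball_one_le (hp : 1 < p) (hs : 0 < s) (hs₁ : s < 1)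
    (hsp : p - 1 < s * p) :
    ∃ C : ℝ≥0, ∀ (u f : E → ℝ) (m : ℝ) (M : ℝ≥0), NormalizedSolution p s u f m M →
      eLpNorm' (fderiv ℝ u) p (volume.restrict (ball 0 1)) ≤ C * M := by
  obtain ⟨κ, hκ₀, hκ⟩ := exists_eLpNorm'_fderiv_le E hp hs hs₁ hsp
  set ε : ℝ≥0 := 2 ^ (-κ - 1)
  have hε : ε < 1 := NNReal.rpow_lt_one_of_one_lt_of_neg one_lt_two (by linarith)
  have hεθ : (ε * (2 ^ κ : ℝ≥0) : ℝ≥0∞) ≤ 2⁻¹ := by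
    have : ε * 2 ^ κ = 2⁻¹ := by
      rw [← NNReal.rpow_add two_ne_zero, show -κ - 1 + κ = -1 by ring, NNReal.rpow_neg_one]
    rw [← ENNReal.coe_mul, this, ENNReal.coe_inv two_ne_zero, ENNReal.coe_ofNat]
  obtain ⟨A, hA⟩ := hκ ε (NNReal.rpow_pos two_pos)
  refine ⟨2 * (A * 32 ^ κ), fun u f m M hu => ?_⟩
  set r : ℕ → ℝ := fun k => 3 / 2 - 2⁻¹ ^ (k + 1)
  have r_succ (k : ℕ) : r k + 4 * 2⁻¹ ^ (k + 4) = r (k + 1) := by simp only [r]; ring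
  have one_le_r (k : ℕ) : 1 ≤ r k := by
    have : (2⁻¹ : ℝ) ^ k ≤ 1 := pow_le_one₀ (by norm_num) (by norm_num)
    simp only [r, pow_succ]
    linarith
  have r_le (k : ℕ) : r k ≤ 3 / 2 := sub_le_self _ (by positivity)
  have iteration := le_two_mul_of_le_mul_succ_add
    (z := fun k => eLpNorm' (fderiv ℝ u) p (volume.restrict (ball 0 (r k)))) (θ := (2 ^ κ : ℝ≥0))
    (B := (A * 32 ^ κ : ℝ≥0) * M) (hu.eLpNorm'_fderiv_ne_top (by linarith))
    (fun k => eLpNorm'_mono_measure _ (Measure.restrict_mono (ball_subset_ball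
      ((r_le k).trans (by norm_num))) le_rfl) (by linarith)) (by exact_mod_cast hε) hεθ fun k => ?_
  · norm_num [r] at iteration
    refine iteration.trans_eq ?_
    push_cast
    ring
  · have step := hA u f m M (r k) (2⁻¹ ^ (k + 4)) hu (one_le_r k) (by positivity)
      ((r_succ k).trans_le (r_le _))
    rw [r_succ, ofReal_two_div_two_inv_pow_rpow] at step
    refine step.trans_eq ?_
    push_cast
    ring

end GradientEstimate

section Normalization

lemma enorm_sub_setAverage_le {α F : Type*} [MeasurableSpace α] {μ : Measure α}
    [NormedAddCommGroup F] [NormedSpace ℝ F] [CompleteSpace F] {S : Set α} (h₀ : μ S ≠ 0)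
    (hS : μ S ≠ ⊤) {u : α → F} (hu : IntegrableOn u S μ) (a : F) :
    ‖a - ⨍ y in S, u y ∂μ‖ₑ ≤ (μ S)⁻¹ * ∫⁻ y in S, ‖a - u y‖ₑ ∂μ := by
  have : NeZero (μ S) := ⟨h₀⟩
  have : Fact (μ S < ⊤) := ⟨hS.lt_top⟩
  have average : a - ⨍ y in S, u y ∂μ = ⨍ y in S, (a - u y) ∂μ := by
    rw [setAverage_eq, setAverage_eq, integral_sub (integrable_const a) hu, setIntegral_const,
      smul_sub, smul_smul, inv_mul_cancel₀ ((measureReal_ne_zero_iff hS).mpr h₀), one_smul]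
  rw [average]
  refine (enorm_integral_le_lintegral_enorm _).trans_eq ?_
  rw [lintegral_smul_measure, Measure.restrict_apply_univ, smul_eq_mul]

variable {E : Type*} [NormedAddCommGroup E] [NormedSpace ℝ E]

section

variable [MeasurableSpace E] {μ : Measure E} {p σ : ℝ}

lemma lintegral_enorm_sub_setAverage_rpow_le (hp : 1 ≤ p) (hσ : 0 ≤ σ) {S : Set E}
    (hS : MeasurableSet S) (h₀ : μ S ≠ 0) (hfin : μ S ≠ ⊤) {d : ℝ}
    (hd : ∀ x ∈ S, ∀ y ∈ S, ‖x - y‖ ≤ d) {u : E → ℝ} (hu : Measurable u)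
    (hint : IntegrableOn u S μ) :
    ∫⁻ x in S, ‖u x - ⨍ y in S, u y ∂μ‖ₑ ^ p ∂μ ≤
      (μ S)⁻¹ * ENNReal.ofReal d ^ ((finrank ℝ E : ℝ) + σ) *
        ∫⁻ x in S, (∫⁻ y in S, ‖u x - u y‖ₑ ^ p * fracKernel σ (x - y) ∂μ) ∂μ := by
  have hp₀ : 0 < p := by linarith
  set D := ENNReal.ofReal d ^ ((finrank ℝ E : ℝ) + σ)
  have hD : D ≠ ⊤ := ENNReal.rpow_ne_top_of_nonneg (by positivity) ENNReal.ofReal_ne_top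
  have kernel_bound (x) (hx : x ∈ S) (y) (hy : y ∈ S) :
      ‖u x - u y‖ₑ ^ p ≤ D * (‖u x - u y‖ₑ ^ p * fracKernel σ (x - y)) := by
    rcases eq_or_ne x y with rfl | hxy
    · simp [ENNReal.zero_rpow_of_pos hp₀]
    rw [mul_left_comm]
    exact le_mul_of_one_le_right'
      (one_le_ofReal_rpow_mul_fracKernel hσ (sub_ne_zero.mpr hxy) (hd x hx y hy))
  rw [← lintegral_const_mul' _ _ (ENNReal.mul_ne_top (ENNReal.inv_ne_top.mpr h₀) hD)]
  refine setLIntegral_mono' hS fun x hx => ?_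
  calc ‖u x - ⨍ y in S, u y ∂μ‖ₑ ^ p
      ≤ ((μ S)⁻¹ * ∫⁻ y in S, ‖u x - u y‖ₑ ∂μ) ^ p := by
        gcongr
        exact enorm_sub_setAverage_le h₀ hfin hint (u x)
    _ ≤ (μ S)⁻¹ ^ p * (μ S ^ (p - 1) * ∫⁻ y in S, ‖u x - u y‖ₑ ^ p ∂μ) := by
        rw [ENNReal.mul_rpow_of_nonneg _ _ hp₀.le]
        gcongr
        exact (rpow_lintegral_le_measure_univ_rpow_mul hp (by fun_prop)).trans_eq
          (by rw [Measure.restrict_apply_univ])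
    _ = (μ S)⁻¹ * ∫⁻ y in S, ‖u x - u y‖ₑ ^ p ∂μ := by
        rw [← mul_assoc, ENNReal.inv_rpow, ← ENNReal.rpow_neg, ← ENNReal.rpow_add _ _ h₀ hfin,
          show -p + (p - 1) = -1 by ring, ENNReal.rpow_neg_one]
    _ ≤ (μ S)⁻¹ * (D * ∫⁻ y in S, ‖u x - u y‖ₑ ^ p * fracKernel σ (x - y) ∂μ) := by
        rw [← lintegral_const_mul' _ _ hD]
        gcongr _ * ?_
        exact setLIntegral_mono' hS (kernel_bound x hx)
    _ = _ := by rw [mul_assoc]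

lemma lintegral_compl_ball_rpow_mul_fracKernel_le [BorelSpace E] (hp : 1 < p) (hσ : 0 ≤ σ) {r R : ℝ}
    (hr : 0 < r) {u : E → ℝ} (hu : Measurable u) {D : ℝ≥0∞}
    (hD : ∫⁻ x in ball (0 : E) R, ‖u x‖ₑ ^ p ∂μ ≤ D ^ p) :
    ∫⁻ x in (ball (0 : E) r)ᶜ, ‖u x‖ₑ ^ (p - 1) * fracKernel σ x ∂μ ≤
      (∫⁻ x in (ball (0 : E) R)ᶜ, ‖u x‖ₑ ^ (p - 1) * fracKernel σ x ∂μ) +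
        ENNReal.ofReal (r ^ (-((finrank ℝ E : ℝ) + σ))) *
          (μ (ball (0 : E) R) ^ (1 / p) * D ^ (p - 1)) := by
  set A := ENNReal.ofReal (r ^ (-((finrank ℝ E : ℝ) + σ)))
  have cover : (ball (0 : E) r)ᶜ ⊆ (ball (0 : E) R)ᶜ ∪ (ball 0 R ∩ (ball 0 r)ᶜ) := fun x hx =>
    (em (x ∈ ball 0 R)).symm.imp_right fun h => ⟨h, hx⟩
  have holder := lintegral_mul_rpow_sub_one_le hp (aemeasurable_const (b := (1 : ℝ≥0∞)))
    hu.enorm.aemeasurable hD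
  simp only [one_mul, ENNReal.one_rpow, lintegral_one, Measure.restrict_apply_univ] at holder
  have annulus : ∫⁻ x in ball (0 : E) R ∩ (ball 0 r)ᶜ, ‖u x‖ₑ ^ (p - 1) * fracKernel σ x ∂μ ≤
      A * ∫⁻ x in ball (0 : E) R, ‖u x‖ₑ ^ (p - 1) ∂μ := by
    rw [← lintegral_const_mul' _ _ ENNReal.ofReal_ne_top]
    refine (setLIntegral_mono' (measurableSet_ball.inter measurableSet_ball.compl)
      fun x hx => ?_).trans (lintegral_mono_set inter_subset_left)
    rw [mul_comm]
    gcongr ?_ * _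
    exact fracKernel_le_ofReal_rpow hσ hr (by simpa using hx.2)
  grw [lintegral_mono_set cover, lintegral_union_le, annulus, holder]

end

section

variable {p s : ℝ}

variable (E) [FiniteDimensional ℝ E] [MeasureSpace E] [BorelSpace E]
  [(volume : Measure E).IsAddHaarMeasure]

lemma SolutionOnBallTwo.integrableOn {E : Type*} [NormedAddCommGroup E] [NormedSpace ℝ E]
    [FiniteDimensional ℝ E] [MeasureSpace E] [BorelSpace E]
    [IsFiniteMeasureOnCompacts (volume : Measure E)] {u f : E → ℝ}
    (hu : SolutionOnBallTwo p s u f) : IntegrableOn u (ball 0 2) := by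
  have continuous : ContinuousOn u (closedBall 0 2) := fun x hx =>
    (hu.contDiffAt x hx).continuousAt.continuousWithinAt
  exact (continuous.integrableOn_compact (isCompact_closedBall 0 2)).mono_set
    ball_subset_closedBall

lemma exists_lintegral_enorm_sub_setAverage_rpow_le {σ : ℝ} (hp : 1 ≤ p) (hσ : 0 ≤ σ) {r : ℝ}
    (hr : 0 < r) : ∃ D : ℝ≥0, ∀ (u : E → ℝ) (X : ℝ≥0∞), Measurable u → IntegrableOn u (ball 0 r) →
      ∫⁻ x in ball (0 : E) r, ∫⁻ y in ball (0 : E) r, ‖u x - u y‖ₑ ^ p * fracKernel σ (x - y) ≤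
        X ^ p →
      ∫⁻ x in ball (0 : E) r, ‖u x - ⨍ y in ball 0 r, u y‖ₑ ^ p ≤ (D * X) ^ p := by
  have hp₀ : 0 < p := by linarith
  set a := (finrank ℝ E : ℝ) + σ
  have hV₀ : volume (ball (0 : E) r) ≠ 0 := (measure_ball_pos volume _ hr).ne'
  have hV : volume (ball (0 : E) r) ≠ ⊤ := measure_ball_lt_top.ne
  lift ((volume (ball (0 : E) r))⁻¹ * ENNReal.ofReal (2 * r) ^ a) ^ (1 / p) to ℝ≥0 using
    ENNReal.rpow_ne_top_of_nonneg (by positivity) (ENNReal.mul_ne_top (ENNReal.inv_ne_top.mpr hV₀)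
      (ENNReal.rpow_ne_top_of_nonneg (by positivity) ENNReal.ofReal_ne_top)) with D hD
  refine ⟨D, fun u X hu hint gagliardo => ?_⟩
  grw [lintegral_enorm_sub_setAverage_rpow_le hp hσ measurableSet_ball hV₀ hV
    (fun x hx y hy => ?_) hu hint, gagliardo, hD, ENNReal.mul_rpow_of_nonneg _ _ hp₀.le,
    ← ENNReal.rpow_mul, one_div_mul_cancel hp₀.ne', ENNReal.rpow_one]
  rw [mem_ball_zero_iff] at hx hy
  linarith [norm_sub_le x y]

lemma exists_normalizedSolution (hp : 1 < p) (hs : 0 < s) :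
    ∃ C : ℝ≥0, ∀ (u f : E → ℝ) (X : ℝ≥0), SolutionOnBallTwo p s u f →
      ∫⁻ x in ball (0 : E) 2, ∫⁻ y in ball (0 : E) 2,
        ‖u x - u y‖ₑ ^ p * fracKernel (s * p) (x - y) ≤ (X : ℝ≥0∞) ^ p →
      ∫⁻ x in (ball (0 : E) 2)ᶜ, ‖u x - ⨍ y in ball 0 2, u y‖ₑ ^ (p - 1) *
        fracKernel (s * p) x ≤ (X : ℝ≥0∞) ^ (p - 1) →
      ∫⁻ x in ball (0 : E) 2, ‖f x‖ₑ ^ (p / (p - 1)) ≤ (X : ℝ≥0∞) ^ p →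
      NormalizedSolution p s u f (⨍ y in ball 0 2, u y) (C * X) := by
  have hp₁ : 0 < p - 1 := by linarith
  have hsp : 0 ≤ s * p := by positivity
  have hp_inv : 0 ≤ 1 / p := by positivity
  have hV : volume (ball (0 : E) 2) ≠ ⊤ := measure_ball_lt_top.ne
  obtain ⟨D, hD⟩ := exists_lintegral_enorm_sub_setAverage_rpow_le E hp.le hsp two_pos
  lift ENNReal.ofReal ((1 / 2) ^ (-((finrank ℝ E : ℝ) + s * p))) *
    volume (ball (0 : E) 2) ^ (1 / p) * (D : ℝ≥0∞) ^ (p - 1) to ℝ≥0 using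
    ENNReal.mul_ne_top (by finiteness) (by finiteness) with K hK
  set C : ℝ≥0 := 1 + D + (1 + K) ^ (p - 1)⁻¹
  have one_le_C : 1 ≤ C := le_self_add.trans le_self_add
  have D_le_C : D ≤ C := le_add_self.trans le_self_add
  have K_le_C : 1 + K ≤ C ^ (p - 1) := (NNReal.rpow_inv_le_iff hp₁).mp le_add_self
  refine ⟨C, fun u f X hu gagliardo tail source => ?_⟩
  have X_le : (X : ℝ≥0∞) ≤ (C * X : ℝ≥0) := by exact_mod_cast le_mul_of_one_le_left' one_le_C
  have := hu.measurable
  have poincare := hD u X hu.measurable hu.integrableOn gagliardo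
  refine ⟨hu, gagliardo.trans (by gcongr), poincare.trans ?_, ?_, source.trans (by gcongr)⟩
  · rw [ENNReal.coe_mul]
    gcongr
  · grw [lintegral_compl_ball_rpow_mul_fracKernel_le hp hsp (by norm_num) (by fun_prop) poincare,
      tail]
    calc _ = (1 + K) * (X : ℝ≥0∞) ^ (p - 1) := by
          rw [hK, ENNReal.mul_rpow_of_nonneg _ _ hp₁.le]
          ring
      _ ≤ ((C ^ (p - 1) : ℝ≥0) : ℝ≥0∞) * (X : ℝ≥0∞) ^ (p - 1) := by
          gcongr
          exact_mod_cast K_le_C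
      _ = ((C * X : ℝ≥0) : ℝ≥0∞) ^ (p - 1) := by
          rw [ENNReal.coe_mul, ENNReal.mul_rpow_of_nonneg _ _ hp₁.le,
            ENNReal.coe_rpow_of_nonneg _ hp₁.le]

lemma exists_forall_eLpNorm'_fderiv_ball_one_le (hp : 1 < p) (hs : 0 < s) (hs₁ : s < 1)
    (hsp : p - 1 < s * p) :
    ∃ C : ℝ≥0, 0 < C ∧ ∀ (u f : E → ℝ) (X : ℝ≥0∞), SolutionOnBallTwo p s u f →
      ∫⁻ x in ball (0 : E) 2, ∫⁻ y in ball (0 : E) 2,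
        ‖u x - u y‖ₑ ^ p * fracKernel (s * p) (x - y) ≤ X ^ p →
      ∫⁻ x in (ball (0 : E) 2)ᶜ, ‖u x - ⨍ y in ball 0 2, u y‖ₑ ^ (p - 1) *
        fracKernel (s * p) x ≤ X ^ (p - 1) →
      ∫⁻ x in ball (0 : E) 2, ‖f x‖ₑ ^ (p / (p - 1)) ≤ X ^ p →
      eLpNorm' (fderiv ℝ u) p (volume.restrict (ball 0 1)) ≤ C * X := by
  obtain ⟨C₁, hC₁⟩ := exists_normalizedSolution E hp hs
  obtain ⟨C₂, hC₂⟩ := exists_eLpNorm'_fderiv_ball_one_le E hp hs hs₁ hsp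
  refine ⟨C₂ * C₁ + 1, by positivity, fun u f X hu gagliardo tail source => ?_⟩
  rcases eq_or_ne X ⊤ with rfl | hX
  · rw [ENNReal.mul_top (by simp)]
    exact le_top
  lift X to ℝ≥0 using hX
  grw [hC₂ u f _ _ (hC₁ u f X hu gagliardo tail source), ENNReal.coe_mul, ← mul_assoc,
    ← ENNReal.coe_mul, ← le_self_add (a := C₂ * C₁) (b := 1)]

end

end Normalization

section Rescaling

variable {E : Type*} [NormedAddCommGroup E] [NormedSpace ℝ E] {R : ℝ}

lemma fracKernel_sub_eq (x₀ : E) (hR : 0 < R) (σ : ℝ) (x y : E) :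
    fracKernel σ (x - y) =
      ENNReal.ofReal R ^ ((finrank ℝ E : ℝ) + σ) * fracKernel σ (x₀ + R • x - (x₀ + R • y)) := by
  rw [add_sub_add_left_eq_sub, ← smul_sub, fracKernel_smul hR, ← mul_assoc,
    ← ENNReal.rpow_add _ _ (ENNReal.ofReal_pos.mpr hR).ne' ENNReal.ofReal_ne_top, add_neg_cancel,
    ENNReal.rpow_zero, one_mul]

lemma fderiv_comp_add_smul {F : Type*} [NormedAddCommGroup F] [NormedSpace ℝ F] (x₀ : E) (R : ℝ)
    (u : E → F) (x : E) :
    fderiv ℝ (fun y => u (x₀ + R • y)) x = R • fderiv ℝ u (x₀ + R • x) := by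
  rw [fderiv_comp_smul (f := fun y => u (x₀ + y)), fderiv_comp_add_left]

variable [MeasurableSpace E] [BorelSpace E] [FiniteDimensional ℝ E] {μ : Measure E}
  [μ.IsAddHaarMeasure]

lemma setLIntegral_ball_comp_add_smul (x₀ : E) (hR : 0 < R) (r : ℝ) (g : E → ℝ≥0∞) :
    ∫⁻ x in ball 0 r, g (x₀ + R • x) ∂μ =
      ENNReal.ofReal R ^ (-(finrank ℝ E : ℝ)) * ∫⁻ x in ball x₀ (r * R), g x ∂μ := by
  rw [← preimage_add_smul_ball x₀ hR, setLIntegral_comp_add_smul x₀ hR, ENNReal.rpow_neg,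
    ENNReal.rpow_natCast]

lemma setLIntegral_compl_ball_comp_add_smul (x₀ : E) (hR : 0 < R) (r : ℝ) (g : E → ℝ≥0∞) :
    ∫⁻ x in (ball 0 r)ᶜ, g (x₀ + R • x) ∂μ =
      ENNReal.ofReal R ^ (-(finrank ℝ E : ℝ)) * ∫⁻ x in (ball x₀ (r * R))ᶜ, g x ∂μ := by
  rw [← preimage_add_smul_ball x₀ hR, ← preimage_compl, setLIntegral_comp_add_smul x₀ hR,
    ENNReal.rpow_neg, ENNReal.rpow_natCast]

lemma lintegral_enorm_mul_comp_add_smul_rpow (x₀ : E) (hR : 0 < R) (a : ℝ) {q : ℝ} (hq : 0 ≤ q)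
    (r : ℝ) (f : E → ℝ) :
    ∫⁻ x in ball 0 r, ‖R ^ a * f (x₀ + R • x)‖ₑ ^ q ∂μ =
      ENNReal.ofReal R ^ (a * q - finrank ℝ E) * ∫⁻ x in ball x₀ (r * R), ‖f x‖ₑ ^ q ∂μ := by
  have hR₀ : ENNReal.ofReal R ≠ 0 := (ENNReal.ofReal_pos.mpr hR).ne'
  have enorm_rpow : ‖R ^ a‖ₑ = ENNReal.ofReal R ^ a := by
    rw [Real.enorm_eq_ofReal (by positivity), ENNReal.ofReal_rpow_of_pos hR]
  simp only [enorm_mul, ENNReal.mul_rpow_of_nonneg _ _ hq, enorm_rpow, ← ENNReal.rpow_mul]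
  rw [lintegral_const_mul' _ _ (ENNReal.rpow_ne_top_of_ne_zero hR₀ ENNReal.ofReal_ne_top),
    setLIntegral_ball_comp_add_smul x₀ hR r fun x => ‖f x‖ₑ ^ q, ← mul_assoc,
    ← ENNReal.rpow_add _ _ hR₀ ENNReal.ofReal_ne_top, sub_eq_add_neg]

variable {F : Type*} [NormedAddCommGroup F]

lemma lintegral_gagliardo_comp_add_smul (x₀ : E) (hR : 0 < R) (σ q r : ℝ) (u : E → F) :
    ∫⁻ x in ball 0 r, (∫⁻ y in ball 0 r,
        ‖u (x₀ + R • x) - u (x₀ + R • y)‖ₑ ^ q * fracKernel σ (x - y) ∂μ) ∂μ =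
      ENNReal.ofReal R ^ (σ - finrank ℝ E) * ∫⁻ x in ball x₀ (r * R),
        (∫⁻ y in ball x₀ (r * R), ‖u x - u y‖ₑ ^ q * fracKernel σ (x - y) ∂μ) ∂μ := by
  have hR₀ : ENNReal.ofReal R ≠ 0 := (ENNReal.ofReal_pos.mpr hR).ne'
  have rpow_ne_top (a : ℝ) : ENNReal.ofReal R ^ a ≠ ⊤ :=
    ENNReal.rpow_ne_top_of_ne_zero hR₀ ENNReal.ofReal_ne_top
  have inner (x : E) := setLIntegral_ball_comp_add_smul (μ := μ) x₀ hR r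
    fun y => ‖u (x₀ + R • x) - u y‖ₑ ^ q * fracKernel σ (x₀ + R • x - y)
  have outer := setLIntegral_ball_comp_add_smul (μ := μ) x₀ hR r fun x =>
    ∫⁻ y in ball x₀ (r * R), ‖u x - u y‖ₑ ^ q * fracKernel σ (x - y) ∂μ
  have integrand (x y : E) : ‖u (x₀ + R • x) - u (x₀ + R • y)‖ₑ ^ q * fracKernel σ (x - y) =
      ENNReal.ofReal R ^ ((finrank ℝ E : ℝ) + σ) * (‖u (x₀ + R • x) - u (x₀ + R • y)‖ₑ ^ q *
        fracKernel σ (x₀ + R • x - (x₀ + R • y))) := by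
    rw [fracKernel_sub_eq x₀ hR, mul_left_comm]
  simp only [integrand, lintegral_const_mul' _ _ (rpow_ne_top _), inner, outer]
  rw [← mul_assoc, ← mul_assoc, ← ENNReal.rpow_add _ _ hR₀ ENNReal.ofReal_ne_top,
    ← ENNReal.rpow_add _ _ hR₀ ENNReal.ofReal_ne_top]
  congr 2
  ring

lemma lintegral_tail_comp_add_smul (x₀ : E) (hR : 0 < R) (σ q r : ℝ) (u : E → F) :
    ∫⁻ x in (ball 0 r)ᶜ, ‖u (x₀ + R • x)‖ₑ ^ q * fracKernel σ x ∂μ =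
      ENNReal.ofReal R ^ σ *
        ∫⁻ x in (ball x₀ (r * R))ᶜ, ‖u x‖ₑ ^ q * fracKernel σ (x - x₀) ∂μ := by
  have hR₀ : ENNReal.ofReal R ≠ 0 := (ENNReal.ofReal_pos.mpr hR).ne'
  have integrand (x : E) : ‖u (x₀ + R • x)‖ₑ ^ q * fracKernel σ x =
      ENNReal.ofReal R ^ ((finrank ℝ E : ℝ) + σ) *
        (‖u (x₀ + R • x)‖ₑ ^ q * fracKernel σ (x₀ + R • x - x₀)) := by
    rw [mul_left_comm]
    simpa using congrArg (_ * ·) (fracKernel_sub_eq x₀ hR σ x 0)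
  have scaling := setLIntegral_compl_ball_comp_add_smul (μ := μ) x₀ hR r
    fun x => ‖u x‖ₑ ^ q * fracKernel σ (x - x₀)
  simp only [integrand]
  rw [lintegral_const_mul' _ _ (ENNReal.rpow_ne_top_of_ne_zero hR₀ ENNReal.ofReal_ne_top), scaling,
    ← mul_assoc, ← ENNReal.rpow_add _ _ hR₀ ENNReal.ofReal_ne_top]
  congr 2
  ring

variable [NormedSpace ℝ F]

lemma integral_comp_add_smul (x₀ : E) (hR : 0 < R) (g : E → F) :
    ∫ x, g (x₀ + R • x) ∂μ = (R ^ finrank ℝ E)⁻¹ • ∫ x, g x ∂μ := by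
  rw [← (measurableEmbedding_add_smul x₀ hR).integral_map, map_add_smul_addHaar x₀ hR,
    integral_smul_measure, ENNReal.toReal_inv, ENNReal.toReal_pow, ENNReal.toReal_ofReal hR.le]

lemma setAverage_ball_comp_add_smul (x₀ : E) (hR : 0 < R) (r : ℝ) (u : E → F) :
    ⨍ x in ball 0 r, u (x₀ + R • x) ∂μ = ⨍ x in ball x₀ (r * R), u x ∂μ := by
  have hc₀ : (ENNReal.ofReal R ^ finrank ℝ E)⁻¹ ≠ 0 := ENNReal.inv_ne_zero.mpr (by finiteness)
  have hc : (ENNReal.ofReal R ^ finrank ℝ E)⁻¹ ≠ ⊤ :=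
    ENNReal.inv_ne_top.mpr (pow_ne_zero _ (ENNReal.ofReal_pos.mpr hR).ne')
  have embedding := measurableEmbedding_add_smul x₀ hR
  have integral := embedding.setIntegral_map (μ := μ) u (ball x₀ (r * R))
  have measure := embedding.map_apply μ (ball x₀ (r * R))
  rw [map_add_smul_addHaar x₀ hR, preimage_add_smul_ball x₀ hR, Measure.restrict_smul,
    integral_smul_measure] at integral
  rw [map_add_smul_addHaar x₀ hR, preimage_add_smul_ball x₀ hR, Measure.smul_apply,
    smul_eq_mul] at measure
  rw [setAverage_eq, setAverage_eq, ← integral, measureReal_def, measureReal_def, ← measure,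
    smul_smul, ENNReal.toReal_mul, mul_inv_rev, inv_mul_cancel_right₀]
  exact ENNReal.toReal_ne_zero.mpr ⟨hc₀, hc⟩

lemma eLpNorm'_fderiv_comp_add_smul (x₀ : E) (hR : 0 < R) {p : ℝ} (hp : 0 < p) (r : ℝ) (u : E → F) :
    eLpNorm' (fderiv ℝ fun x => u (x₀ + R • x)) p (μ.restrict (ball 0 r)) =
      ENNReal.ofReal R ^ (1 - finrank ℝ E / p) *
        eLpNorm' (fderiv ℝ u) p (μ.restrict (ball x₀ (r * R))) := by
  have hR₀ : ENNReal.ofReal R ≠ 0 := (ENNReal.ofReal_pos.mpr hR).ne'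
  simp only [eLpNorm', fderiv_comp_add_smul, enorm_smul, ENNReal.mul_rpow_of_nonneg _ _ hp.le,
    Real.enorm_eq_ofReal hR.le]
  rw [lintegral_const_mul' _ _ (ENNReal.rpow_ne_top_of_ne_zero hR₀ ENNReal.ofReal_ne_top),
    setLIntegral_ball_comp_add_smul x₀ hR r fun x => ‖fderiv ℝ u x‖ₑ ^ p, ← mul_assoc,
    ← ENNReal.rpow_add _ _ hR₀ ENNReal.ofReal_ne_top,
    ENNReal.mul_rpow_of_nonneg _ _ (by positivity), ← ENNReal.rpow_mul]
  congr 2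
  field_simp
  ring

end Rescaling

section LipschitzEnergy

lemma lintegral_lintegral_le_of_forall_notMem {G : Type*} [AddGroup G] [MeasurableSpace G]
    [MeasurableAdd₂ G] [MeasurableNeg G] {μ : Measure G} [SFinite μ] [μ.IsAddLeftInvariant]
    [μ.IsAddRightInvariant] [μ.IsNegInvariant] {F : G → G → ℝ≥0∞} {K : G → ℝ≥0∞} (hK : Measurable K)
    {S : Set G} (hS : MeasurableSet S) (hle : ∀ x y, F x y ≤ K (x - y))
    (h₀ : ∀ x y, x ∉ S → y ∉ S → F x y = 0) :
    ∫⁻ x, (∫⁻ y, F x y ∂μ) ∂μ ≤ 2 * (μ S * ∫⁻ z, K z ∂μ) := by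
  have hS₁ : Measurable (S.indicator (1 : G → ℝ≥0∞)) := measurable_one.indicator hS
  have pointwise (x y : G) :
      F x y ≤ S.indicator 1 x * K (x - y) + S.indicator 1 y * K (x - y) := by
    by_cases hx : x ∈ S <;> by_cases hy : y ∈ S <;> simp [hx, hy, h₀, hle, le_add_right]
  have left : ∫⁻ x, (∫⁻ y, S.indicator 1 x * K (x - y) ∂μ) ∂μ = μ S * ∫⁻ z, K z ∂μ := by
    have inner (x : G) : ∫⁻ y, S.indicator 1 x * K (x - y) ∂μ =
        S.indicator 1 x * ∫⁻ z, K z ∂μ := by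
      rw [lintegral_const_mul _ (by fun_prop), lintegral_sub_left_eq_self K x]
    simp only [inner]
    rw [lintegral_mul_const _ hS₁, lintegral_indicator_one hS]
  have right : ∫⁻ x, (∫⁻ y, S.indicator 1 y * K (x - y) ∂μ) ∂μ = μ S * ∫⁻ z, K z ∂μ := by
    have inner (y : G) : ∫⁻ x, S.indicator 1 y * K (x - y) ∂μ =
        S.indicator 1 y * ∫⁻ z, K z ∂μ := by
      rw [lintegral_const_mul _ (by fun_prop), lintegral_sub_right_eq_self K y]
    rw [lintegral_lintegral_swap (by fun_prop)]
    simp only [inner]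
    rw [lintegral_mul_const _ hS₁, lintegral_indicator_one hS]
  calc ∫⁻ x, (∫⁻ y, F x y ∂μ) ∂μ
      ≤ ∫⁻ x, ((∫⁻ y, S.indicator 1 x * K (x - y) ∂μ) +
          ∫⁻ y, S.indicator 1 y * K (x - y) ∂μ) ∂μ := by
        refine lintegral_mono fun x => ?_
        rw [← lintegral_add_left (by fun_prop)]
        exact lintegral_mono (pointwise x)
    _ = 2 * (μ S * ∫⁻ z, K z ∂μ) := by
        rw [lintegral_add_left, left, right, two_mul]
        exact Measurable.lintegral_prod_right'
          (f := fun z : G × G => S.indicator 1 z.1 * K (z.1 - z.2)) (by fun_prop)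

variable {E : Type*} [NormedAddCommGroup E] [NormedSpace ℝ E] {p s : ℝ}

lemma enorm_sub_rpow_mul_fracKernel_le (hp : 0 < p) (σ : ℝ) {φ : E → ℝ} {L B : ℝ≥0}
    (hφ : LipschitzWith L φ) (hB : ∀ x, ‖φ x‖ₑ ≤ B) (x y : E) :
    ‖φ x - φ y‖ₑ ^ p * fracKernel σ (x - y) ≤
      (ball 0 1).indicator (fun z => (L : ℝ≥0∞) ^ p * fracKernel (σ - p) z) (x - y) +
        (ball 0 1)ᶜ.indicator (fun z => (2 * B : ℝ≥0∞) ^ p * fracKernel σ z) (x - y) := by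
  rcases eq_or_ne x y with rfl | hxy
  · simp [ENNReal.zero_rpow_of_pos hp]
  by_cases hz : x - y ∈ ball (0 : E) 1
  · have lipschitz : ‖φ x - φ y‖ₑ ≤ L * ‖x - y‖ₑ := by
      simpa only [edist_eq_enorm_sub] using hφ x y
    rw [indicator_of_mem hz, indicator_of_notMem (notMem_compl_iff.mpr hz), add_zero,
      ← enorm_rpow_mul_fracKernel p (sub_ne_zero.mpr hxy), ← mul_assoc,
      ← ENNReal.mul_rpow_of_nonneg _ _ hp.le]
    gcongr
  · have bound : ‖φ x - φ y‖ₑ ≤ 2 * B := by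
      rw [two_mul]
      exact enorm_sub_le.trans (add_le_add (hB x) (hB y))
    rw [indicator_of_notMem hz, indicator_of_mem (mem_compl hz), zero_add]
    gcongr

variable [MeasurableSpace E] [BorelSpace E] [FiniteDimensional ℝ E] {μ : Measure E}
  [μ.IsAddHaarMeasure]

lemma lintegral_gagliardo_lt_top_of_lipschitzWith (hp : 0 < p) (hs : 0 < s) (hs₁ : s < 1)
    {φ : E → ℝ} {L B : ℝ≥0} (hφ : LipschitzWith L φ) (hB : ∀ x, ‖φ x‖ₑ ≤ B) {S : Set E}
    (hS : MeasurableSet S) (hfin : μ S ≠ ⊤) (h₀ : ∀ x ∉ S, φ x = 0) :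
    ∫⁻ x, (∫⁻ y, ‖φ x - φ y‖ₑ ^ p * fracKernel (s * p) (x - y) ∂μ) ∂μ < ⊤ := by
  have near_ne_top := (lintegral_ball_one_fracKernel_lt_top μ (E := E) (σ := s * p - p)
    (by nlinarith)).ne
  have far_ne_top := (lintegral_compl_ball_fracKernel_lt_top μ (E := E) (mul_pos hs hp) one_pos).ne
  have measurable_near : Measurable ((ball (0 : E) 1).indicator
      fun z => (L : ℝ≥0∞) ^ p * fracKernel (s * p - p) z) :=
    Measurable.indicator (by fun_prop) measurableSet_ball
  have measurable_far : Measurable ((ball (0 : E) 1)ᶜ.indicator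
      fun z => (2 * B : ℝ≥0∞) ^ p * fracKernel (s * p) z) :=
    Measurable.indicator (by fun_prop) measurableSet_ball.compl
  refine (lintegral_lintegral_le_of_forall_notMem (measurable_near.add measurable_far) hS
    (enorm_sub_rpow_mul_fracKernel_le hp (s * p) hφ hB)
    fun x y hx hy => by simp [h₀ x hx, h₀ y hy, ENNReal.zero_rpow_of_pos hp]).trans_lt ?_
  simp only [Pi.add_apply]
  rw [lintegral_add_left measurable_near, lintegral_indicator measurableSet_ball,
    lintegral_indicator measurableSet_ball.compl, lintegral_const_mul' _ _ (by finiteness),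
    lintegral_const_mul' _ _ (by finiteness)]
  finiteness

end LipschitzEnergy

section LocalWeakSolution

lemma ofReal_norm_rpow {F : Type*} [NormedAddCommGroup F] {q : ℝ} (hq : 0 ≤ q) (a : F) :
    ENNReal.ofReal (‖a‖ ^ q) = ‖a‖ₑ ^ q := by
  rw [← ofReal_norm, ENNReal.ofReal_rpow_of_nonneg (norm_nonneg a) hq]

lemma ofReal_abs_rpow_div_dist_rpow {E : Type*} [NormedAddCommGroup E] [NormedSpace ℝ E] {q : ℝ}
    (hq : 0 ≤ q) (c σ : ℝ) (x y : E) :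
    ENNReal.ofReal (|c| ^ q / dist x y ^ ((finrank ℝ E : ℝ) + σ)) =
      ‖c‖ₑ ^ q * fracKernel σ (x - y) := by
  rw [← ofReal_norm_rpow hq, div_eq_mul_inv, ENNReal.ofReal_mul (by positivity), dist_eq_norm,
    ← Real.rpow_neg (norm_nonneg _), Real.norm_eq_abs, fracKernel]

variable {n : ℕ} {p s : ℝ}

lemma gagliardoE_eq (hp : 0 ≤ p) (D : Set (EuclideanSpace ℝ (Fin n)))
    (u : EuclideanSpace ℝ (Fin n) → ℝ) :
    gagliardoE n s p D u =
      ∫⁻ x in D, ∫⁻ y in D, ‖u x - u y‖ₑ ^ p * fracKernel (s * p) (x - y) := by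
  simp only [gagliardoE, ← ofReal_abs_rpow_div_dist_rpow hp, finrank_euclideanSpace_fin]

lemma tailE_rpow (hp : 1 < p) (u : EuclideanSpace ℝ (Fin n) → ℝ)
    (x₀ : EuclideanSpace ℝ (Fin n)) (R : ℝ) :
    tailE n s p u x₀ R ^ (p - 1) = ENNReal.ofReal (R ^ (s * p)) *
      ∫⁻ x in (ball x₀ R)ᶜ, ‖u x‖ₑ ^ (p - 1) * fracKernel (s * p) (x - x₀) := by
  have hp₁ : 0 < p - 1 := sub_pos.mpr hp
  simp only [tailE, ← ofReal_abs_rpow_div_dist_rpow hp₁.le, finrank_euclideanSpace_fin,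
    ← ENNReal.rpow_mul, one_div_mul_cancel hp₁.ne', ENNReal.rpow_one]

variable {Ω : Set (EuclideanSpace ℝ (Fin n))} {u f : EuclideanSpace ℝ (Fin n) → ℝ}

lemma IsLocalWeakSolution.integral_weakIntegrand (hu : IsLocalWeakSolution n p s Ω f u)
    (hp : 0 < p) (hs : 0 < s) (hs₁ : s < 1) {φ : EuclideanSpace ℝ (Fin n) → ℝ} {L : ℝ≥0}
    (hφ : LipschitzWith L φ) {K : Set (EuclideanSpace ℝ (Fin n))} (hK : IsCompact K) (hKΩ : K ⊆ Ω)
    (h₀ : ∀ x ∉ K, φ x = 0) :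
    ∫ x, ∫ y, weakIntegrand p s u φ (x, y) = ∫ x, f x * φ x := by
  obtain ⟨B, hB⟩ : ∃ B : ℝ≥0, ∀ x, ‖φ x‖ₑ ≤ B := by
    obtain ⟨b, hb⟩ := hK.exists_bound_of_continuousOn hφ.continuous.continuousOn
    refine ⟨b.toNNReal, fun x => ?_⟩
    by_cases hx : x ∈ K
    · rw [← ofReal_norm]
      exact ENNReal.ofReal_le_ofReal (hb x hx)
    · simp [h₀ x hx]
  have lintegral_rpow : ∫⁻ x, ENNReal.ofReal (|φ x| ^ p) < ⊤ := by
    have bound (x) : ENNReal.ofReal (|φ x| ^ p) ≤ K.indicator (fun _ => (B : ℝ≥0∞) ^ p) x := by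
      rw [← Real.norm_eq_abs, ofReal_norm_rpow hp.le]
      by_cases hx : x ∈ K
      · rw [indicator_of_mem hx]
        gcongr
        exact hB x
      · simp [h₀ x hx, hp]
    refine (lintegral_mono bound).trans_lt ?_
    rw [lintegral_indicator hK.measurableSet, setLIntegral_const]
    exact ENNReal.mul_lt_top (by finiteness) hK.measure_lt_top
  have energy : gagliardoE n s p univ φ < ⊤ := by
    rw [gagliardoE_eq hp.le, Measure.restrict_univ]
    exact lintegral_gagliardo_lt_top_of_lipschitzWith hp hs hs₁ hφ hB hK.measurableSet
      hK.measure_ne_top h₀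
  have weak_equation := hu.2.2.2 φ hφ.continuous.measurable ⟨K, hK, hKΩ, ae_of_all _ h₀⟩
    lintegral_rpow energy
  rw [setIntegral_eq_integral_of_forall_compl_eq_zero fun x hx => by
    rw [h₀ x (fun h => hx (hKΩ h)), mul_zero]] at weak_equation
  simpa only [weakIntegrand, sgnPow, finrank_euclideanSpace_fin, sub_sub, one_add_one_eq_two]
    using weak_equation

end LocalWeakSolution

section RescaledSolution

section

variable {E : Type*} [NormedAddCommGroup E] [NormedSpace ℝ E] {R : ℝ}

lemma weakIntegrand_comp_add_smul (x₀ : E) (hR : 0 < R) (p s : ℝ) (u φ : E → ℝ) (x y : E) :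
    weakIntegrand p s (fun x => u (x₀ + R • x)) (fun x => φ (x₀ + R • x)) (x, y) =
      R ^ ((finrank ℝ E : ℝ) + s * p) * weakIntegrand p s u φ (x₀ + R • x, x₀ + R • y) := by
  have hRa : R ^ ((finrank ℝ E : ℝ) + s * p) ≠ 0 := by positivity
  simp only [weakIntegrand]
  rw [dist_add_left, dist_smul₀, Real.norm_of_nonneg hR.le, Real.mul_rpow hR.le dist_nonneg,
    ← mul_div_assoc, mul_div_mul_left _ _ hRa]

variable [MeasureSpace E] [BorelSpace E] [FiniteDimensional ℝ E]
  [(volume : Measure E).IsAddHaarMeasure]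

lemma integral_weakIntegrand_comp_add_smul (x₀ : E) (hR : 0 < R) (p s : ℝ) (u φ : E → ℝ) :
    ∫ x, ∫ y, weakIntegrand p s (fun x => u (x₀ + R • x)) (fun x => φ (x₀ + R • x)) (x, y) =
      R ^ (s * p) * (R ^ finrank ℝ E)⁻¹ * ∫ x, ∫ y, weakIntegrand p s u φ (x, y) := by
  have hRn : R ^ finrank ℝ E ≠ 0 := by positivity
  have inner (x : E) :=
    integral_comp_add_smul (μ := volume) x₀ hR fun y => weakIntegrand p s u φ (x₀ + R • x, y)
  have outer :=
    integral_comp_add_smul (μ := volume) x₀ hR fun x => ∫ y, weakIntegrand p s u φ (x, y)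
  simp only [weakIntegrand_comp_add_smul x₀ hR, integral_const_mul, inner, smul_eq_mul, outer,
    Real.rpow_add hR, Real.rpow_natCast]
  field_simp

end

variable {n : ℕ} {p s R : ℝ} {x₀ : EuclideanSpace ℝ (Fin n)} {Ω : Set (EuclideanSpace ℝ (Fin n))}
  {u f : EuclideanSpace ℝ (Fin n) → ℝ}

lemma IsLocalWeakSolution.integral_weakIntegrand_comp_add_smul
    (hu : IsLocalWeakSolution n p s Ω f u) (hp : 0 < p) (hs : 0 < s) (hs₁ : s < 1) (hR : 0 < R)
    (hball : closedBall x₀ (2 * R) ⊆ Ω) {w : EuclideanSpace ℝ (Fin n) → ℝ} {L : ℝ≥0}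
    (hw : LipschitzWith L w) (hw₀ : ∀ x, 2 < ‖x‖ → w x = 0) :
    ∫ x, ∫ y, weakIntegrand p s (fun x => u (x₀ + R • x)) w (x, y) =
      ∫ x, R ^ (s * p) * f (x₀ + R • x) * w x := by
  set φ : EuclideanSpace ℝ (Fin n) → ℝ := fun x => w (R⁻¹ • (x - x₀))
  have hφ : LipschitzWith (L * ‖R⁻¹‖₊) φ :=
    hw.comp (LipschitzWith.of_dist_le_mul fun x y => by rw [dist_smul₀, dist_sub_right, coe_nnnorm])
  have φ_support : ∀ x ∉ closedBall x₀ (2 * R), φ x = 0 := fun x hx => hw₀ _ <| by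
    rw [mem_closedBall, dist_eq_norm, not_le] at hx
    rwa [norm_smul, norm_inv, Real.norm_of_nonneg hR.le, inv_mul_eq_div, lt_div_iff₀ hR]
  have w_eq : w = fun x => φ (x₀ + R • x) := by
    ext x
    simp only [φ, add_sub_cancel_left, inv_smul_smul₀ hR.ne']
  have source := integral_comp_add_smul (μ := volume) x₀ hR fun x => f x * φ x
  rw [w_eq, _root_.integral_weakIntegrand_comp_add_smul x₀ hR,
    hu.integral_weakIntegrand hp hs hs₁ hφ (isCompact_closedBall x₀ _) hball φ_support, mul_assoc,
    ← smul_eq_mul _ (∫ x, f x * φ x), ← source, ← integral_const_mul]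
  simp only [mul_assoc]

lemma IsLocalWeakSolution.solutionOnBallTwo (hu : IsLocalWeakSolution n p s Ω f u) (hp : 0 < p)
    (hs : 0 < s) (hs₁ : s < 1) (hΩ : IsOpen Ω) (hf : Measurable f) (hu₁ : ContDiffOn ℝ 1 u Ω)
    (hR : 0 < R) (hball : closedBall x₀ (2 * R) ⊆ Ω) :
    SolutionOnBallTwo p s (fun x => u (x₀ + R • x)) fun x => R ^ (s * p) * f (x₀ + R • x) where
  measurable := hu.1.comp (by fun_prop)
  measurable_source := by fun_prop
  contDiffAt x hx := by
    have mem : x₀ + R • x ∈ Ω := hball <| by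
      rw [mem_closedBall_zero_iff] at hx
      rw [mem_closedBall, dist_self_add_left, norm_smul, Real.norm_of_nonneg hR.le, mul_comm]
      gcongr
    exact (hu₁.contDiffAt (hΩ.mem_nhds mem)).comp x (by fun_prop)
  integral_weakIntegrand := by
    rintro w ⟨L, hw⟩ ⟨t, ht, hw₀⟩
    exact hu.integral_weakIntegrand_comp_add_smul hp hs hs₁ hR hball hw
      fun x hx => hw₀ x (ht.trans hx)

/- `b` is the exponent in the relation `X = R^b Y` between the bound `X` for the rescaled solution
and the bound `Y` for the original one. -/
lemma ofReal_rpow_mul_le_rpow (hR : 0 < R) (hp : 0 < p) (b : ℝ) {a c : ℝ} (hc : (a + b) * p = c)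
    {G Y : ℝ≥0∞} (h : ENNReal.ofReal R ^ a * G ^ (1 / p) ≤ Y) :
    ENNReal.ofReal R ^ c * G ≤ (ENNReal.ofReal R ^ b * Y) ^ p := by
  have hR₀ : ENNReal.ofReal R ≠ 0 := (ENNReal.ofReal_pos.mpr hR).ne'
  grw [← h]
  rw [← mul_assoc, ← ENNReal.rpow_add _ _ hR₀ ENNReal.ofReal_ne_top, add_comm,
    ENNReal.mul_rpow_of_nonneg _ _ hp.le, ← ENNReal.rpow_mul, ← ENNReal.rpow_mul, hc,
    one_div_mul_cancel hp.ne', ENNReal.rpow_one]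

lemma exists_forall_eLpNorm'_fderiv_ball_le (n : ℕ) (hp : 1 < p) (hs : 0 < s) (hs₁ : s < 1)
    (hsp : p - 1 < s * p) :
    ∃ C : ℝ≥0, 0 < C ∧ ∀ (Ω : Set (EuclideanSpace ℝ (Fin n)))
      (u f : EuclideanSpace ℝ (Fin n) → ℝ), IsOpen Ω → Measurable f →
      IsLocalWeakSolution n p s Ω f u → ContDiffOn ℝ 1 u Ω →
      ∀ (x₀ : EuclideanSpace ℝ (Fin n)) (R : ℝ), 0 < R → closedBall x₀ (2 * R) ⊆ Ω →
      ∀ Y : ℝ≥0∞, ENNReal.ofReal R ^ s * gagliardoE n s p (ball x₀ (2 * R)) u ^ (1 / p) ≤ Y →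
      ENNReal.ofReal R ^ ((n : ℝ) / p) *
        tailE n s p (fun x => u x - ⨍ y in ball x₀ (2 * R), u y) x₀ (2 * R) ≤ Y →
      ENNReal.ofReal R ^ (s * (p / (p - 1))) *
        (∫⁻ x in ball x₀ (2 * R), ‖f x‖ₑ ^ (p / (p - 1))) ^ (1 / p) ≤ Y →
      eLpNorm' (fderiv ℝ u) p (volume.restrict (ball x₀ R)) ≤
        C * (ENNReal.ofReal R ^ (-1 : ℝ) * Y) := by
  obtain ⟨C, C_pos, hC⟩ :=
    exists_forall_eLpNorm'_fderiv_ball_one_le (EuclideanSpace ℝ (Fin n)) hp hs hs₁ hsp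
  refine ⟨C, C_pos, fun Ω u f hΩ hf hu hu₁ x₀ R hR hball Y gagliardo tail source => ?_⟩
  have hp₀ : 0 < p := by linarith
  have hp₁ : 0 < p - 1 := by linarith
  have hR₀ : ENNReal.ofReal R ≠ 0 := (ENNReal.ofReal_pos.mpr hR).ne'
  have rpow_ne_top (a : ℝ) : ENNReal.ofReal R ^ a ≠ ⊤ :=
    ENNReal.rpow_ne_top_of_ne_zero hR₀ ENNReal.ofReal_ne_top
  have rpow_ne_zero (a : ℝ) : ENNReal.ofReal R ^ a ≠ 0 :=
    (ENNReal.rpow_pos (ENNReal.ofReal_pos.mpr hR) ENNReal.ofReal_ne_top).ne'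
  have estimate := hC _ _ (ENNReal.ofReal R ^ (-((n : ℝ) / p)) * Y)
    (hu.solutionOnBallTwo hp₀ hs hs₁ hΩ hf hu₁ hR hball) ?_ ?_ ?_
  · rw [eLpNorm'_fderiv_comp_add_smul x₀ hR hp₀, one_mul, finrank_euclideanSpace_fin,
      ENNReal.mul_le_iff_le_inv (rpow_ne_zero _) (rpow_ne_top _), ← ENNReal.rpow_neg, mul_left_comm,
      ← mul_assoc (_ ^ _), ← ENNReal.rpow_add _ _ hR₀ ENNReal.ofReal_ne_top] at estimate
    convert estimate using 4
    ring
  · rw [lintegral_gagliardo_comp_add_smul x₀ hR, finrank_euclideanSpace_fin, ← gagliardoE_eq hp₀.le]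
    exact ofReal_rpow_mul_le_rpow hR hp₀ _ (by field_simp; ring) gagliardo
  · rw [setAverage_ball_comp_add_smul x₀ hR, lintegral_tail_comp_add_smul x₀ hR _ _ _
      fun x => u x - ⨍ y in ball x₀ (2 * R), u y]
    rw [ENNReal.mul_le_iff_le_inv (rpow_ne_zero _) (rpow_ne_top _), ← ENNReal.rpow_neg] at tail
    grw [← tail, tailE_rpow hp, ENNReal.ofReal_rpow_of_pos hR]
    gcongr
    linarith
  · rw [lintegral_enorm_mul_comp_add_smul_rpow x₀ hR _ (by positivity),
      finrank_euclideanSpace_fin]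
    exact ofReal_rpow_mul_le_rpow hR hp₀ _ (by field_simp; ring) source

end RescaledSolution

end

theorem gradient_Lp_estimate_general (n : ℕ) (p s : ℝ) (hp : 1 < p)
    (hs₁ : 0 < s) (hs₂ : s < 1) (hsp : 1 < s * (p / (p - 1))) :
    ∃ c : ℝ, 0 < c ∧
      ∀ (Ω : Set (EuclideanSpace ℝ (Fin n))) (u f : EuclideanSpace ℝ (Fin n) → ℝ),
        IsOpen Ω → Measurable f →
        IsLocalWeakSolution n p s Ω f u →
        ContDiffOn ℝ 1 u Ω →
        ∀ (x₀ : EuclideanSpace ℝ (Fin n)) (R : ℝ), 0 < R →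
          closedBall x₀ (2 * R) ⊆ Ω →
          (∫⁻ x in ball x₀ R, ENNReal.ofReal (‖gradient u x‖ ^ p)) ^ (1 / p) ≤
            ENNReal.ofReal (c / R) *
              (ENNReal.ofReal (R ^ s) * gagliardoE n s p (ball x₀ (2 * R)) u ^ (1 / p) +
                ENNReal.ofReal (R ^ ((n : ℝ) / p)) *
                  tailE n s p (fun x => u x - ⨍ y in ball x₀ (2 * R), u y) x₀ (2 * R) +
                ENNReal.ofReal (R ^ (s * (p / (p - 1)))) *
                  ((∫⁻ x in ball x₀ (2 * R),
                      ENNReal.ofReal (|f x| ^ (p / (p - 1)))) ^ ((p - 1) / p)) ^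
                    (1 / (p - 1))) := by
  have hp₁ : 0 < p - 1 := sub_pos.mpr hp
  obtain ⟨C, C_pos, hC⟩ := exists_forall_eLpNorm'_fderiv_ball_le n hp hs₁ hs₂
    (by rwa [← mul_div_assoc, one_lt_div hp₁] at hsp)
  refine ⟨C, C_pos, fun Ω u f hΩ hf hu hu₁ x₀ R hR hball => ?_⟩
  have gradient_eq : (∫⁻ x in ball x₀ R, ENNReal.ofReal (‖gradient u x‖ ^ p)) ^ (1 / p) =
      eLpNorm' (fderiv ℝ u) p (volume.restrict (ball x₀ R)) := by
    simp only [ofReal_norm_rpow (zero_le_one.trans hp.le), gradient,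
      LinearIsometryEquiv.enorm_map, eLpNorm']
  have const_eq : ENNReal.ofReal (C / R) = C * ENNReal.ofReal R ^ (-1 : ℝ) := by
    rw [ENNReal.ofReal_div_of_pos hR, ENNReal.ofReal_coe_nnreal, ENNReal.rpow_neg_one,
      div_eq_mul_inv]
  have exponent_eq : (p - 1) / p * (1 / (p - 1)) = 1 / p := by field_simp
  have abs_rpow (x) : ENNReal.ofReal (|f x| ^ (p / (p - 1))) = ‖f x‖ₑ ^ (p / (p - 1)) := by
    rw [← Real.norm_eq_abs, ofReal_norm_rpow (by positivity)]
  simp only [gradient_eq, const_eq, ← ENNReal.rpow_mul, exponent_eq, abs_rpow,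
    ← ENNReal.ofReal_rpow_of_pos hR, mul_assoc]
  exact hC Ω u f hΩ hf hu hu₁ x₀ R hR hball _ (le_add_right le_self_add)
    (le_add_right le_add_self) le_add_self

theorem gradient_Lp_estimate (n : ℕ) (p s : ℝ) (hp : 1 < p)
    (hs₁ : 0 < s) (hs₂ : s < 1) (hsp : 1 < s * (p / (p - 1))) :
    ∃ c : ℝ, 0 < c ∧
      ∀ (Ω : Set (EuclideanSpace ℝ (Fin n))) (u f : EuclideanSpace ℝ (Fin n) → ℝ),
        IsOpen Ω → Bornology.IsBounded Ω →
        MemLploc n (p / (p - 1)) Ω f →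
        IsLocalWeakSolution n p s Ω f u →
        ContDiffOn ℝ 1 u Ω →
        ∀ (x₀ : EuclideanSpace ℝ (Fin n)) (R : ℝ), 0 < R →
          closedBall x₀ (2 * R) ⊆ Ω →
          (∫⁻ x in ball x₀ R, ENNReal.ofReal (‖gradient u x‖ ^ p)) ^ (1 / p) ≤
            ENNReal.ofReal (c / R) *
              (ENNReal.ofReal (R ^ s) * gagliardoE n s p (ball x₀ (2 * R)) u ^ (1 / p) +
                ENNReal.ofReal (R ^ ((n : ℝ) / p)) *
                  tailE n s p (fun x => u x - ⨍ y in ball x₀ (2 * R), u y) x₀ (2 * R) +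
                ENNReal.ofReal (R ^ (s * (p / (p - 1)))) *
                  ((∫⁻ x in ball x₀ (2 * R),
                      ENNReal.ofReal (|f x| ^ (p / (p - 1)))) ^ ((p - 1) / p)) ^
                    (1 / (p - 1))) := by
  obtain ⟨c, c_pos, hc⟩ := gradient_Lp_estimate_general n p s hp hs₁ hs₂ hsp
  exact ⟨c, c_pos, fun Ω u f hΩ _ hf => hc Ω u f hΩ hf.1⟩
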